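/- Let (S,𝔪) be an unramified regular local ring of mixed characteristic p ≥ 3. If the ideal Q := (p, f, g) of S has grade three (contains an S-regular sequence of length three), then R admits a birational maximal Cohen-Macaulay module: there exists a finitely generated R-submodule M of K with M ≠ 0 such that depth_S(M) = dim S, i.e. M is a maximal Cohen-Macaulay R-module. -/

import Mathlib

/-- A height one prime ideal of a commutative ring. -/
def IsHeightOnePrime {S : Type*} [CommRing S] (P : Ideal S) : Prop :=
  ∃ hP : P.IsPrime, Order.height (⟨P, hP⟩ : PrimeSpectrum S) = 1

/-- `c ∈ S` is square free if `P S_P = c S_P` for every height one prime `P` containing `c`. -/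
def PaperSquarefree {S : Type*} [CommRing S] (c : S) : Prop :=
  ∀ (P : Ideal S) (hP : P.IsPrime), Order.height (⟨P, hP⟩ : PrimeSpectrum S) = 1 → c ∈ P →
    haveI := hP
    Ideal.map (algebraMap S (Localization.AtPrime P)) P =
      Ideal.span {algebraMap S (Localization.AtPrime P) c}

/-- Two elements satisfy `𝒜₁` if no height one prime contains both of them. -/
def SatisfiesA1 {S : Type*} [CommRing S] (f g : S) : Prop :=
  ∀ P : Ideal S, IsHeightOnePrime P → ¬(f ∈ P ∧ g ∈ P)

/-- The depth of a module over a local ring: the supremum of the lengths of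
regular sequences on `M` contained in the maximal ideal. -/
noncomputable def modDepth (S : Type*) [CommRing S] [IsLocalRing S]
    (M : Type*) [AddCommGroup M] [Module S M] : ℕ∞ :=
  sSup {n : ℕ∞ | ∃ rs : List S, (rs.length : ℕ∞) = n ∧
    (∀ r ∈ rs, r ∈ IsLocalRing.maximalIdeal S) ∧ RingTheory.Sequence.IsRegular M rs}

/-- A commutative ring is Cohen-Macaulay if each of its localizations at a prime
has depth equal to its Krull dimension. -/
def IsCMRing (R : Type*) [CommRing R] : Prop :=
  ∀ (Q : Ideal R) (hQ : Q.IsPrime),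
    haveI := hQ
    (modDepth (Localization.AtPrime Q) (Localization.AtPrime Q) : WithBot ℕ∞) =
      ringKrullDim (Localization.AtPrime Q)

/-- The `n`-th symbolic power of a prime ideal `P`, i.e. `Pⁿ A_P ∩ A`. -/
noncomputable def symbPow {A : Type*} [CommRing A] (P : Ideal A) (hP : P.IsPrime) (n : ℕ) :
    Ideal A :=
  haveI := hP
  Ideal.comap (algebraMap A (Localization.AtPrime P))
    (Ideal.map (algebraMap A (Localization.AtPrime P)) (P ^ n))

/-- `ω`, as an element of the subalgebra `A = S[ω,μ]`. -/
noncomputable def omegaA {S : Type*} [CommRing S] {K : Type*} [Field K] [Algebra S K]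
    (ω μ : K) : Algebra.adjoin S ({ω, μ} : Set K) :=
  ⟨ω, Algebra.subset_adjoin (Set.mem_insert _ _)⟩

/-- `μ`, as an element of the subalgebra `A = S[ω,μ]`. -/
noncomputable def muA {S : Type*} [CommRing S] {K : Type*} [Field K] [Algebra S K]
    (ω μ : K) : Algebra.adjoin S ({ω, μ} : Set K) :=
  ⟨μ, Algebra.subset_adjoin (Set.mem_insert_of_mem _ rfl)⟩

/-- The ideal `P = (p, ω−h₁, μ−h₂)` of `A = S[ω,μ]`. -/
noncomputable def Pid {S : Type*} [CommRing S] {K : Type*} [Field K] [Algebra S K]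
    (p : ℕ) (ω μ : K) (h₁ h₂ : S) : Ideal (Algebra.adjoin S ({ω, μ} : Set K)) :=
  Ideal.span {(p : Algebra.adjoin S ({ω, μ} : Set K)),
    omegaA ω μ - algebraMap S _ h₁, muA ω μ - algebraMap S _ h₂}

/-- The colon module `(A :_K N) = {x ∈ K : x·N ⊆ A}`, as an `S`-submodule of `K`. -/
noncomputable def colonSubmodule (S : Type*) [CommRing S] (K : Type*) [Field K] [Algebra S K]
    (A : Subalgebra S K) (N : Set K) : Submodule S K where
  carrier := {x : K | ∀ z ∈ N, x * z ∈ A}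
  add_mem' := fun hx hy z hz => by
    simpa [add_mul] using add_mem (hx z hz) (hy z hz)
  zero_mem' := fun z hz => by simpa using A.zero_mem
  smul_mem' := fun c x hx z hz => by
    rw [Algebra.smul_def, mul_assoc]
    exact mul_mem (A.algebraMap_mem c) (hx z hz)

/-- `M` admits a free resolution `0 → Sⁿ → Sᵐ → M → 0`; for a finitely generated
module over a Noetherian local ring this says exactly `pd_S(M) ≤ 1`. -/
def HasFreeResLengthLE1 (S : Type*) [CommRing S] (M : Type*) [AddCommGroup M] [Module S M] :
    Prop :=
  ∃ (n m : ℕ) (φ : (Fin n → S) →ₗ[S] (Fin m → S)) (ψ : (Fin m → S) →ₗ[S] M),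
    Function.Injective φ ∧ Function.Surjective ψ ∧ LinearMap.range φ = LinearMap.ker ψ

/-- The ideal `Q` contains an `S`-regular sequence of length three, i.e. `Q` has grade
(at least) three. -/
def ContainsRegSeq3 (S : Type*) [CommRing S] (Q : Ideal S) : Prop :=
  ∃ rs : List S, rs.length = 3 ∧ (∀ r ∈ rs, r ∈ Q) ∧ RingTheory.Sequence.IsRegular S rs

/-!
Write `x = ω - h₁`, `y = μ - h₂`, and extend the `p`-adic valuation of `S` to a valuation `v` of an
algebraic closure `E` of `K`. A free `S`-lattice of rank `p ^ 2` in `K` has depth `dim S`, because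
`S` is regular, so it suffices to find one that is stable under multiplication by `R`. Square
freeness and `𝒜₁` (or unitness) of `f` and `g` show that `R` agrees with `S[x, y]` after inverting
`p`; a lattice that agrees with `S[x, y]` away from `p` is therefore stable as soon as its
localisation at `(p)` is the set of `z` with `v (φ z) ≤ β` for all `φ` in some set of embeddings
`K → E`, since `v (φ r) ≤ 1` for integral `r`. To recognise a lattice as such a set, choose a linear
form `l` in `x` and `y` for which the values of the monomials `l ^ j * y ^ k` under the chosen
embeddings, taken together, leave no room for cancellation in linear combinations over the fraction
field of `S`.

Which linear form and which embeddings work depends on whether `p` divides `a` and `b`, and on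
whether `h₂ ^ p * a ≡ i * h₁ ^ p * b` modulo `p` for some integer `i`. The grade hypothesis gives
`p ∤ h₁` and `p ∤ h₂`, and, in the last case, through normality of `S / p`, an `e` with
`b ≡ h₂ ^ p * e` and `a ≡ i * h₁ ^ p * e`. There the lattice is spanned by the `x ^ j * y ^ k`
multiplied by suitable powers of `p`, those of degree `j + k = p` being first corrected by
`p * e * (i * h₁) ^ j * h₂ ^ k`.
-/

/-! ### Regular local rings -/

section RegularLocalRing

open IsLocalRing RingTheory.Sequence
open scoped Pointwise

universe u

variable {R : Type u} [CommRing R]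

theorem isRegularLocalRing_of_card_eq_ringKrullDim [IsLocalRing R] [IsNoetherianRing R]
    {s : Finset R} (hs : Ideal.span (s : Set R) = maximalIdeal R)
    (hcard : (s.card : WithBot ℕ∞) = ringKrullDim R) : IsRegularLocalRing R := by
  refine .of_spanFinrank_maximalIdeal_le R ?_
  rw [← hcard, ← hs, ← Set.ncard_coe_finset]
  exact_mod_cast Submodule.spanFinrank_span_le_ncard_of_finite s.finite_toSet

theorem isLocalRing_quotient_span_singleton [IsLocalRing R] {x : R} (hx : x ∈ maximalIdeal R) :
    IsLocalRing (R ⧸ Ideal.span {x}) := by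
  have : Nontrivial (R ⧸ Ideal.span {x}) := Ideal.Quotient.nontrivial_iff.mpr <|
    ne_top_of_le_ne_top (maximalIdeal.isMaximal R).ne_top
      ((Ideal.span_singleton_le_iff_mem _).mpr hx)
  exact .of_surjective' (Ideal.Quotient.mk _) Ideal.Quotient.mk_surjective

theorem maximalIdeal_quotient_span_singleton [IsLocalRing R] {x : R} (hx : x ∈ maximalIdeal R)
    [IsLocalRing (R ⧸ Ideal.span {x})] :
    maximalIdeal (R ⧸ Ideal.span {x}) =
      (maximalIdeal R).map (Ideal.Quotient.mk (Ideal.span {x})) := by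
  have : ((maximalIdeal R).map (Ideal.Quotient.mk (Ideal.span {x}))).IsMaximal :=
    Ideal.IsMaximal.map_of_surjective_of_ker_le Ideal.Quotient.mk_surjective <| by
      rwa [Ideal.mk_ker, Ideal.span_singleton_le_iff_mem]
  exact (eq_maximalIdeal this).symm

theorem span_le_span_diff_singleton_sup_of_isUnit_coeff {G : Finset R} {x : R} {c : R → R}
    (hc : ∑ k ∈ G, c k * k = x) {i : R} (hi : i ∈ G) (hci : IsUnit (c i)) :
    Ideal.span (G : Set R) ≤ Ideal.span ((G : Set R) \ {i}) ⊔ Ideal.span {x} := by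
  classical
  have hrest : ∑ k ∈ G.erase i, c k * k ∈ Ideal.span ((G : Set R) \ {i}) :=
    Ideal.sum_mem _ fun k hk => Ideal.mul_mem_left _ _ <| Ideal.subset_span <| by
      simpa [and_comm] using hk
  have hi' : c i * i ∈ Ideal.span ((G : Set R) \ {i}) ⊔ Ideal.span {x} := by
    rw [eq_sub_of_add_eq (Finset.add_sum_erase G (fun k => c k * k) hi), hc]
    exact sub_mem (Ideal.mem_sup_right (Ideal.mem_span_singleton_self x))
      (Ideal.mem_sup_left hrest)
  refine Ideal.span_le.mpr fun j hj => ?_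
  by_cases hji : j = i
  · rw [hji]
    exact (Ideal.unit_mul_mem_iff_mem _ hci).mp hi'
  · exact Ideal.mem_sup_left (Ideal.subset_span ⟨hj, hji⟩)

theorem spanFinrank_maximalIdeal_quotient_succ_le [IsLocalRing R] [IsNoetherianRing R] {x : R}
    (hx : x ∈ maximalIdeal R) (hx2 : x ∉ maximalIdeal R ^ 2) [IsLocalRing (R ⧸ Ideal.span {x})] :
    (maximalIdeal (R ⧸ Ideal.span {x})).spanFinrank + 1 ≤ (maximalIdeal R).spanFinrank := by
  have hfg : (maximalIdeal R).FG := IsNoetherian.noetherian _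
  have hfin := Submodule.FG.finite_generators hfg
  have hspan : Ideal.span (hfin.toFinset : Set R) = maximalIdeal R := by
    rw [hfin.coe_toFinset]; exact Submodule.span_generators _
  obtain ⟨c, -, hc⟩ := Submodule.mem_span_finset.mp (hspan ▸ hx : x ∈ Ideal.span _)
  simp only [smul_eq_mul] at hc
  obtain ⟨i, hi, hci⟩ : ∃ i ∈ hfin.toFinset, IsUnit (c i) := by
    by_contra! hcon
    refine hx2 (hc ▸ pow_two (maximalIdeal R) ▸ Ideal.sum_mem _ fun i hi => ?_)
    exact Ideal.mul_mem_mul (hcon i hi) (hspan ▸ Ideal.subset_span hi)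
  have hgen : maximalIdeal (R ⧸ Ideal.span {x}) = Ideal.span
      (Ideal.Quotient.mk (Ideal.span {x}) '' ((maximalIdeal R).generators \ {i})) := by
    have hle := Ideal.map_mono (f := Ideal.Quotient.mk (Ideal.span {x}))
      (span_le_span_diff_singleton_sup_of_isUnit_coeff hc hi hci)
    rw [hspan, Ideal.map_sup, Ideal.map_quotient_self, sup_bot_eq, hfin.coe_toFinset] at hle
    rw [maximalIdeal_quotient_span_singleton hx, ← Ideal.map_span]
    refine le_antisymm hle (Ideal.map_mono ?_)
    exact (Ideal.span_mono Set.sdiff_subset).trans (Submodule.span_generators _).le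
  rw [hgen, ← Submodule.FG.generators_ncard hfg, ← Set.ncard_sdiff_singleton_add_one
    (hfin.mem_toFinset.mp hi) hfin]
  have hfin' : ((maximalIdeal R).generators \ {i}).Finite := hfin.sdiff
  gcongr
  exact (Submodule.spanFinrank_span_le_ncard_of_finite (hfin'.image _)).trans
    (Set.ncard_image_le hfin')

theorem isRegularLocalRing_quotient_span_singleton [IsRegularLocalRing R] {x : R}
    (hx : x ∈ maximalIdeal R) (hx2 : x ∉ maximalIdeal R ^ 2) :
    IsRegularLocalRing (R ⧸ Ideal.span {x}) := by
  have := isLocalRing_quotient_span_singleton hx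
  refine .of_spanFinrank_maximalIdeal_le _ ?_
  have hdim : ringKrullDim R ≤ ringKrullDim (R ⧸ Ideal.span {x}) + 1 := by
    have h := ringKrullDim_le_ringKrullDim_quotient_add_card (s := {x}) (by
      simpa [ringJacobson_eq_maximalIdeal] using hx)
    rwa [Finset.coe_singleton, Finset.card_singleton, Nat.cast_one] at h
  have hrank : ((maximalIdeal (R ⧸ Ideal.span {x})).spanFinrank : WithBot ℕ∞) + 1 ≤
      ringKrullDim (R ⧸ Ideal.span {x}) + 1 :=
    le_trans (by exact_mod_cast spanFinrank_maximalIdeal_quotient_succ_le hx hx2)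
      ((isRegularLocalRing_iff R).mp ‹_› ▸ hdim)
  exact ENat.WithBot.add_le_add_one_right_iff.mp hrank

theorem exists_mem_maximalIdeal_notMem_sq_of_notMem_minimalPrimes [IsLocalRing R]
    [IsNoetherianRing R] (hmin : maximalIdeal R ∉ minimalPrimes R) :
    ∃ x ∈ maximalIdeal R, x ∉ maximalIdeal R ^ 2 ∧ ∀ q ∈ minimalPrimes R, x ∉ q := by
  have hsq : ¬ maximalIdeal R ≤ maximalIdeal R ^ 2 := fun h => hmin <| by
    have hbot : maximalIdeal R = ⊥ := Submodule.eq_bot_of_le_smul_of_le_jacobson_bot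
      (maximalIdeal R) _ (IsNoetherian.noetherian _) (by rwa [smul_eq_mul, ← pow_two])
      (maximalIdeal_le_jacobson _)
    exact ⟨⟨inferInstance, bot_le⟩, fun _ _ _ => hbot ▸ bot_le⟩
  have hfin := minimalPrimes.finite_of_isNoetherianRing R
  by_contra! hcon
  obtain ⟨I, hI, hle⟩ := (Ideal.subset_union_prime (I := maximalIdeal R) (f := id)
    (s := insert (maximalIdeal R ^ 2) hfin.toFinset) (maximalIdeal R ^ 2) (maximalIdeal R ^ 2)
    fun I hI h2 _ =>
      (hfin.mem_toFinset.mp (Finset.mem_of_mem_insert_of_ne hI h2)).1.1).mp fun x hx => by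
      by_cases hx2 : x ∈ maximalIdeal R ^ 2
      · exact Set.mem_biUnion (by simp) hx2
      · obtain ⟨q, hq, hxq⟩ := hcon x hx hx2
        exact Set.mem_biUnion (by simp [hq]) hxq
  rcases Finset.mem_insert.mp hI with rfl | hI
  · exact hsq hle
  · have hq := hfin.mem_toFinset.mp hI
    exact hmin (le_antisymm hle (le_maximalIdeal hq.1.1.ne_top) ▸ hq)

theorem isDomain_of_isPrime_span_singleton [IsNoetherianRing R] {x : R}
    (hprime : (Ideal.span {x}).IsPrime) (hx : x ∈ Ring.jacobson R)
    (hmin : ∀ q ∈ minimalPrimes R, x ∉ q) : IsDomain R := by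
  obtain ⟨q, hq, hqx⟩ := Ideal.exists_minimalPrimes_le (I := (⊥ : Ideal R)) (J := .span {x}) bot_le
  have hle : q ≤ Ideal.span {x} • q := fun y hy => by
    obtain ⟨z, rfl⟩ := Ideal.mem_span_singleton.mp (hqx hy)
    exact Ideal.mul_mem_mul (Ideal.mem_span_singleton_self x)
      ((hq.1.1.mem_or_mem hy).resolve_left (hmin q hq))
  have hbot : q = ⊥ := Submodule.eq_bot_of_le_smul_of_le_jacobson_bot (Ideal.span {x}) q
    (IsNoetherian.noetherian q) hle (by
      rwa [Ideal.jacobson_bot, Ideal.span_singleton_le_iff_mem])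
  have : (⊥ : Ideal R).IsPrime := hbot ▸ hq.1.1
  exact .of_bot_isPrime R

theorem isDomain_of_isRegularLocalRing [IsRegularLocalRing R] : IsDomain R := by
  induction hn : (maximalIdeal R).spanFinrank using Nat.strong_induction_on generalizing R with
  | _ n ih =>
  subst hn
  by_cases hmin : maximalIdeal R ∈ minimalPrimes R
  · have hrank : (maximalIdeal R).spanFinrank = 0 := by
      have h := (isRegularLocalRing_iff R).mp ‹_›
      rw [← maximalIdeal_height_eq_ringKrullDim, Ideal.height_eq_zero_iff.mpr hmin] at h
      exact_mod_cast h
    exact (isField_iff_maximalIdeal_eq.mpr <| (Submodule.spanFinrank_eq_zero_iff_eq_bot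
      (IsNoetherian.noetherian _)).mp hrank).isDomain
  · obtain ⟨x, hx, hx2, hxmin⟩ := exists_mem_maximalIdeal_notMem_sq_of_notMem_minimalPrimes hmin
    have := isRegularLocalRing_quotient_span_singleton hx hx2
    have := ih _ (spanFinrank_maximalIdeal_quotient_succ_le hx hx2) rfl
    exact isDomain_of_isPrime_span_singleton ((Ideal.Quotient.isDomain_iff_prime _).mp this)
      (by rwa [ringJacobson_eq_maximalIdeal]) hxmin

theorem exists_isWeaklyRegular_length_eq_ringKrullDim [IsRegularLocalRing R] :
    ∃ rs : List R, (rs.length : WithBot ℕ∞) = ringKrullDim R ∧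
      (∀ r ∈ rs, r ∈ maximalIdeal R) ∧ IsWeaklyRegular R rs := by
  induction hn : (maximalIdeal R).spanFinrank using Nat.strong_induction_on generalizing R with
  | _ n ih =>
  subst hn
  by_cases hmin : maximalIdeal R ∈ minimalPrimes R
  · refine ⟨[], ?_, by simp, .nil _ _⟩
    rw [← maximalIdeal_height_eq_ringKrullDim, Ideal.height_eq_zero_iff.mpr hmin]
    rfl
  obtain ⟨x, hx, hx2, -⟩ := exists_mem_maximalIdeal_notMem_sq_of_notMem_minimalPrimes hmin
  have := isRegularLocalRing_quotient_span_singleton hx hx2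
  obtain ⟨rs', hlen, hmem, hreg⟩ := ih _ (spanFinrank_maximalIdeal_quotient_succ_le hx hx2) rfl
  obtain ⟨rs, rfl⟩ := (Ideal.Quotient.mk_surjective (I := Ideal.span {x})).list_map rs'
  have : IsDomain R := isDomain_of_isRegularLocalRing
  have hxreg : IsSMulRegular R x :=
    (IsRegular.of_ne_zero fun h : x = 0 => hx2 (h ▸ zero_mem _)).left.isSMulRegular
  refine ⟨x :: rs, ?_, ?_, (isWeaklyRegular_cons_iff _ _ _).mpr ⟨hxreg, ?_⟩⟩
  · rw [List.length_cons, ← ringKrullDim_quotient_span_singleton_succ_eq_ringKrullDim hxreg hx,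
      ← hlen, List.length_map]
    rfl
  · refine List.forall_mem_cons.mpr ⟨hx, fun r hr => ?_⟩
    have h := hmem _ (List.mem_map_of_mem hr)
    rwa [maximalIdeal_quotient_span_singleton hx, Ideal.mem_quotient_iff_mem] at h
    rwa [Ideal.span_singleton_le_iff_mem]
  · have hst : x • (⊤ : Ideal R) = Ideal.span {x} := by
      simp [← Submodule.ideal_span_singleton_smul]
    have e : QuotSMulTop x R ≃ₗ[R] R ⧸ Ideal.span {x} := Submodule.quotEquivOfEq _ _ hst
    rw [e.isWeaklyRegular_congr]
    exact (isWeaklyRegular_map_algebraMap_iff (R ⧸ Ideal.span {x}) _ rs).mp hreg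

theorem modDepth_le_ringKrullDim [IsLocalRing R] [IsNoetherianRing R] {M : Type*}
    [AddCommGroup M] [Module R M] [Module.Finite R M] :
    (modDepth R M : WithBot ℕ∞) ≤ ringKrullDim R := by
  rw [← maximalIdeal_height_eq_ringKrullDim]
  refine WithBot.coe_le_coe.mpr (sSup_le ?_)
  rintro _ ⟨rs, rfl, -, hreg⟩
  rw [← WithBot.coe_le_coe, maximalIdeal_height_eq_ringKrullDim]
  have : Nontrivial (M ⧸ Ideal.ofList rs • (⊤ : Submodule R M)) :=
    Submodule.Quotient.nontrivial_iff.mpr hreg.top_ne_smul.symm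
  calc ((rs.length : ℕ∞) : WithBot ℕ∞) = 0 + rs.length := (zero_add _).symm
    _ ≤ Module.supportDim R (M ⧸ Ideal.ofList rs • (⊤ : Submodule R M)) + rs.length := by
      gcongr
      exact Order.krullDim_nonneg_iff.mpr
        (Module.nonempty_support_of_nontrivial (R := R)).to_subtype
    _ = Module.supportDim R M := Module.supportDim_add_length_eq_supportDim_of_isRegular rs hreg
    _ ≤ ringKrullDim R := Module.supportDim_le_ringKrullDim R M

theorem modDepth_eq_ringKrullDim_of_flat [IsRegularLocalRing R] {M : Type*}
    [AddCommGroup M] [Module R M] [Module.Finite R M] [Module.Flat R M] [Nontrivial M] :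
    (modDepth R M : WithBot ℕ∞) = ringKrullDim R := by
  refine le_antisymm modDepth_le_ringKrullDim ?_
  obtain ⟨rs, hlen, hmem, hreg⟩ := exists_isWeaklyRegular_length_eq_ringKrullDim (R := R)
  have hM : IsRegular M rs :=
    (IsLocalRing.isRegular_iff_isWeaklyRegular_of_subset_maximalIdeal hmem).mpr <|
      ((TensorProduct.rid R M).isWeaklyRegular_congr rs).mp (hreg.isWeaklyRegular_lTensor)
  rw [← hlen]
  exact WithBot.coe_le_coe.mpr (le_sSup ⟨rs, rfl, hmem, hM⟩)

end RegularLocalRing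

/-! ### Denominators over a normal domain -/

section IntegrallyClosed

variable {R F : Type*} [CommRing R] [IsIntegrallyClosed R] [Field F] [Algebra R F]
  [IsFractionRing R F]

theorem mem_range_of_pow_mem_range {t : F} {n : ℕ} (hn : 0 < n)
    (h : t ^ n ∈ (algebraMap R F).range) : t ∈ (algebraMap R F).range := by
  obtain ⟨r, hr⟩ := h
  exact IsIntegrallyClosed.isIntegral_iff.mp
    (IsIntegral.of_pow hn (hr ▸ isIntegral_algebraMap : IsIntegral R (t ^ n)))

theorem mem_range_of_pow_mul_mem_range_of_isUnit {t : F} {n : ℕ} {u : R} (hu : IsUnit u)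
    (hn : 0 < n) (h : t ^ n * algebraMap R F u ∈ (algebraMap R F).range) :
    t ∈ (algebraMap R F).range := by
  obtain ⟨v, hv⟩ := hu.exists_right_inv
  refine mem_range_of_pow_mem_range hn ?_
  convert mul_mem h (RingHom.mem_range_self (algebraMap R F) v) using 1
  rw [mul_assoc, ← map_mul, hv, map_one, mul_one]

theorem mem_range_of_pow_mul_prime_pow_mem_range [IsDomain R] {π : R} (hπ : Prime π) {t : F}
    {n i : ℕ} (hi : i < n) (h : t ^ n * algebraMap R F π ^ i ∈ (algebraMap R F).range) :
    t ∈ (algebraMap R F).range := by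
  obtain ⟨m, hm⟩ := h
  have hpow : algebraMap R F (m * π ^ (n - i)) = (t * algebraMap R F π) ^ n := by
    rw [map_mul, hm, map_pow, mul_assoc, ← pow_add, Nat.add_sub_cancel' hi.le, mul_pow]
  obtain ⟨r, hr⟩ := mem_range_of_pow_mem_range (by omega : 0 < n) ⟨_, hpow⟩
  have hrn : r ^ n = m * π ^ (n - i) :=
    IsFractionRing.injective R F (by rw [map_pow, hr, hpow])
  obtain ⟨s, rfl⟩ : π ∣ r := hπ.dvd_of_dvd_pow
    (hrn ▸ (dvd_pow_self π (Nat.sub_ne_zero_of_lt hi)).mul_left m)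
  refine ⟨s, mul_right_cancel₀ (b := algebraMap R F π) ?_ (by rw [← hr, map_mul, mul_comm])⟩
  exact (map_ne_zero_iff _ (IsFractionRing.injective R F)).mpr hπ.ne_zero

theorem exists_notMem_algebraMap_eq_mul [IsDomain R] [IsNoetherianRing R] {q : Ideal R} (hq : q ≠ ⊥)
    {t : F} (ht : t ∉ (algebraMap R F).range)
    (hqt : ∀ y ∈ q, algebraMap R F y * t ∈ (algebraMap R F).range) :
    ∃ x ∈ q, ∃ c ∉ q, algebraMap R F c = algebraMap R F x * t := by
  by_contra! hstable
  refine ht (IsIntegrallyClosed.isIntegral_iff.mp (isIntegral_of_smul_mem_submodule (M := F)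
    (Submodule.map (Algebra.linearMap R F) q) ?_ ((IsNoetherian.noetherian q).map _) t ?_))
  · exact ((Submodule.map_injective_of_injective (IsFractionRing.injective R F)).ne_iff'
      (Submodule.map_bot _)).mpr hq
  · rintro _ ⟨x, hx, rfl⟩
    obtain ⟨c, hc⟩ := hqt x hx
    refine ⟨c, by_contra fun hcq => hstable x hx c hcq hc, ?_⟩
    rw [Algebra.linearMap_apply, hc, Algebra.linearMap_apply, smul_eq_mul, mul_comm]

theorem exists_height_eq_one_of_notMem_range [IsDomain R] [IsNoetherianRing R] {t : F}
    (ht : t ∉ (algebraMap R F).range) :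
    ∃ q : Ideal R, q.IsPrime ∧ q.height = 1 ∧
      ∀ y, algebraMap R F y * t ∈ (algebraMap R F).range → y ∈ q := by
  let N : Submodule R F := LinearMap.range (Algebra.linearMap R F)
  have hN (y : R) (z : F) : y • N.mkQ z = 0 ↔ algebraMap R F y * z ∈ (algebraMap R F).range := by
    rw [← map_smul, Submodule.mkQ_apply, Submodule.Quotient.mk_eq_zero, Algebra.smul_def]; rfl
  obtain ⟨q, hq, hle⟩ := exists_le_isAssociatedPrime_of_isNoetherianRing R (N.mkQ t)
    (by simpa using (hN 1 t).not.mpr (by simpa using ht))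
  obtain ⟨hqp, z, hz⟩ := (Submodule.isAssociatedPrime_iff).mp hq
  obtain ⟨s, rfl⟩ := N.mkQ_surjective z
  have hmem (y : R) : y ∈ q ↔ algebraMap R F y * s ∈ (algebraMap R F).range := by
    rw [hz, Submodule.mem_colon_singleton, Submodule.mem_bot, hN]
  have hqs : s ∉ (algebraMap R F).range := fun h =>
    hqp.ne_top ((Ideal.eq_top_iff_one q).mpr ((hmem 1).mpr (by simpa using h)))
  have hq0 : q ≠ ⊥ := by
    obtain ⟨⟨n, d⟩, hnd⟩ := IsLocalization.surj (nonZeroDivisors R) s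
    refine (Submodule.ne_bot_iff q).mpr ⟨d, (hmem _).mpr ⟨n, ?_⟩, nonZeroDivisors.ne_zero d.2⟩
    rw [← hnd, mul_comm]
  obtain ⟨x, hx, c, hc, hxc⟩ :=
    exists_notMem_algebraMap_eq_mul hq0 hqs fun y => (hmem y).mp
  have hmin : q ∈ (Ideal.span {x}).minimalPrimes := by
    refine ⟨⟨hqp, (Ideal.span_singleton_le_iff_mem _).mpr hx⟩, fun q' ⟨hq', hxq'⟩ hle y hy => ?_⟩
    obtain ⟨y', hy'⟩ := (hmem y).mp hy
    have hcy : c * y = x * y' := IsFractionRing.injective R F (by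
      rw [map_mul, map_mul, hxc, hy']; ring)
    refine (hq'.mem_or_mem (x := c) ?_).resolve_left fun h => hc (hle h)
    exact hcy ▸ q'.mul_mem_right _ ((Ideal.span_singleton_le_iff_mem _).mp hxq')
  refine ⟨q, hqp, le_antisymm (Ideal.height_le_one_of_isPrincipal_of_mem_minimalPrimes _ _ hmin)
    (Order.one_le_iff_ne_zero.mpr (Ideal.height_eq_zero_iff_eq_bot.not.mpr hq0)),
    fun y hy => hle ?_⟩
  rwa [Submodule.mem_colon_singleton, Submodule.mem_bot, hN]

end IntegrallyClosed

section Radical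

variable {S L : Type*} [CommRing S] [IsDomain S] {f g : S}

theorem prime_algebraMap_localization_of_paperSquarefree {q : Ideal S} [q.IsPrime]
    (hq : q.height = 1) (hf : PaperSquarefree f) (hfq : f ∈ q) :
    Prime (algebraMap S (Localization.AtPrime q) f) := by
  have hinj := IsLocalization.injective (Localization.AtPrime q) q.primeCompl_le_nonZeroDivisors
  have hmap := hf q ‹_› ((PrimeSpectrum.height_eq_orderHeight ⟨q, ‹_›⟩).symm.trans hq) hfq
  have hf0 : f ≠ 0 := by
    rintro rfl
    rw [map_zero, Ideal.span_singleton_zero, Ideal.map_eq_bot_iff_of_injective hinj] at hmap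
    exact Ideal.ne_bot_of_height_eq_one hq hmap
  refine (Ideal.span_singleton_prime ((map_ne_zero_iff _ hinj).mpr hf0)).mp ?_
  rw [← hmap, Localization.AtPrime.map_eq_maximalIdeal]
  infer_instance

variable [IsIntegrallyClosed S] [Field L] [Algebra S L] [IsFractionRing S L] {n i j : ℕ} {t : L}

theorem exists_notMem_mul_mem_range {q : Ideal S} [q.IsPrime] (hq : q.height = 1) (hi : i < n)
    (hf : f ∈ q → PaperSquarefree f) (hg : g ∉ q)
    (h : t ^ n * algebraMap S L (f ^ i * g ^ j) ∈ (algebraMap S L).range) :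
    ∃ s ∉ q, algebraMap S L s * t ∈ (algebraMap S L).range := by
  let R := Localization.AtPrime q
  have hle := q.primeCompl_le_nonZeroDivisors
  let : Algebra R L := IsLocalization.localizationAlgebraOfSubmonoidLe R L q.primeCompl _ hle
  have : IsScalarTower S R L := IsLocalization.localization_isScalarTower_of_submonoid_le ..
  have : IsFractionRing R L :=
    IsFractionRing.isFractionRing_of_isDomain_of_isLocalization q.primeCompl R L
  have : IsIntegrallyClosed R := isIntegrallyClosed_of_isLocalization R _ hle
  have cancel_pow {y : S} (hy : y ∉ q) {z : L} {k : ℕ}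
      (hz : z * algebraMap S L y ^ k ∈ (algebraMap R L).range) : z ∈ (algebraMap R L).range := by
    obtain ⟨v, hv⟩ := ((IsLocalization.map_units R (⟨y, hy⟩ : q.primeCompl)).pow k).exists_right_inv
    convert mul_mem hz (RingHom.mem_range_self (algebraMap R L) v) using 1
    rw [IsScalarTower.algebraMap_apply S R L, ← map_pow, mul_assoc, ← map_mul, hv, map_one, mul_one]
  obtain ⟨m, hm⟩ := h
  have hfi : t ^ n * algebraMap S L f ^ i ∈ (algebraMap R L).range := by
    refine cancel_pow hg (k := j) ⟨algebraMap S R m, ?_⟩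
    rw [← IsScalarTower.algebraMap_apply, hm, map_mul, map_pow, map_pow, mul_assoc]
  have ht : t ∈ (algebraMap R L).range := by
    by_cases hfq : f ∈ q
    · rw [IsScalarTower.algebraMap_apply S R L] at hfi
      exact mem_range_of_pow_mul_prime_pow_mem_range
        (prime_algebraMap_localization_of_paperSquarefree hq (hf hfq) hfq) hi hfi
    · exact mem_range_of_pow_mem_range (by omega) (cancel_pow hfq hfi)
  obtain ⟨r, rfl⟩ := ht
  obtain ⟨⟨m', s⟩, hms⟩ := IsLocalization.surj q.primeCompl r
  refine ⟨s, s.2, m', ?_⟩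
  rw [IsScalarTower.algebraMap_apply S R L, ← hms, map_mul, mul_comm,
    ← IsScalarTower.algebraMap_apply S R L]

theorem mem_range_of_pow_mul_mem_range [IsNoetherianRing S] (hf : PaperSquarefree f)
    (hg : PaperSquarefree g) (hfg : SatisfiesA1 f g) (hi : i < n) (hj : j < n)
    (h : t ^ n * algebraMap S L (f ^ i * g ^ j) ∈ (algebraMap S L).range) :
    t ∈ (algebraMap S L).range := by
  by_contra ht
  obtain ⟨q, hq, hht, hden⟩ := exists_height_eq_one_of_notMem_range ht
  have hA : ¬(f ∈ q ∧ g ∈ q) :=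
    hfg q ⟨hq, (PrimeSpectrum.height_eq_orderHeight ⟨q, hq⟩).symm.trans hht⟩
  obtain ⟨s, hsq, hs⟩ : ∃ s ∉ q, algebraMap S L s * t ∈ (algebraMap S L).range := by
    by_cases hgq : g ∈ q
    · exact exists_notMem_mul_mem_range hht hj (fun _ => hg) (fun hfq => hA ⟨hfq, hgq⟩)
        (by rwa [mul_comm (g ^ j)])
    · exact exists_notMem_mul_mem_range hht hi (fun _ => hf) hgq h
  exact hsq (hden s hs)

end Radical

section Grade

open RingTheory.Sequence

variable {S : Type*} [CommRing S] [IsNoetherianRing S]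

theorem three_le_height_of_containsRegSeq3 {Q q : Ideal S} [q.IsPrime] (hQ : ContainsRegSeq3 S Q)
    (hle : Q ≤ q) : 3 ≤ q.height := by
  obtain ⟨rs, hlen, hmem, hreg⟩ := hQ
  have hloc := IsWeaklyRegular.isRegular_of_isLocalization_of_mem (Localization.AtPrime q) q
    hreg.toIsWeaklyRegular fun r hr => hle (hmem r hr)
  have hdim := ringKrullDim_add_length_eq_ringKrullDim_of_isRegular _ hloc
  rw [IsLocalization.AtPrime.ringKrullDim_eq_height q (Localization.AtPrime q),
    List.length_map, hlen] at hdim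
  have : Nontrivial (Localization.AtPrime q ⧸
      Ideal.ofList (rs.map (algebraMap S (Localization.AtPrime q)))) :=
    Ideal.Quotient.nontrivial_iff.mpr fun h => hloc.top_ne_smul (by simp [h])
  refine WithBot.coe_le_coe.mp ?_
  calc ((3 : ℕ∞) : WithBot ℕ∞) = 0 + ((3 : ℕ) : WithBot ℕ∞) := (zero_add _).symm
    _ ≤ _ := by gcongr; exact ringKrullDim_nonneg_of_nontrivial
    _ = _ := hdim

variable {π f g h₁ h₂ a b : S} {n : ℕ}

theorem not_dvd_of_containsRegSeq3 [IsLocalRing S] (hn : n ≠ 0) (hπ : ¬IsUnit π)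
    (hf : f = h₁ ^ n + a * π) (hfg : IsUnit g → IsUnit f)
    (hgrade : ContainsRegSeq3 S (Ideal.span {π, f, g})) : ¬π ∣ h₁ := by
  intro hdvd
  have hπf : π ∣ f := hf ▸ dvd_add (dvd_pow hdvd hn) (dvd_mul_left _ _)
  have hg : ¬IsUnit g := fun h => hπ (isUnit_of_dvd_unit hπf (hfg h))
  have hle : Ideal.span {π, g} ≤ IsLocalRing.maximalIdeal S := by
    rw [Ideal.span_le]
    rintro x (rfl | rfl)
    exacts [hπ, hg]
  obtain ⟨q, hq, -⟩ := Ideal.exists_minimalPrimes_le hle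
  have := hq.1.1
  have hsub : ({π, g} : Set S) ⊆ q := Ideal.span_le.mp hq.1.2
  have h3 : 3 ≤ q.height := three_le_height_of_containsRegSeq3 hgrade <| Ideal.span_le.mpr <| by
    rintro x (rfl | rfl | rfl)
    exacts [hsub (by simp), q.mem_of_dvd hπf (hsub (by simp)), hsub (by simp)]
  have h2 := Ideal.height_le_card_of_mem_minimalPrimes_span (Set.toFinite {π, g}) hq
  have hcard : ((({π, g} : Set S).ncard : ℕ) : ℕ∞) ≤ 2 := by
    exact_mod_cast (Set.ncard_insert_le π {g}).trans (by simp)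
  exact absurd ((h3.trans h2).trans hcard) (by decide)

theorem height_ne_one_of_containsRegSeq3 (hf : f = h₁ ^ n + a * π) (hg : g = h₂ ^ n + b * π)
    (hgrade : ContainsRegSeq3 S (Ideal.span {π, f, g})) {q : Ideal (S ⧸ Ideal.span {π})}
    [q.IsPrime] (h₁q : Ideal.Quotient.mk _ h₁ ^ n ∈ q) (h₂q : Ideal.Quotient.mk _ h₂ ^ n ∈ q) :
    q.height ≠ 1 := by
  intro hq
  let φ := Ideal.Quotient.mk (Ideal.span {π})
  have hφπ : φ π = 0 := Ideal.Quotient.eq_zero_iff_mem.mpr (Ideal.mem_span_singleton_self π)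
  have hπq : π ∈ q.comap φ := by rw [Ideal.mem_comap, hφπ]; exact q.zero_mem
  have h3 : 3 ≤ (q.comap φ).height :=
    three_le_height_of_containsRegSeq3 hgrade <| Ideal.span_le.mpr <| by
      rintro x (rfl | rfl | rfl)
      · exact hπq
      · simpa [φ, hf, show Ideal.Quotient.mk (Ideal.span {π}) π = 0 from hφπ] using h₁q
      · simpa [φ, hg, show Ideal.Quotient.mk (Ideal.span {π}) π = 0 from hφπ] using h₂q
  have h2 := Ideal.height_le_height_add_one_of_mem hπq
  rw [Ideal.map_comap_of_surjective _ Ideal.Quotient.mk_surjective, hq] at h2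
  exact absurd (h3.trans h2) (by decide)

theorem exists_dvd_sub_pow_mul [IsDomain S] (hπ : Prime π)
    [IsIntegrallyClosed (S ⧸ Ideal.span {π})] (hf : f = h₁ ^ n + a * π) (hg : g = h₂ ^ n + b * π)
    (hgrade : ContainsRegSeq3 S (Ideal.span {π, f, g})) (hh₂ : ¬π ∣ h₂) {u : S} (hu : IsUnit u)
    (hcong : π ∣ h₂ ^ n * a - u * h₁ ^ n * b) :
    ∃ e : S, π ∣ b - h₂ ^ n * e ∧ π ∣ a - u * h₁ ^ n * e := by
  have : (Ideal.span {π}).IsPrime := (Ideal.span_singleton_prime hπ.ne_zero).mpr hπ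
  let φ := Ideal.Quotient.mk (Ideal.span {π})
  let F := FractionRing (S ⧸ Ideal.span {π})
  have hinj : Function.Injective (algebraMap (S ⧸ Ideal.span {π}) F) :=
    IsFractionRing.injective _ _
  have hφ (x : S) : φ x = 0 ↔ π ∣ x := by
    rw [Ideal.Quotient.eq_zero_iff_mem, Ideal.mem_span_singleton]
  have hφ₂ : φ h₂ ^ n ≠ 0 := pow_ne_zero n ((hφ h₂).not.mpr hh₂)
  have hφcong : φ h₂ ^ n * φ a = φ u * φ h₁ ^ n * φ b := by
    simpa [sub_eq_zero] using (hφ _).mpr hcong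
  let t : F := algebraMap _ F (φ b) / algebraMap _ F (φ h₂ ^ n)
  have hden : algebraMap _ F (φ h₂ ^ n) ≠ 0 := (map_ne_zero_iff _ hinj).mpr hφ₂
  have hb : algebraMap _ F (φ b) = algebraMap _ F (φ h₂ ^ n) * t := (mul_div_cancel₀ _ hden).symm
  have ha : algebraMap _ F (φ a) = algebraMap _ F (φ u * φ h₁ ^ n) * t := by
    refine mul_left_cancel₀ hden ?_
    rw [← map_mul, hφcong, map_mul, hb]; ring
  have ht : t ∈ (algebraMap (S ⧸ Ideal.span {π}) F).range := by
    by_contra ht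
    obtain ⟨q, hq, hht, hmem⟩ := exists_height_eq_one_of_notMem_range ht
    refine height_ne_one_of_containsRegSeq3 hf hg hgrade ?_ (hmem _ ⟨φ b, hb⟩) hht
    exact (Ideal.unit_mul_mem_iff_mem _ (hu.map φ)).mp (hmem _ ⟨φ a, ha⟩)
  obtain ⟨z, hz⟩ := ht
  obtain ⟨e, rfl⟩ := Ideal.Quotient.mk_surjective z
  refine ⟨e, (hφ _).mp ?_, (hφ _).mp ?_⟩
  · rw [map_sub, sub_eq_zero, map_mul, map_pow]
    exact hinj (by rw [hb, ← hz, map_mul])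
  · rw [map_sub, sub_eq_zero, map_mul, map_mul, map_pow]
    exact hinj (by rw [ha, ← hz, ← map_mul])

end Grade

theorem isUnit_natCast_of_coprime {S : Type*} [CommRing S] [IsLocalRing S] {m k : ℕ}
    (hm : ¬IsUnit (m : S)) (hmk : k.Coprime m) : IsUnit (k : S) := by
  obtain ⟨u, v, huv⟩ : IsCoprime (k : S) (m : S) := by
    simpa using (Nat.isCoprime_iff_coprime.mpr hmk).map (Int.castRingHom S)
  rcases IsLocalRing.isUnit_or_isUnit_of_add_one huv with h | h
  · exact isUnit_of_mul_isUnit_right h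
  · exact absurd (isUnit_of_mul_isUnit_right h) hm

/-! ### Extensions generated by two radicals -/

/-- The span of the `n ^ 2` vectors `F j k` with `j, k < n`. Families of this shape, indexed by all
pairs of natural numbers for convenience, provide the bases of all the lattices below. -/
def gridSpan (R : Type*) {M : Type*} [Semiring R] [AddCommMonoid M] [Module R M] (n : ℕ)
    (F : ℕ → ℕ → M) : Submodule R M :=
  Submodule.span R (Set.range fun i : Fin n × Fin n => F i.1 i.2)

section GridSpan

open Finset

variable {R M : Type*} {n : ℕ}

theorem mem_gridSpan [Semiring R] [AddCommMonoid M] [Module R M] {F : ℕ → ℕ → M} {j k : ℕ}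
    (hj : j < n) (hk : k < n) : F j k ∈ gridSpan R n F :=
  Submodule.subset_span ⟨(⟨j, hj⟩, ⟨k, hk⟩), rfl⟩

theorem gridSpan_le [Semiring R] [AddCommMonoid M] [Module R M] {F : ℕ → ℕ → M}
    {N : Submodule R M} : gridSpan R n F ≤ N ↔ ∀ j < n, ∀ k < n, F j k ∈ N := by
  refine ⟨fun h j hj k hk => h (mem_gridSpan hj hk), fun h => Submodule.span_le.mpr ?_⟩
  rintro _ ⟨⟨j, k⟩, rfl⟩
  exact h j j.2 k k.2

theorem mem_gridSpan_iff_exists_sum [Semiring R] [AddCommMonoid M] [Module R M] {F : ℕ → ℕ → M}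
    {z : M} :
    z ∈ gridSpan R n F ↔ ∃ c : ℕ → ℕ → R, z = ∑ j ∈ range n, ∑ k ∈ range n, c j k • F j k := by
  refine ⟨fun hz => ?_, ?_⟩
  · obtain ⟨c, rfl⟩ := (Submodule.mem_span_range_iff_exists_fun R).mp hz
    refine ⟨fun j k => if h : j < n ∧ k < n then c (⟨j, h.1⟩, ⟨k, h.2⟩) else 0, ?_⟩
    simp [Fintype.sum_prod_type, Finset.sum_range]
  · rintro ⟨c, rfl⟩
    exact sum_mem fun j hj => sum_mem fun k hk =>
      Submodule.smul_mem _ _ (mem_gridSpan (mem_range.mp hj) (mem_range.mp hk))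

open Polynomial in
theorem adjoin_singleton_eq_span_range_pow [CommRing R] [Semiring M] [Algebra R M] {x : M}
    {P : R[X]} (hP : P.Monic) (hx : aeval x P = 0) :
    Subalgebra.toSubmodule (Algebra.adjoin R {x}) =
      Submodule.span R (Set.range fun i : Fin P.natDegree => x ^ (i : ℕ)) := by
  classical
  rw [← Submodule.span_range_natDegree_eq_adjoin hP hx]
  congr 1
  ext z
  simp [Fin.exists_iff]

open Polynomial in
theorem adjoin_pair_eq_gridSpan [CommRing R] [CommRing M] [Algebra R M] {x y : M} {P Q : R[X]}
    (hP : P.Monic) (hQ : Q.Monic) (hPn : P.natDegree = n) (hQn : Q.natDegree = n)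
    (hx : aeval x P = 0) (hy : aeval y Q = 0) :
    Subalgebra.toSubmodule (Algebra.adjoin R {x, y}) = gridSpan R n fun j k => x ^ j * y ^ k := by
  subst hPn
  rw [Set.insert_eq, Algebra.adjoin_union_coe_submodule, adjoin_singleton_eq_span_range_pow hP hx,
    adjoin_singleton_eq_span_range_pow hQ hy, Submodule.span_mul_span, hQn, gridSpan]
  congr 1
  ext z
  simp [Set.mem_mul, Prod.exists]

end GridSpan

section Biradical

open Polynomial IntermediateField Module

variable {L K : Type*} [Field L] [Field K] [Algebra L K] {p : ℕ} {ξ η ω μ : K}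

theorem intermediateField_adjoin_simple_eq_top (h : Algebra.adjoin L {ξ, η} = ⊤) :
    L⟮η⟯⟮ξ⟯ = ⊤ := by
  rw [← restrictScalars_eq_top_iff (K := L), adjoin_simple_adjoin_simple, eq_top_iff]
  intro z _
  have hz : z ∈ Algebra.adjoin L {ξ, η} := h ▸ Algebra.mem_top
  rw [Set.pair_comm] at hz
  exact algebra_adjoin_le_adjoin L _ hz

theorem finrank_adjoin_simple_eq [FiniteDimensional L K] (hp : 0 < p) (hdeg : finrank L K = p ^ 2)
    (h : Algebra.adjoin L {ω, η} = ⊤) (hω : (minpoly L ω).natDegree ≤ p)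
    (hη : (minpoly L η).natDegree ≤ p) : finrank L L⟮η⟯ = p ∧ finrank L⟮η⟯ K = p := by
  have hmul := finrank_mul_finrank L L⟮η⟯ K
  have hle₁ : finrank L L⟮η⟯ ≤ p := by
    rwa [adjoin.finrank (IsIntegral.of_finite L η)]
  have hle₂ : finrank L⟮η⟯ K ≤ p := by
    rw [← finrank_top' (F := L⟮η⟯), ← intermediateField_adjoin_simple_eq_top h,
      adjoin.finrank (IsIntegral.of_finite L⟮η⟯ ω)]
    refine (natDegree_le_of_dvd (minpoly.dvd_map_of_isScalarTower L L⟮η⟯ ω) ?_).trans ?_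
    · exact (minpoly.monic (IsIntegral.of_finite L ω)).map _ |>.ne_zero
    · rwa [natDegree_map]
  rw [hdeg, sq] at hmul
  constructor <;> nlinarith

theorem linearIndependent_pow_mul_pow [FiniteDimensional L K] (hp : 0 < p)
    (hdeg : finrank L K = p ^ 2) (hω : (minpoly L ω).natDegree ≤ p)
    (hη : (minpoly L η).natDegree ≤ p) (h : Algebra.adjoin L {ω, η} = ⊤)
    (hξ : Algebra.adjoin L {ξ, η} = ⊤) :
    LinearIndependent L fun i : Fin p × Fin p => ξ ^ (i.1 : ℕ) * η ^ (i.2 : ℕ) := by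
  obtain ⟨h₁, h₂⟩ := finrank_adjoin_simple_eq hp hdeg h hω hη
  have hdegη : (minpoly L (AdjoinSimple.gen L η)).natDegree = p := by
    rw [minpoly_gen, ← adjoin.finrank (IsIntegral.of_finite L η), h₁]
  have hdegξ : (minpoly L⟮η⟯ ξ).natDegree = p := by
    rw [← adjoin.finrank (IsIntegral.of_finite L⟮η⟯ ξ), intermediateField_adjoin_simple_eq_top hξ,
      finrank_top', h₂]
  have hindη := linearIndependent_pow (K := L) (AdjoinSimple.gen L η)
  have hindξ := linearIndependent_pow (K := L⟮η⟯) ξ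
  rw [hdegη] at hindη
  rw [hdegξ] at hindξ
  convert (linearIndependent_smul hindη hindξ).comp Prod.swap Prod.swap_injective using 2 with i
  simp [Algebra.smul_def, mul_comm]

theorem gridSpan_pow_mul_pow_eq_top [FiniteDimensional L K] (hp : 0 < p)
    (hdeg : finrank L K = p ^ 2) (hω : (minpoly L ω).natDegree ≤ p)
    (hη : (minpoly L η).natDegree ≤ p) (h : Algebra.adjoin L {ω, η} = ⊤)
    (hξ : Algebra.adjoin L {ξ, η} = ⊤) : gridSpan L p (fun j k => ξ ^ j * η ^ k) = ⊤ :=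
  (linearIndependent_pow_mul_pow hp hdeg hω hη h hξ).span_eq_top_of_card_eq_finrank'
    (by simp [hdeg, sq])

theorem exists_algHom_of_pow_eq [CharZero L] [FiniteDimensional L K] {E : Type*} [Field E]
    [IsAlgClosed E] [Algebra L E] {α β : L} (hp : 0 < p) (hω : ω ^ p = algebraMap L K α)
    (hμ : μ ^ p = algebraMap L K β) (hgen : Algebra.adjoin L {ω, μ} = ⊤)
    (hdeg : finrank L K = p ^ 2) {u v : E} (hu : u ^ p = algebraMap L E α)
    (hv : v ^ p = algebraMap L E β) : ∃ φ : K →ₐ[L] E, φ ω = u ∧ φ μ = v := by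
  classical
  let T := (nthRoots p (algebraMap L E α)).toFinset ×ˢ (nthRoots p (algebraMap L E β)).toFinset
  have hmem {u v : E} : (u, v) ∈ T ↔ u ^ p = algebraMap L E α ∧ v ^ p = algebraMap L E β := by
    simp [T, mem_nthRoots hp]
  have hcard (a : E) : (nthRoots p a).toFinset.card ≤ p :=
    (Multiset.toFinset_card_le _).trans (card_nthRoots p a)
  have hle : T.card ≤ (Finset.univ : Finset (K →ₐ[L] E)).card := by
    rw [Finset.card_univ, AlgHom.card, hdeg, Finset.card_product, sq]
    exact Nat.mul_le_mul (hcard _) (hcard _)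
  have hinj : Set.InjOn (fun φ : K →ₐ[L] E => (φ ω, φ μ)) (Finset.univ : Finset (K →ₐ[L] E)) := by
    intro φ _ ψ _ h
    refine AlgHom.ext_of_adjoin_eq_top hgen ?_
    rintro x (rfl | rfl)
    exacts [congrArg Prod.fst h, congrArg Prod.snd h]
  obtain ⟨φ, -, hφ⟩ := Finset.surjOn_of_injOn_of_card_le _
    (fun φ _ => hmem.mpr ⟨by rw [← map_pow, hω, φ.commutes], by rw [← map_pow, hμ, φ.commutes]⟩)
    hinj hle (hmem.mpr ⟨hu, hv⟩)
  exact ⟨φ, congrArg Prod.fst hφ, congrArg Prod.snd hφ⟩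

end Biradical

section Averaging

open Finset

variable {E : Type*} [CommRing E] [IsDomain E] {ζ : E} {n i : ℕ}

theorem sum_pow_mul_eq_of_isPrimitiveRoot (hζ : IsPrimitiveRoot ζ n) (m : ℕ) :
    ∑ s ∈ range n, ζ ^ (s * m) = if n ∣ m then (n : E) else 0 := by
  simp only [mul_comm _ m, pow_mul]
  split_ifs with hm
  · simp [(hζ.pow_eq_one_iff_dvd m).mpr hm]
  · refine (mul_eq_zero.mp ?_).resolve_left (sub_ne_zero.mpr ((hζ.pow_eq_one_iff_dvd m).not.mpr hm))
    rw [mul_geom_sum, ← pow_mul, mul_comm, pow_mul, hζ.pow_eq_one, one_pow, sub_self]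

theorem sum_pow_mul_sum_pow_mul_eq (hζ : IsPrimitiveRoot ζ n) (hi : i < n) (C : ℕ → E) :
    ∑ s ∈ range n, ζ ^ (s * (n - i)) * ∑ a ∈ range n, ζ ^ (s * a) * C a = n * C i := by
  have hdvd (a : ℕ) (ha : a ∈ range n) : n ∣ n - i + a ↔ a = i := by
    have ha := mem_range.mp ha
    refine ⟨fun h => ?_, fun h => ⟨1, by omega⟩⟩
    have := Nat.eq_of_dvd_of_lt_two_mul (by omega) h (by omega)
    omega
  calc _ = ∑ a ∈ range n, (∑ s ∈ range n, ζ ^ (s * (n - i + a))) * C a := by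
        simp_rw [mul_sum, sum_mul]
        rw [sum_comm]
        simp only [mul_add, pow_add, mul_assoc]
    _ = ∑ a ∈ range n, if a = i then n * C a else 0 := sum_congr rfl fun a ha => by
        rw [sum_pow_mul_eq_of_isPrimitiveRoot hζ]; simp only [hdvd a ha, ite_mul, zero_mul]
    _ = n * C i := by simp [hi]

theorem sum_pow_mul_grid_eq (hζ : IsPrimitiveRoot ζ n) {j : ℕ} (hi : i < n) (hj : j < n)
    (C : ℕ → ℕ → E) :
    ∑ s ∈ range n, ∑ t ∈ range n, ζ ^ (s * (n - i)) * ζ ^ (t * (n - j)) *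
      ∑ a ∈ range n, ∑ b ∈ range n, ζ ^ (s * a) * (ζ ^ (t * b) * C a b) = n ^ 2 * C i j := by
  have hinner (s : ℕ) : ∑ t ∈ range n, ζ ^ (s * (n - i)) * ζ ^ (t * (n - j)) *
        ∑ a ∈ range n, ∑ b ∈ range n, ζ ^ (s * a) * (ζ ^ (t * b) * C a b) =
      ζ ^ (s * (n - i)) * ∑ a ∈ range n, ζ ^ (s * a) * (n * C a j) := by
    simp_rw [← sum_pow_mul_sum_pow_mul_eq hζ hj, mul_sum]
    rw [sum_comm]
    refine sum_congr rfl fun a _ => sum_congr rfl fun t _ => sum_congr rfl fun b _ => ?_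
    ring
  simp_rw [hinner, sum_pow_mul_sum_pow_mul_eq hζ hi]
  ring

end Averaging

section IntegralClosure

open Finset Module

variable {S L K : Type*} [CommRing S] [Field L] [CharZero L] [Algebra S L] [Field K] [Algebra L K]
  [Algebra S K] [IsScalarTower S L K] [FiniteDimensional L K] {p : ℕ} {ω μ : K}

theorem isIntegral_sq_mul_smul_of_isIntegral_sum {α β : L} (hp : 0 < p)
    (hω : ω ^ p = algebraMap L K α) (hμ : μ ^ p = algebraMap L K β)
    (hgen : Algebra.adjoin L {ω, μ} = ⊤) (hdeg : finrank L K = p ^ 2) {c : ℕ → ℕ → L}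
    (hc : IsIntegral S (∑ j ∈ range p, ∑ k ∈ range p, c j k • (ω ^ j * μ ^ k)))
    {j k : ℕ} (hj : j < p) (hk : k < p) :
    IsIntegral S ((p : K) ^ 2 * c j k • (ω ^ j * μ ^ k)) := by
  let E := AlgebraicClosure K
  have : CharZero E := charZero_of_injective_algebraMap (algebraMap L E).injective
  have : NeZero (p : E) := ⟨Nat.cast_ne_zero.mpr hp.ne'⟩
  obtain ⟨ζ, hζ⟩ := HasEnoughRootsOfUnity.exists_primitiveRoot E p
  have hζpow (s : ℕ) : (ζ ^ s) ^ p = 1 := by rw [pow_right_comm, hζ.pow_eq_one, one_pow]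
  have hζint (s : ℕ) : IsIntegral S (ζ ^ s) := .of_pow hp (hζpow s ▸ isIntegral_one)
  have hroot {x : K} {γ : L} (hx : x ^ p = algebraMap L K γ) (s : ℕ) :
      (ζ ^ s * algebraMap K E x) ^ p = algebraMap L E γ := by
    rw [mul_pow, hζpow, one_mul, ← map_pow, hx, ← IsScalarTower.algebraMap_apply]
  choose φ hφω hφμ using fun s t =>
    exists_algHom_of_pow_eq hp hω hμ hgen hdeg (hroot hω s) (hroot hμ t)
  have hsum := sum_pow_mul_grid_eq hζ hj hk
    fun a b => algebraMap K E (c a b • (ω ^ a * μ ^ b))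
  have hconj (s t : ℕ) : φ s t (∑ a ∈ range p, ∑ b ∈ range p, c a b • (ω ^ a * μ ^ b)) =
      ∑ a ∈ range p, ∑ b ∈ range p,
        ζ ^ (s * a) * (ζ ^ (t * b) * algebraMap K E (c a b • (ω ^ a * μ ^ b))) := by
    simp only [map_sum, map_mul, map_pow, hφω, hφμ, Algebra.smul_def, AlgHom.commutes,
      ← IsScalarTower.algebraMap_apply L K E]
    refine sum_congr rfl fun a _ => sum_congr rfl fun b _ => ?_
    ring
  refine (isIntegral_algebraMap_iff (algebraMap K E).injective).mp ?_
  rw [map_mul, map_pow, map_natCast, ← hsum]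
  refine IsIntegral.sum _ fun s _ => IsIntegral.sum _ fun t _ => ?_
  rw [← hconj]
  exact ((hζint _).mul (hζint _)).mul (hc.map ((φ s t).restrictScalars S))

theorem sq_mul_mem_gridSpan_of_isIntegral [IsDomain S] [IsIntegrallyClosed S] [IsFractionRing S L]
    {f g : S} (hp : 0 < p) (hω : ω ^ p = algebraMap S K f) (hμ : μ ^ p = algebraMap S K g)
    (hgen : Algebra.adjoin L {ω, μ} = ⊤) (hdeg : finrank L K = p ^ 2)
    (hbasis : gridSpan L p (fun j k => ω ^ j * μ ^ k) = ⊤)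
    (hden : ∀ j < p, ∀ k < p, ∀ t : L,
      t ^ p * algebraMap S L (f ^ j * g ^ k) ∈ (algebraMap S L).range → t ∈ (algebraMap S L).range)
    {z : K} (hz : IsIntegral S z) :
    (p : K) ^ 2 * z ∈ gridSpan S p fun j k => ω ^ j * μ ^ k := by
  obtain ⟨c, rfl⟩ := mem_gridSpan_iff_exists_sum.mp (hbasis ▸ Submodule.mem_top : z ∈ _)
  rw [IsScalarTower.algebraMap_apply S L K] at hω hμ
  simp_rw [mul_sum]
  refine sum_mem fun j hj => sum_mem fun k hk => ?_
  rw [mem_range] at hj hk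
  have hint := (isIntegral_sq_mul_smul_of_isIntegral_sum hp hω hμ hgen hdeg hz hj hk).pow p
  have hpow : ((p : K) ^ 2 * c j k • (ω ^ j * μ ^ k)) ^ p =
      algebraMap L K (((p : L) ^ 2 * c j k) ^ p * algebraMap S L (f ^ j * g ^ k)) := by
    simp only [Algebra.smul_def, mul_pow, ← pow_mul, mul_comm _ p, map_mul, map_pow, map_natCast]
    simp only [pow_mul, hω, hμ]
    ring
  rw [hpow, isIntegral_algebraMap_iff (algebraMap L K).injective,
    IsIntegrallyClosed.isIntegral_iff] at hint
  obtain ⟨s, hs⟩ := hden j hj k hk _ hint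
  have hsmul : (p : K) ^ 2 * c j k • (ω ^ j * μ ^ k) = s • (ω ^ j * μ ^ k) := by
    rw [Algebra.smul_def, Algebra.smul_def, IsScalarTower.algebraMap_apply S L K, hs, map_mul,
      map_pow, map_natCast, mul_assoc]
  exact hsmul ▸ Submodule.smul_mem _ _ (mem_gridSpan hj hk)

end IntegralClosure

/-! ### Orthogonality and valuations -/

section Orthogonality

open Finset Module

variable {L E Γ ι κ : Type*} [Field L] [Field E] [Algebra L E] [LinearOrderedCommGroupWithZero Γ]
  {v : Valuation E Γ}

theorem map_smul_le_map_smul_of_map_le {c : L} {x y : E} (h : v x ≤ v y) :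
    v (c • x) ≤ v (c • y) := by
  simpa only [Algebra.smul_def, map_mul] using mul_le_mul_right h _

theorem map_smul_lt_map_smul_of_map_lt {c : L} {x y : E} (hc : c ≠ 0) (h : v x < v y) :
    v (c • x) < v (c • y) := by
  have hc' : 0 < v (algebraMap L E c) := by simpa [zero_lt_iff] using hc
  simpa only [Algebra.smul_def, map_mul] using mul_lt_mul_of_pos_left h hc'

theorem map_le_map_sum_of_forall_ne [Fintype ι] {T : ι → E}
    (hT : ∀ i j, i ≠ j → v (T i) = v (T j) → v (T i) = 0) (i : ι) : v (T i) ≤ v (∑ j, T j) := by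
  classical
  have : Nonempty ι := ⟨i⟩
  obtain ⟨m, hm⟩ := Finite.exists_max fun j => v (T j)
  by_cases h0 : v (T m) = 0
  · exact ((hm i).trans h0.le).trans zero_le
  refine (hm i).trans (v.map_sum_eq_of_lt (mem_univ m) fun j hj => ?_).ge
  refine (hm j).lt_of_ne fun heq => h0 (hT m j ?_ heq.symm)
  rintro rfl
  simp at hj

/-- A finite family `e` in a valued field `(E, v)` is orthogonal over a subfield `L` if no
cancellation takes place in its `L`-linear combinations: the value of a combination is the maximum
of the values of its terms. -/
def IsValuationOrthogonal (L : Type*) [Field L] [Algebra L E] [Fintype ι] (v : Valuation E Γ)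
    (e : ι → E) : Prop :=
  ∀ (c : ι → L) (i : ι), v (c i • e i) ≤ v (∑ j, c j • e j)

namespace IsValuationOrthogonal

theorem exists_map_sum_eq [Fintype ι] [Nonempty ι] {e : ι → E} (h : IsValuationOrthogonal L v e)
    (c : ι → L) : ∃ i, v (∑ j, c j • e j) = v (c i • e i) := by
  obtain ⟨m, hm⟩ := Finite.exists_max fun j => v (c j • e j)
  exact ⟨m, (v.map_sum_le fun j _ => hm j).antisymm (h c m)⟩

theorem congr_of_map_sub_lt [Fintype ι] {e e' : ι → E} (h : IsValuationOrthogonal L v e)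
    (h' : ∀ i, v (e' i - e i) < v (e i)) : IsValuationOrthogonal L v e' := by
  intro c i
  have : Nonempty ι := ⟨i⟩
  obtain ⟨m, hm⟩ := h.exists_map_sum_eq c
  have hle (j : ι) : v (c j • e' j) ≤ v (c m • e m) :=
    (map_smul_le_map_smul_of_map_le (v.map_eq_of_sub_lt (h' j)).le).trans ((h c j).trans hm.le)
  by_cases h0 : v (c m • e m) = 0
  · exact ((hle i).trans h0.le).trans zero_le
  have hsub : v (∑ j, c j • e' j - ∑ j, c j • e j) < v (∑ j, c j • e j) := by
    rw [hm, ← sum_sub_distrib]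
    refine v.map_sum_lt h0 fun j _ => ?_
    rw [← smul_sub]
    by_cases hj : c j = 0
    · rwa [hj, zero_smul, map_zero, zero_lt_iff]
    · exact (map_smul_lt_map_smul_of_map_lt hj (h' j)).trans_le ((h c j).trans hm.le)
  exact (hle i).trans (by rw [v.map_eq_of_sub_lt hsub, hm])

theorem smul_mul [Fintype ι] {e : ι → E} (h : IsValuationOrthogonal L v e) (d : ι → L) (y : E) :
    IsValuationOrthogonal L v fun i => d i • (y * e i) := by
  intro c i
  have hterm (j : ι) : c j • d j • (y * e j) = y * (c j * d j) • e j := by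
    rw [smul_smul, mul_smul_comm]
  simp only [hterm, ← mul_sum, map_mul]
  exact mul_le_mul_right (h (fun j => c j * d j) i) _

theorem of_slices [Fintype ι] [Fintype κ] {e : ι × κ → E}
    (h : ∀ i, IsValuationOrthogonal L v fun k => e (i, k))
    (hne : ∀ (c c' : L) (x y : ι × κ), x.1 ≠ y.1 → v (c • e x) = v (c' • e y) → v (c • e x) = 0) :
    IsValuationOrthogonal L v e := by
  rintro c ⟨i, k⟩
  have : Nonempty κ := ⟨k⟩
  rw [Fintype.sum_prod_type]
  refine (h i (fun k => c (i, k)) k).trans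
    (map_le_map_sum_of_forall_ne (T := fun i => ∑ k, c (i, k) • e (i, k)) (fun i j hij => ?_) i)
  obtain ⟨k, hk⟩ := (h i).exists_map_sum_eq fun k => c (i, k)
  obtain ⟨l, hl⟩ := (h j).exists_map_sum_eq fun k => c (j, k)
  rw [hk, hl]
  exact hne _ _ _ _ hij

theorem comp_equiv [Fintype ι] [Fintype κ] {e : ι → E} (h : IsValuationOrthogonal L v e)
    (σ : κ ≃ ι) : IsValuationOrthogonal L v (e ∘ σ) := by
  intro c i
  have := h (c ∘ σ.symm) (σ i)
  rw [← σ.sum_comp] at this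
  simpa using this

end IsValuationOrthogonal

open IsLocalRing in
theorem residue_valuationSubring_eq_zero_iff {x : v.valuationSubring} :
    residue v.valuationSubring x = 0 ↔ v x < 1 := by
  rw [residue_eq_zero_iff, v.mem_maximalIdeal_iff]

open IsLocalRing Polynomial in
theorem map_lt_one_of_map_sum_pow_lt_one {n : ℕ} {t : E} {α : L} (hn : n.Prime) (ht : v t ≤ 1)
    (hα : v (t ^ n - algebraMap L E α) < 1)
    (hroot : ∀ u : L, ¬v (algebraMap L E (u ^ n - α)) < 1) {c : Fin n → L}
    (hc : ∀ i, v (algebraMap L E (c i)) ≤ 1) (h : v (∑ i, c i • t ^ (i : ℕ)) < 1) (i : Fin n) :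
    v (algebraMap L E (c i)) < 1 := by
  let w := v.comap (algebraMap L E)
  have : w.HasExtension v := ⟨Valuation.IsEquiv.refl⟩
  have hα₁ : w α ≤ 1 := by
    have := v.map_sub_le (v.map_pow t n ▸ pow_le_one' ht n) hα.le
    rwa [sub_sub_cancel] at this
  let α' : w.valuationSubring := ⟨α, hα₁⟩
  let t' : v.valuationSubring := ⟨t, ht⟩
  let c' (i : Fin n) : w.valuationSubring := ⟨c i, hc i⟩
  have hroot' (b : ResidueField w.valuationSubring) : b ^ n ≠ residue _ α' := by
    obtain ⟨u, rfl⟩ := residue_surjective b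
    rw [← map_pow, ← sub_ne_zero, ← map_sub, Ne, residue_valuationSubring_eq_zero_iff]
    exact hroot u
  have ht' : aeval (residue _ t') (X ^ n - C (residue _ α')) = 0 := by
    simp only [map_sub, map_pow, aeval_X, aeval_C,
      Valuation.HasExtension.algebraMap_residue_eq_residue_algebraMap]
    rw [← map_pow, ← map_sub, residue_valuationSubring_eq_zero_iff]
    exact hα
  have hmin := minpoly.eq_of_irreducible_of_monic (X_pow_sub_C_irreducible_of_prime hn hroot') ht'
    (monic_X_pow_sub_C _ hn.ne_zero)
  have hind := linearIndependent_pow (K := ResidueField w.valuationSubring) (residue _ t')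
  rw [← hmin, natDegree_X_pow_sub_C, Fintype.linearIndependent_iff] at hind
  refine residue_valuationSubring_eq_zero_iff.mp (hind (fun i => residue _ (c' i)) ?_ i)
  simp_rw [Algebra.smul_def, Valuation.HasExtension.algebraMap_residue_eq_residue_algebraMap,
    ← map_pow, ← map_mul, ← map_sum]
  rw [residue_valuationSubring_eq_zero_iff]
  simpa [Algebra.smul_def, c', t'] using h

theorem isValuationOrthogonal_pow {n : ℕ} {t : E} {α : L} (hn : n.Prime) (ht : v t ≤ 1)
    (hα : v (t ^ n - algebraMap L E α) < 1)
    (hroot : ∀ u : L, ¬v (algebraMap L E (u ^ n - α)) < 1) :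
    IsValuationOrthogonal L v fun i : Fin n => t ^ (i : ℕ) := by
  intro c i
  have : Nonempty (Fin n) := ⟨i⟩
  obtain ⟨m, hm⟩ := Finite.exists_max fun j => v (algebraMap L E (c j))
  have hterm : v (c i • t ^ (i : ℕ)) ≤ v (algebraMap L E (c m)) := by
    rw [Algebra.smul_def, map_mul, map_pow]
    exact (mul_le_of_le_one_right' (pow_le_one' ht _)).trans (hm i)
  refine hterm.trans (le_of_not_gt fun hlt => ?_)
  have h0 : 0 < v (algebraMap L E (c m)) := zero_le.trans_lt hlt
  have hcm : algebraMap L E (c m) ≠ 0 := v.pos_iff.mp h0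
  refine (map_lt_one_of_map_sum_pow_lt_one (c := fun j => c j / c m) hn ht hα hroot
    (fun j => ?_) ?_ m).ne ?_
  · rw [map_div₀, map_div₀]
    exact div_le_one_of_le₀ (hm j) zero_le
  · have hsum : ∑ j, (c j / c m) • t ^ (j : ℕ) =
        (∑ j, c j • t ^ (j : ℕ)) / algebraMap L E (c m) := by
      rw [sum_div]
      refine sum_congr rfl fun j _ => ?_
      rw [Algebra.smul_def, Algebra.smul_def, map_div₀, div_mul_eq_mul_div]
    rw [hsum, map_div₀]
    exact (div_lt_one₀ h0).mpr hlt
  · rw [map_div₀, div_self hcm, map_one]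

theorem map_coeff_le_of_forall_map_sum_pow_le {n : ℕ} {z : Fin n → E} (hz : ∀ s, v (z s) ≤ 1)
    (hzz : ∀ s s', s ≠ s' → v (z s - z s') = 1) {c : Fin n → E} {β : Γ}
    (h : ∀ s, v (∑ j : Fin n, c j * z s ^ (j : ℕ)) ≤ β) (j : Fin n) : v (c j) ≤ β := by
  let V : Matrix (Fin n) (Fin n) v.integer := Matrix.vandermonde fun s => ⟨z s, hz s⟩
  have hV : IsUnit V.det := by
    rw [Matrix.det_vandermonde, IsUnit.prod_univ_iff]
    refine fun i => IsUnit.prod_iff.mpr fun k hk => ?_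
    exact (Valuation.integer.integers v).isUnit_of_one' (hzz k i (mem_Ioi.mp hk).ne')
  have hc : c j = ∑ s, ((V⁻¹ j s : v.integer) : E) * ∑ k : Fin n, c k * z s ^ (k : ℕ) := by
    have hVc : (V⁻¹.map v.integer.subtype).mulVec ((V.map v.integer.subtype).mulVec c) = c := by
      rw [Matrix.mulVec_mulVec, ← Matrix.map_mul, Matrix.nonsing_inv_mul V hV,
        Matrix.map_one _ (map_zero _) (map_one _), Matrix.one_mulVec]
    rw [← congrFun hVc j]
    simp only [Matrix.mulVec, dotProduct, Matrix.map_apply, V, Matrix.vandermonde_apply]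
    refine sum_congr rfl fun s _ => congrArg _ (sum_congr rfl fun k _ => ?_)
    simp [mul_comm]
  rw [hc]
  refine v.map_sum_le fun s _ => ?_
  rw [map_mul]
  exact (mul_le_of_le_one_left' (V⁻¹ j s).2).trans (h s)

end Orthogonality

/-! ### Valuations centred on a prime element -/

section Centered

open Finset Module

variable {S L K E Γ ι : Type*} [CommRing S] [Field L] [Algebra S L] [Field K] [Algebra S K]
  [Algebra L K] [Field E] [Algebra S E] [Algebra L E] [LinearOrderedCommGroupWithZero Γ] {π : S}
  {v : Valuation E Γ}

/-- A valuation of an extension field of `S` is centred on `π` if its valuation ring contains `S`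
and its maximal ideal contracts to `(π)`. -/
structure IsCenteredOn (π : S) (v : Valuation E Γ) : Prop where
  map_le_one (s : S) : v (algebraMap S E s) ≤ 1
  map_lt_one_iff (s : S) : v (algebraMap S E s) < 1 ↔ π ∣ s

theorem exists_valuationSubring_isCenteredOn [IsDomain S]
    (hinj : Function.Injective (algebraMap S E)) (hπ : Prime π) :
    ∃ V : ValuationSubring E, IsCenteredOn π V.valuation := by
  have hprime : (Ideal.span {π}).IsPrime := (Ideal.span_singleton_prime hπ.ne_zero).mpr hπ
  have hunit (y : (Ideal.span {π}).primeCompl) : IsUnit (algebraMap S E y) := by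
    rw [isUnit_iff_ne_zero, map_ne_zero_iff _ hinj]
    exact fun h => y.2 (h ▸ zero_mem _)
  obtain ⟨V, hV, _⟩ := IsLocalRing.exists_factor_valuationRing
    (IsLocalization.lift (S := Localization.AtPrime (Ideal.span {π})) hunit)
  let φ := (IsLocalization.lift (S := Localization.AtPrime (Ideal.span {π})) hunit).codRestrict
    V.toSubring hV
  have hφ (s : S) : (φ (algebraMap S _ s) : E) = algebraMap S E s := IsLocalization.lift_eq hunit s
  refine ⟨V, fun s => ?_, fun s => ?_⟩
  · exact hφ s ▸ V.valuation_le_one (φ _)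
  · rw [← hφ, ← V.valuation_lt_one_iff, IsLocalRing.mem_maximalIdeal, mem_nonunits_iff,
      isUnit_map_iff φ, IsLocalization.AtPrime.isUnit_to_map_iff _ (Ideal.span {π}),
      Ideal.primeCompl, ← Ideal.mem_span_singleton]
    exact not_not

theorem exists_algebraMap_mul_eq_zpow_mul [IsDomain S] [WfDvdMonoid S] [IsFractionRing S L]
    (hπ : Prime π) {c : L} (hc : c ≠ 0) :
    ∃ (m : ℤ) (s t : S), ¬π ∣ s ∧ ¬π ∣ t ∧
      algebraMap S L t * c = algebraMap S L π ^ m * algebraMap S L s := by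
  obtain ⟨s, t, ht, rfl⟩ := IsFractionRing.div_surjective (A := S) c
  have ht0 : t ≠ 0 := nonZeroDivisors.ne_zero ht
  have hs0 : s ≠ 0 := by
    rintro rfl
    simp at hc
  obtain ⟨s', hs, hs'⟩ :=
    (FiniteMultiplicity.of_not_isUnit hπ.not_isUnit hs0).exists_eq_pow_mul_and_not_dvd
  obtain ⟨t', ht, ht'⟩ :=
    (FiniteMultiplicity.of_not_isUnit hπ.not_isUnit ht0).exists_eq_pow_mul_and_not_dvd
  have hπL : algebraMap S L π ≠ 0 := by simpa using hπ.ne_zero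
  have htL : algebraMap S L t' ≠ 0 := by
    rw [Ne, FaithfulSMul.algebraMap_eq_zero_iff]
    rintro rfl
    exact ht' (dvd_zero π)
  refine ⟨multiplicity π s - multiplicity π t, s', t', hs', ht', ?_⟩
  rw [zpow_sub₀ hπL, zpow_natCast, zpow_natCast, hs, ht, map_mul, map_mul, map_pow, map_pow, ← hs,
    ← ht]
  field_simp

namespace IsCenteredOn

theorem map_eq_one (hv : IsCenteredOn π v) {s : S} (hs : ¬π ∣ s) : v (algebraMap S E s) = 1 :=
  (hv.map_le_one s).antisymm (not_lt.mp (mt (hv.map_lt_one_iff s).mp hs))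

theorem map_add_eq_one (hv : IsCenteredOn π v) {s : S} (hs : ¬π ∣ s) {ε : E} (hε : v ε < 1) :
    v (algebraMap S E s + ε) = 1 := by
  rw [v.map_add_eq_of_lt_left (by rwa [hv.map_eq_one hs]), hv.map_eq_one hs]

theorem map_lt_one (hv : IsCenteredOn π v) : v (algebraMap S E π) < 1 :=
  (hv.map_lt_one_iff π).mpr dvd_rfl

theorem map_smul_le (hv : IsCenteredOn π v) (s : S) (x : E) : v (s • x) ≤ v x := by
  rw [Algebra.smul_def, map_mul]
  exact mul_le_of_le_one_left' (hv.map_le_one s)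

theorem map_le_map_pow_of_dvd (hv : IsCenteredOn π v) {s : S} {n : ℕ} (hs : π ^ n ∣ s) :
    v (algebraMap S E s) ≤ v (algebraMap S E π) ^ n := by
  obtain ⟨c, rfl⟩ := hs
  rw [map_mul, map_mul, map_pow, map_pow]
  exact mul_le_of_le_one_right' (hv.map_le_one c)

theorem map_le_one_of_isIntegral (hv : IsCenteredOn π v) {x : E} (hx : IsIntegral S x) :
    v x ≤ 1 := by
  let _ : Algebra S v.integer := ((algebraMap S E).codRestrict v.integer hv.map_le_one).toAlgebra
  have : IsScalarTower S v.integer E := IsScalarTower.of_algebraMap_eq fun _ => rfl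
  obtain ⟨y, rfl⟩ := IsIntegrallyClosed.isIntegral_iff.mp (hx.tower_top (A := v.integer))
  exact y.2

variable [IsScalarTower S L E]

theorem exists_map_eq_zpow [IsDomain S] [WfDvdMonoid S] [IsFractionRing S L]
    (hv : IsCenteredOn π v) (hπ : Prime π) {c : L} (hc : c ≠ 0) :
    ∃ m : ℤ, v (algebraMap L E c) = v (algebraMap S E π) ^ m ∧
      ∃ s t : S, ¬π ∣ t ∧ algebraMap S L t * c = algebraMap S L π ^ m * algebraMap S L s := by
  obtain ⟨m, s, t, hs, ht, h⟩ := exists_algebraMap_mul_eq_zpow_mul hπ hc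
  refine ⟨m, ?_, s, t, ht, h⟩
  have hvh := congrArg (fun x => v (algebraMap L E x)) h
  simpa only [map_mul, map_zpow₀, ← IsScalarTower.algebraMap_apply S L E, hv.map_eq_one hs,
    hv.map_eq_one ht, one_mul, mul_one] using hvh

theorem exists_algebraMap_mul_eq_pow_mul [IsDomain S] [WfDvdMonoid S] [IsFractionRing S L]
    (hv : IsCenteredOn π v) (hπ : Prime π) {c : L} {n : ℕ}
    (hc : v (algebraMap L E c) * v (algebraMap S E π) < v (algebraMap S E π) ^ n) :
    ∃ s t : S, ¬π ∣ t ∧ algebraMap S L t * c = algebraMap S L (π ^ n * s) := by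
  obtain rfl | hc0 := eq_or_ne c 0
  · exact ⟨0, 1, fun h => hπ.not_isUnit (isUnit_of_dvd_one h), by simp⟩
  obtain ⟨m, hm, s, t, ht, h⟩ := hv.exists_map_eq_zpow hπ hc0
  have hπ0 : v (algebraMap S E π) ≠ 0 := by
    rw [IsScalarTower.algebraMap_apply S L E, Valuation.ne_zero_iff]
    simpa using hπ.ne_zero
  rw [hm, ← zpow_add_one₀ hπ0, ← zpow_natCast,
    zpow_lt_zpow_iff_right_of_lt_one₀ (zero_lt_iff.mpr hπ0) hv.map_lt_one] at hc
  obtain ⟨k, rfl⟩ : ∃ k : ℕ, m = n + k := ⟨(m - n).toNat, by lia⟩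
  refine ⟨π ^ k * s, t, ht, ?_⟩
  rw [h, ← Nat.cast_add, zpow_natCast, pow_add, map_mul, map_mul, map_pow, map_pow, mul_assoc]

theorem modEq_of_map_mul_pow_eq [IsDomain S] [WfDvdMonoid S] [IsFractionRing S L]
    (hv : IsCenteredOn π v) (hπ : Prime π) {θ : Γ} {N : ℕ} (hθ : v (algebraMap S E π) = θ ^ N)
    {c c' : L} (hc : c ≠ 0) (hc' : c' ≠ 0) {e e' : ℕ}
    (h : v (algebraMap L E c) * θ ^ e = v (algebraMap L E c') * θ ^ e') : e ≡ e' [MOD N] := by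
  obtain ⟨m, hm, -⟩ := hv.exists_map_eq_zpow hπ hc
  obtain ⟨m', hm', -⟩ := hv.exists_map_eq_zpow hπ hc'
  have hθ1 : θ ≠ 1 := by
    rintro rfl
    simpa [hθ] using hv.map_lt_one
  have hN : θ ^ N ≠ 0 := by
    rw [← hθ, IsScalarTower.algebraMap_apply S L E, Valuation.ne_zero_iff]
    simpa using hπ.ne_zero
  have hθ0 : θ ≠ 0 := by
    rintro rfl
    obtain rfl : N = 0 := by simpa using hN
    simpa [hθ] using hv.map_lt_one
  rw [hm, hm', hθ, ← zpow_natCast θ N, ← zpow_mul, ← zpow_mul, ← zpow_natCast θ e,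
    ← zpow_natCast θ e', ← zpow_add₀ hθ0, ← zpow_add₀ hθ0] at h
  have hexp := zpow_right_injective₀ (zero_lt_iff.mpr hθ0) hθ1 h
  refine Nat.modEq_iff_dvd.mpr ⟨m - m', ?_⟩
  linear_combination -hexp

end IsCenteredOn

section LocalBall

variable [IsScalarTower S L K]

/-- The `S`-lattice `M` in `K` becomes, after localising at the prime `(π)`, the ball of radius `β`
for the maximum of the valuations `v ∘ φ` with `φ ∈ Φ`. Such a lattice is stable under all elements
integral over `S` up to factors prime to `π`. -/
structure IsLocalBall (π : S) (v : Valuation E Γ) (Φ : Set (K →ₐ[L] E)) (β : Γ)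
    (M : Submodule S K) : Prop where
  map_le : ∀ φ ∈ Φ, ∀ m ∈ M, v (φ m) ≤ β
  exists_smul_mem (z : K) (hz : ∀ φ ∈ Φ, v (φ z) ≤ β) : ∃ t : S, ¬π ∣ t ∧ t • z ∈ M

theorem map_algHom_smul_le [IsScalarTower S L E] (hv : IsCenteredOn π v) (φ : K →ₐ[L] E) (s : S)
    (x : K) : v (φ (s • x)) ≤ v (φ x) :=
  map_smul (φ.restrictScalars S) s x ▸ hv.map_smul_le s (φ x)

theorem IsLocalBall.exists_smul_mul_mem [IsScalarTower S L E] {Φ : Set (K →ₐ[L] E)} {β : Γ}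
    {M : Submodule S K} (hM : IsLocalBall π v Φ β M) (hv : IsCenteredOn π v) {r m : K}
    (hr : IsIntegral S r) (hm : m ∈ M) : ∃ t : S, ¬π ∣ t ∧ t • (r * m) ∈ M := by
  refine hM.exists_smul_mem _ fun φ hφ => ?_
  rw [map_mul, map_mul]
  exact (mul_le_of_le_one_left' (hv.map_le_one_of_isIntegral (hr.map (φ.restrictScalars S)))).trans
    (hM.map_le φ hφ m hm)

theorem exists_smul_sum_mem [Fintype ι] (hπ : Prime π) {M : Submodule S K} {x : ι → K}
    (hx : ∀ i, ∃ t : S, ¬π ∣ t ∧ t • x i ∈ M) : ∃ t : S, ¬π ∣ t ∧ t • ∑ i, x i ∈ M := by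
  classical
  choose t ht htM using hx
  refine ⟨∏ i, t i, fun h => ?_, ?_⟩
  · obtain ⟨i, -, hi⟩ := hπ.exists_mem_finset_dvd h
    exact ht i hi
  · rw [smul_sum]
    refine sum_mem fun i hi => ?_
    rw [← mul_prod_erase univ t hi, mul_comm, mul_smul]
    exact M.smul_mem _ (htM i)

theorem isLocalBall_of_forall_map_mul_le [IsDomain S] [WfDvdMonoid S] [IsFractionRing S L]
    [IsScalarTower S L E] [Fintype ι] (hv : IsCenteredOn π v) (hπ : Prime π)
    {Φ : Set (K →ₐ[L] E)} {β : Γ} {M : Submodule S K} (hle : ∀ φ ∈ Φ, ∀ m ∈ M, v (φ m) ≤ β)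
    {e : ι → K} (he : Submodule.span L (Set.range e) = ⊤) {G : ι → Γ} {n : ι → ℕ}
    (horth : ∀ c : ι → L, (∀ φ ∈ Φ, v (∑ i, c i • φ (e i)) ≤ β) →
      ∀ i, v (algebraMap L E (c i)) * G i ≤ β)
    (hG : ∀ i, β * v (algebraMap S E π) < v (algebraMap S E π) ^ n i * G i)
    (hmem : ∀ i, π ^ n i • e i ∈ M) : IsLocalBall π v Φ β M := by
  refine ⟨hle, fun z hz => ?_⟩
  obtain ⟨c, rfl⟩ := (Submodule.mem_span_range_iff_exists_fun L).mp (he ▸ Submodule.mem_top : z ∈ _)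
  have hc := horth c fun φ hφ => by simpa using hz φ hφ
  refine exists_smul_sum_mem hπ fun i => ?_
  obtain ⟨s, t, ht, hst⟩ := hv.exists_algebraMap_mul_eq_pow_mul hπ (c := c i) (n := n i) (by
    refine lt_of_mul_lt_mul_right' (a := G i) ((hG i).trans_le' ?_)
    rw [mul_right_comm]
    exact mul_le_mul_left (hc i) _)
  refine ⟨t, ht, ?_⟩
  have hsmul : t • c i • e i = s • π ^ n i • e i := by
    rw [smul_smul, ← algebraMap_smul L t, smul_smul, hst, algebraMap_smul, mul_comm]
  exact hsmul ▸ M.smul_mem s (hmem i)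

theorem mem_span_range_of_smul_mem [IsDomain S] {M : Type*} [AddCommGroup M] [Module S M]
    [IsTorsionFree S M] [Finite ι] (hπ : Prime π) {b : ι → M} (hb : LinearIndependent S b) {z : M}
    {t : S} (ht : ¬π ∣ t) {n : ℕ} (hπz : π ^ n • z ∈ Submodule.span S (Set.range b))
    (htz : t • z ∈ Submodule.span S (Set.range b)) : z ∈ Submodule.span S (Set.range b) := by
  have := Fintype.ofFinite ι
  obtain ⟨c, hc⟩ := (Submodule.mem_span_range_iff_exists_fun S).mp hπz
  obtain ⟨d, hd⟩ := (Submodule.mem_span_range_iff_exists_fun S).mp htz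
  have hcd (i : ι) : t * c i = π ^ n * d i := by
    refine sub_eq_zero.mp
      (Fintype.linearIndependent_iff.mp hb (fun i => t * c i - π ^ n * d i) ?_ i)
    simp only [sub_smul, mul_smul, sum_sub_distrib, ← smul_sum, hc, hd]
    rw [smul_comm, sub_self]
  choose u hu using fun i => hπ.pow_dvd_of_dvd_mul_left n ht ⟨d i, hcd i⟩
  refine (Submodule.mem_span_range_iff_exists_fun S).mpr ⟨u, ?_⟩
  refine smul_right_injective M (pow_ne_zero n hπ.ne_zero) ?_
  simp only [smul_sum, smul_smul, ← hu, hc]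

/-- The integral closure of `S` in `K` has a birational maximal Cohen–Macaulay module. Since `S` is
local, the depth of `M` over the integral closure equals its depth over `S`. -/
def HasBirationalMCM (S K : Type*) [CommRing S] [IsLocalRing S] [Field K] [Algebra S K] : Prop :=
  ∃ M : Submodule S K, M ≠ ⊥ ∧ M.FG ∧ (∀ r ∈ integralClosure S K, ∀ m ∈ M, r * m ∈ M) ∧
    (modDepth S M : WithBot ℕ∞) = ringKrullDim S

theorem span_range_eq_top_of_pow_mul_mem [IsDomain S] [IsFractionRing S L]
    [Algebra.IsAlgebraic L K] (hπ : π ≠ 0) {F : ι → K}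
    (hsat : ∀ z, IsIntegral S z → ∃ n : ℕ, π ^ n • z ∈ Submodule.span S (Set.range F)) :
    Submodule.span L (Set.range F) = ⊤ := by
  refine eq_top_iff.mpr fun z _ => ?_
  have hz : IsAlgebraic S z :=
    (IsFractionRing.isAlgebraic_iff S L K).mpr (Algebra.IsAlgebraic.isAlgebraic z)
  obtain ⟨s, hs, hsz⟩ := hz.exists_integral_multiple
  obtain ⟨n, hn⟩ := hsat _ hsz
  have hL := Submodule.span_le_restrictScalars S L _ hn
  rw [smul_smul, ← algebraMap_smul L] at hL
  refine (Submodule.smul_mem_iff _ ?_).mp hL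
  simpa using ⟨fun h => absurd h hπ, hs⟩

theorem hasBirationalMCM_of_isLocalBall [IsDomain S] [IsRegularLocalRing S] [IsFractionRing S L]
    [IsScalarTower S L E] [FiniteDimensional L K] [Fintype ι]
    (hv : IsCenteredOn π v) (hπ : Prime π) {F : ι → K} (hcard : Fintype.card ι = finrank L K)
    (hF : ∀ i, IsIntegral S (F i))
    (hsat : ∀ z, IsIntegral S z → ∃ n : ℕ, π ^ n • z ∈ Submodule.span S (Set.range F))
    {Φ : Set (K →ₐ[L] E)} {β : Γ} (hball : IsLocalBall π v Φ β (Submodule.span S (Set.range F))) :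
    HasBirationalMCM S K := by
  have hind : LinearIndependent L F := linearIndependent_of_top_le_span_of_card_eq_finrank
    (span_range_eq_top_of_pow_mul_mem hπ.ne_zero hsat).ge hcard
  have hindS : LinearIndependent S F := hind.restrict_scalars' S
  have : Nonempty ι := Fintype.card_pos_iff.mp (hcard ▸ finrank_pos)
  let i₀ := Classical.arbitrary ι
  have hne : Submodule.span S (Set.range F) ≠ ⊥ :=
    (Submodule.ne_bot_iff _).mpr ⟨F i₀, Submodule.subset_span ⟨i₀, rfl⟩, hind.ne_zero i₀⟩
  refine ⟨_, hne, Submodule.fg_span (Set.finite_range F), fun r hr m hm => ?_, ?_⟩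
  · have hm' : IsIntegral S m := by
      refine (Submodule.span_le (p := Subalgebra.toSubmodule (integralClosure S K))).mpr ?_ hm
      rintro _ ⟨i, rfl⟩
      exact hF i
    obtain ⟨n, hn⟩ := hsat _ (hr.mul hm')
    obtain ⟨t, ht, htm⟩ := hball.exists_smul_mul_mem hv hr hm
    have : IsTorsionFree S K := IsTorsionFree.trans_faithfulSMul S L K
    exact mem_span_range_of_smul_mem hπ hindS ht hn htm
  · have : Module.Free S (Submodule.span S (Set.range F)) := .of_basis (Basis.span hindS)
    have : Module.Finite S (Submodule.span S (Set.range F)) := .of_basis (Basis.span hindS)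
    have : Nontrivial (Submodule.span S (Set.range F)) :=
      Submodule.nontrivial_iff_ne_bot.mpr hne
    exact modDepth_eq_ringKrullDim_of_flat

end LocalBall

end Centered

/-! ### Lattices spanned by monomials in two shifted radicals -/

section ShiftedRadical

open Finset

variable {S B C : Type*} [CommRing S] [CommRing B] [Algebra S B] [CommRing C] [Algebra S C] {p : ℕ}
  {h a : S} {x : B}

/-- The element `x` arises from a `p`-th root of `h ^ p + a * p` by subtracting `h`. -/
def IsShiftedRadical (p : ℕ) (h a : S) (x : B) : Prop :=
  (x + algebraMap S B h) ^ p = algebraMap S B (h ^ p + a * p)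

namespace IsShiftedRadical

theorem map (hx : IsShiftedRadical p h a x) (φ : B →ₐ[S] C) : IsShiftedRadical p h a (φ x) := by
  unfold IsShiftedRadical at hx ⊢
  rw [← φ.commutes h, ← map_add, ← map_pow, hx, φ.commutes]

theorem exists_pow_eq_smul_add_sum [IsDomain B] [CharZero B] (hx : IsShiftedRadical p h a x)
    (hp : p.Prime) : ∃ m : ℕ → S, m 1 = -h ^ (p - 1) ∧
      x ^ p = (p : S) • (algebraMap S B a + ∑ k ∈ Ioo 0 p, m k • x ^ k) := by
  refine ⟨fun k => -(h ^ (p - k) * (p.choose k / p : ℕ)), by simp [Nat.div_self hp.pos], ?_⟩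
  have hpow := add_pow_prime_eq hp x (algebraMap S B h)
  rw [hx, map_add, map_mul, map_pow, map_natCast] at hpow
  have hsum : ∑ k ∈ Ioo 0 p, -(h ^ (p - k) * ((p.choose k / p : ℕ) : S)) • x ^ k =
      -(x * algebraMap S B h * ∑ k ∈ Ioo 0 p,
        x ^ (k - 1) * algebraMap S B h ^ (p - k - 1) * ((p.choose k / p : ℕ) : B)) := by
    rw [mul_sum, ← sum_neg_distrib]
    refine sum_congr rfl fun k hk => ?_
    obtain ⟨hk0, hkp⟩ := mem_Ioo.mp hk
    obtain ⟨i, rfl⟩ := Nat.exists_eq_add_of_lt hk0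
    obtain ⟨j, hj⟩ := Nat.exists_eq_add_of_lt hkp
    rw [show p - (0 + i + 1) = j + 1 by omega]
    simp only [Algebra.smul_def, map_neg, map_mul, map_pow, map_natCast, Nat.add_sub_cancel,
      zero_add]
    ring
  rw [hsum, Algebra.smul_def, map_natCast]
  linear_combination -hpow

open Polynomial in
theorem exists_monic_natDegree_eq [Nontrivial S] (hx : IsShiftedRadical p h a x) (hp : 0 < p) :
    ∃ P : S[X], P.Monic ∧ P.natDegree = p ∧ aeval x P = 0 := by
  have hmonic : ((X + C h) ^ p).Monic := (monic_X_add_C h).pow p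
  have hdeg : ((X + C h) ^ p).natDegree = p := by
    rw [(monic_X_add_C h).natDegree_pow, natDegree_X_add_C, mul_one]
  refine ⟨(X + C h) ^ p - C (h ^ p + a * p), hmonic.sub_of_left ?_,
    by rw [natDegree_sub_C, hdeg], ?_⟩
  · exact degree_C_le.trans_lt
      (by rw [degree_eq_natDegree hmonic.ne_zero, hdeg]; exact_mod_cast hp)
  · rw [map_sub, map_pow, map_add, aeval_X, aeval_C, aeval_C, hx, sub_self]

theorem isIntegral [Nontrivial S] (hx : IsShiftedRadical p h a x) (hp : 0 < p) : IsIntegral S x :=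
  let ⟨P, hP, _, h⟩ := hx.exists_monic_natDegree_eq hp
  ⟨P, hP, h⟩

end IsShiftedRadical

end ShiftedRadical

section Lattice

open Finset

variable {S B : Type*} [CommRing S] [CommRing B] [Algebra S B] {M : Submodule S B} {π u w : S}
  {n N : ℕ} {x y l z₀ : B}

theorem mul_pow_mul_pow_mem_of_forall_mul_mem (hl : l = u • x + w • y)
    (h : ∀ i j, i + j = N → z₀ * (x ^ i * y ^ j) ∈ M) {j k : ℕ} (hjk : j + k = N) :
    z₀ * (l ^ j * y ^ k) ∈ M := by
  suffices key : ∀ j i k, i + j + k = N → z₀ * (x ^ i * l ^ j * y ^ k) ∈ M by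
    simpa using key j 0 k (by omega)
  intro j
  induction j with
  | zero => intro i k hk; simpa using h i k hk
  | succ j ih =>
    intro i k hk
    convert M.add_mem (M.smul_mem u (ih (i + 1) k (by omega)))
      (M.smul_mem w (ih i (k + 1) (by omega))) using 1
    rw [pow_succ l, hl]
    simp only [Algebra.smul_def]
    ring

theorem smul_mem_of_forall_smul_pow_mul_pow_mem {A : Subalgebra S B}
    (hA : Subalgebra.toSubmodule A = gridSpan S n fun j k => x ^ j * y ^ k) {d : S}
    (h : ∀ j < n, ∀ k < n, d • (x ^ j * y ^ k) ∈ M) {z : B} (hz : z ∈ A) : d • z ∈ M :=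
  (hA ▸ gridSpan_le.mpr h : Subalgebra.toSubmodule A ≤ M.comap (LinearMap.lsmul S B d)) hz

theorem smul_pow_mul_pow_mem_of_lt {x' y' : B} (hx' : x' ∈ Algebra.adjoin S {x, y})
    (hy' : y' ∈ Algebra.adjoin S {x, y}) (hx : x ^ n = π • x') (hy : y ^ n = π • y') {d : S}
    (hd : ∀ z ∈ Algebra.adjoin S {x, y}, (d * π) • z ∈ M)
    (h : ∀ i < n, ∀ j < n, N ≤ i + j → d • (x ^ i * y ^ j) ∈ M) {i j : ℕ} (hij : N ≤ i + j) :
    d • (x ^ i * y ^ j) ∈ M := by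
  have hxA : x ∈ Algebra.adjoin S {x, y} := Algebra.subset_adjoin (by simp)
  have hyA : y ∈ Algebra.adjoin S {x, y} := Algebra.subset_adjoin (by simp)
  rcases lt_or_ge i n with hi | hi
  · rcases lt_or_ge j n with hj | hj
    · exact h i hi j hj hij
    · obtain ⟨j, rfl⟩ := Nat.exists_eq_add_of_le hj
      convert hd _ (mul_mem hy' (mul_mem (pow_mem hxA i) (pow_mem hyA j))) using 1
      rw [pow_add, hy]
      simp only [Algebra.smul_def, map_mul]
      ring
  · obtain ⟨i, rfl⟩ := Nat.exists_eq_add_of_le hi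
    convert hd _ (mul_mem hx' (mul_mem (pow_mem hxA i) (pow_mem hyA j))) using 1
    rw [pow_add, hx]
    simp only [Algebra.smul_def, map_mul]
    ring

/-- The standard generators of the lattice `π A + (x, y) ^ (n - 1)` in `A = S[x, y]`, when `x` and
`y` have degree `n` over `S`. -/
def idealPowGrid (π : S) (n : ℕ) (x y : B) (j k : ℕ) : B :=
  π ^ (if j + k < n - 1 then 1 else 0) • (x ^ j * y ^ k)

theorem smul_mem_gridSpan_idealPowGrid {A : Subalgebra S B}
    (hA : Subalgebra.toSubmodule A = gridSpan S n fun j k => x ^ j * y ^ k) {z : B} (hz : z ∈ A) :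
    π • z ∈ gridSpan S n (idealPowGrid π n x y) := by
  refine smul_mem_of_forall_smul_pow_mul_pow_mem hA (fun j hj k hk => ?_) hz
  have h := mem_gridSpan (R := S) (F := idealPowGrid π n x y) hj hk
  unfold idealPowGrid at h ⊢
  split_ifs at h
  · simpa using h
  · exact Submodule.smul_mem _ _ (by simpa using h)

theorem pow_mul_pow_mem_gridSpan_idealPowGrid
    (hA : Subalgebra.toSubmodule (Algebra.adjoin S {x, y}) = gridSpan S n fun j k => x ^ j * y ^ k)
    {x' y' : B} (hx' : x' ∈ Algebra.adjoin S {x, y}) (hy' : y' ∈ Algebra.adjoin S {x, y})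
    (hx : x ^ n = π • x') (hy : y ^ n = π • y') {i j : ℕ} (hij : n - 1 ≤ i + j) :
    x ^ i * y ^ j ∈ gridSpan S n (idealPowGrid π n x y) := by
  rw [← one_smul S (x ^ i * y ^ j)]
  refine smul_pow_mul_pow_mem_of_lt hx' hy' hx hy (fun z hz => ?_) (fun i hi j hj h => ?_) hij
  · rw [one_mul]
    exact smul_mem_gridSpan_idealPowGrid hA hz
  · simpa [idealPowGrid, h.not_gt] using mem_gridSpan (R := S) (F := idealPowGrid π n x y) hi hj

/-- The standard generators of the lattice
`π² A + π (x, y) + (x, y) ^ (n + 1) + ∑ j, S (x ^ j y ^ (n - j) - π c j)` in `A = S[x, y]`, when `x`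
and `y` have degree `n` over `S`. -/
def shiftedGrid (π : S) (n : ℕ) (c : ℕ → S) (x y : B) (j k : ℕ) : B :=
  if j + k = n then x ^ j * y ^ k - algebraMap S B (π * c j)
  else π ^ (if j + k = 0 then 2 else if j + k < n then 1 else 0) • (x ^ j * y ^ k)

variable {c : ℕ → S} {i j : ℕ}

theorem algebraMap_sq_mem_gridSpan_shiftedGrid (hn : 0 < n) (s : S) :
    algebraMap S B (π ^ 2 * s) ∈ gridSpan S n (shiftedGrid π n c x y) := by
  have h := mem_gridSpan (R := S) (F := shiftedGrid π n c x y) hn hn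
  rw [shiftedGrid, if_neg (by omega), if_pos (add_zero 0), pow_zero, pow_zero, mul_one] at h
  rw [mul_comm, Algebra.algebraMap_eq_smul_one, mul_smul]
  exact Submodule.smul_mem _ _ h

theorem smul_pow_mul_pow_mem_gridSpan_shiftedGrid_of_lt (hi : i < n) (hj : j < n)
    (hij : 1 ≤ i + j) : π • (x ^ i * y ^ j) ∈ gridSpan S n (shiftedGrid π n c x y) := by
  have h := mem_gridSpan (R := S) (F := shiftedGrid π n c x y) hi hj
  rw [shiftedGrid] at h
  split_ifs at h with hn h0 hlt
  · have hc := algebraMap_sq_mem_gridSpan_shiftedGrid (π := π) (c := c) (x := x) (y := y)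
      (show 0 < n by omega) (c i)
    convert add_mem (Submodule.smul_mem _ π h) hc using 1
    simp only [Algebra.smul_def, map_mul, map_pow]
    ring
  · omega
  · simpa using h
  · exact Submodule.smul_mem _ _ (by simpa using h)

theorem sq_smul_mem_gridSpan_shiftedGrid (hn : 0 < n) {A : Subalgebra S B}
    (hA : Subalgebra.toSubmodule A = gridSpan S n fun j k => x ^ j * y ^ k) {z : B} (hz : z ∈ A) :
    π ^ 2 • z ∈ gridSpan S n (shiftedGrid π n c x y) := by
  refine smul_mem_of_forall_smul_pow_mul_pow_mem hA (fun j hj k hk => ?_) hz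
  rcases (j + k).eq_zero_or_pos with h0 | h0
  · obtain ⟨rfl, rfl⟩ : j = 0 ∧ k = 0 := by omega
    simpa [Algebra.smul_def] using
      algebraMap_sq_mem_gridSpan_shiftedGrid (π := π) (c := c) (x := x) (y := y) hn 1
  · rw [sq, mul_smul]
    exact Submodule.smul_mem _ _ (smul_pow_mul_pow_mem_gridSpan_shiftedGrid_of_lt hj hk h0)

theorem smul_pow_mul_pow_mem_gridSpan_shiftedGrid (hn : 0 < n)
    (hA : Subalgebra.toSubmodule (Algebra.adjoin S {x, y}) = gridSpan S n fun j k => x ^ j * y ^ k)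
    {x' y' : B} (hx' : x' ∈ Algebra.adjoin S {x, y}) (hy' : y' ∈ Algebra.adjoin S {x, y})
    (hx : x ^ n = π • x') (hy : y ^ n = π • y') (hij : 1 ≤ i + j) :
    π • (x ^ i * y ^ j) ∈ gridSpan S n (shiftedGrid π n c x y) := by
  refine smul_pow_mul_pow_mem_of_lt hx' hy' hx hy (fun z hz => ?_)
    (fun i hi j hj => smul_pow_mul_pow_mem_gridSpan_shiftedGrid_of_lt hi hj) hij
  rw [← sq]
  exact sq_smul_mem_gridSpan_shiftedGrid hn hA hz

theorem pow_mul_sub_algebraMap_mul_mem {a : S} {m : ℕ → S} {w : B}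
    (hx : x ^ n = π • (algebraMap S B a + ∑ k ∈ Ioo 0 n, m k • x ^ k))
    (h : ∀ k, 0 < k → π • (x ^ k * w) ∈ M) : x ^ n * w - algebraMap S B (π * a) * w ∈ M := by
  have heq : x ^ n * w - algebraMap S B (π * a) * w = ∑ k ∈ Ioo 0 n, m k • π • (x ^ k * w) := by
    rw [hx]
    rw [smul_add, add_mul, Algebra.smul_def π (algebraMap S B a), ← map_mul, add_sub_cancel_left,
      smul_sum, sum_mul]
    refine sum_congr rfl fun k _ => ?_
    simp only [Algebra.smul_def]
    ring
  rw [heq]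
  exact sum_mem fun k hk => Submodule.smul_mem _ _ (h k (mem_Ioo.mp hk).1)

/-- The data entering `shiftedGrid`: `x` and `y` satisfy relations `xⁿ = π (a + m₁ x + ⋯)` and
`yⁿ = π (b + m₁' y + ⋯)`, and the outer coefficients `c 0`, `c n` are `b`, `a` modulo `π`. -/
structure IsShiftedGridDatum (π : S) (n : ℕ) (c : ℕ → S) (x y : B) (a b : S) (m m' : ℕ → S) :
    Prop where
  adjoin_eq : Subalgebra.toSubmodule (Algebra.adjoin S {x, y}) =
    gridSpan S n fun j k => x ^ j * y ^ k
  left_pow_eq : x ^ n = π • (algebraMap S B a + ∑ k ∈ Ioo 0 n, m k • x ^ k)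
  right_pow_eq : y ^ n = π • (algebraMap S B b + ∑ k ∈ Ioo 0 n, m' k • y ^ k)
  dvd_left : π ∣ a - c n
  dvd_right : π ∣ b - c 0

theorem algebraMap_add_sum_smul_pow_mem_adjoin {s : Set B} (hx : x ∈ Algebra.adjoin S s) (a : S)
    (m : ℕ → S) (t : Finset ℕ) :
    algebraMap S B a + ∑ k ∈ t, m k • x ^ k ∈ Algebra.adjoin S s :=
  add_mem (Subalgebra.algebraMap_mem _ a)
    (sum_mem fun k _ => Subalgebra.smul_mem _ (pow_mem hx k) (m k))

namespace IsShiftedGridDatum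

variable {a b : S} {m m' : ℕ → S}

theorem smul_pow_mul_pow_mem (h : IsShiftedGridDatum π n c x y a b m m') (hn : 0 < n)
    (hij : 1 ≤ i + j) : π • (x ^ i * y ^ j) ∈ gridSpan S n (shiftedGrid π n c x y) :=
  smul_pow_mul_pow_mem_gridSpan_shiftedGrid hn h.adjoin_eq
    (algebraMap_add_sum_smul_pow_mem_adjoin (Algebra.subset_adjoin (by simp)) a m _)
    (algebraMap_add_sum_smul_pow_mem_adjoin (Algebra.subset_adjoin (by simp)) b m' _)
    h.left_pow_eq h.right_pow_eq hij

theorem pow_add_mul_sub_mem (h : IsShiftedGridDatum π n c x y a b m m') (hn : 0 < n) (i j : ℕ) :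
    x ^ (n + i) * y ^ j - algebraMap S B (π * a) * (x ^ i * y ^ j) ∈
      gridSpan S n (shiftedGrid π n c x y) := by
  rw [pow_add, mul_assoc]
  refine pow_mul_sub_algebraMap_mul_mem h.left_pow_eq fun k hk => ?_
  rw [← mul_assoc, ← pow_add]
  exact h.smul_pow_mul_pow_mem hn (by omega)

theorem mul_pow_add_sub_mem (h : IsShiftedGridDatum π n c x y a b m m') (hn : 0 < n) (i j : ℕ) :
    x ^ i * y ^ (n + j) - algebraMap S B (π * b) * (x ^ i * y ^ j) ∈
      gridSpan S n (shiftedGrid π n c x y) := by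
  rw [pow_add, mul_left_comm]
  refine pow_mul_sub_algebraMap_mul_mem h.right_pow_eq fun k hk => ?_
  rw [mul_left_comm, ← pow_add]
  exact h.smul_pow_mul_pow_mem hn (by omega)

theorem pow_mul_pow_mem_of_lt (h : IsShiftedGridDatum π n c x y a b m m') (hn : 0 < n)
    (hij : n < i + j) : x ^ i * y ^ j ∈ gridSpan S n (shiftedGrid π n c x y) := by
  have hmem (s : S) {i j : ℕ} (hij : 1 ≤ i + j) : algebraMap S B (π * s) * (x ^ i * y ^ j) ∈
      gridSpan S n (shiftedGrid π n c x y) := by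
    rw [mul_comm π, ← Algebra.smul_def, mul_smul]
    exact Submodule.smul_mem _ _ (h.smul_pow_mul_pow_mem hn hij)
  rcases lt_or_ge i n with hi | hi
  · rcases lt_or_ge j n with hj | hj
    · have hF := mem_gridSpan (R := S) (F := shiftedGrid π n c x y) hi hj
      rwa [shiftedGrid, if_neg hij.ne', if_neg (hn.trans hij).ne', if_neg hij.not_gt, pow_zero,
        one_smul] at hF
    · obtain ⟨j, rfl⟩ := Nat.exists_eq_add_of_le hj
      exact (Submodule.sub_mem_iff_left _ (hmem b (by omega))).mp (h.mul_pow_add_sub_mem hn i j)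
  · obtain ⟨i, rfl⟩ := Nat.exists_eq_add_of_le hi
    exact (Submodule.sub_mem_iff_left _ (hmem a (by omega))).mp (h.pow_add_mul_sub_mem hn i j)

theorem pow_mul_pow_sub_mem (h : IsShiftedGridDatum π n c x y a b m m') (hn : 0 < n)
    (hij : i + j = n) : x ^ i * y ^ j - algebraMap S B (π * c i) ∈
      gridSpan S n (shiftedGrid π n c x y) := by
  rcases eq_or_ne i 0 with rfl | hi
  · obtain ⟨d, hd⟩ := h.dvd_right
    obtain rfl : j = n := by omega
    convert add_mem (h.mul_pow_add_sub_mem hn 0 0) (algebraMap_sq_mem_gridSpan_shiftedGrid hn d)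
      using 1
    rw [eq_add_of_sub_eq hd]
    simp only [map_mul, map_add, map_pow]
    ring
  rcases eq_or_ne j 0 with rfl | hj
  · obtain ⟨d, hd⟩ := h.dvd_left
    obtain rfl : i = n := by omega
    convert add_mem (h.pow_add_mul_sub_mem hn 0 0) (algebraMap_sq_mem_gridSpan_shiftedGrid hn d)
      using 1
    rw [eq_add_of_sub_eq hd]
    simp only [map_mul, map_add, map_pow]
    ring
  · have hF := mem_gridSpan (R := S) (F := shiftedGrid π n c x y) (show i < n by omega)
      (show j < n by omega)
    rwa [shiftedGrid, if_pos hij] at hF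

theorem smul_linear_pow_mul_pow_mem (h : IsShiftedGridDatum π n c x y a b m m') (hn : 0 < n)
    (hl : l = u • x + w • y) (hc : ∀ i < n, π ∣ u * c (i + 1) + w * c i) {k : ℕ} (hk : k < n) :
    π ^ (if j + k = 0 then 2 else if j + k < n then 1 else 0) • (l ^ j * y ^ k) ∈
      gridSpan S n (shiftedGrid π n c x y) := by
  split_ifs with h0 hlt
  · obtain ⟨rfl, rfl⟩ : j = 0 ∧ k = 0 := by omega
    simpa [Algebra.smul_def] using
      algebraMap_sq_mem_gridSpan_shiftedGrid (π := π) (c := c) (x := x) (y := y) hn 1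
  · rw [pow_one, Algebra.smul_def]
    refine mul_pow_mul_pow_mem_of_forall_mul_mem hl (fun i j' hij => ?_) rfl
    rw [← Algebra.smul_def]
    exact h.smul_pow_mul_pow_mem hn (by omega)
  · rw [pow_zero, one_smul]
    rcases eq_or_ne (j + k) n with hjk | hjk
    · obtain ⟨j, rfl⟩ : ∃ j', j = j' + 1 := ⟨j - 1, by omega⟩
      rw [pow_succ', mul_assoc]
      refine mul_pow_mul_pow_mem_of_forall_mul_mem hl (fun i j' hij => ?_) rfl
      obtain ⟨d, hd⟩ := hc i (by omega)
      have hd' := congrArg (algebraMap S B) hd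
      have hx := h.pow_mul_pow_sub_mem hn (i := i + 1) (j := j') (by omega)
      have hy := h.pow_mul_pow_sub_mem hn (i := i) (j := j' + 1) (by omega)
      convert add_mem (add_mem (Submodule.smul_mem _ u hx) (Submodule.smul_mem _ w hy))
        (algebraMap_sq_mem_gridSpan_shiftedGrid hn d) using 1
      simp only [hl, Algebra.smul_def, map_mul, map_add, map_pow] at hd' ⊢
      linear_combination algebraMap S B π * hd'
    · rw [← one_mul (l ^ j * y ^ k)]
      refine mul_pow_mul_pow_mem_of_forall_mul_mem hl (fun i j' hij => ?_) rfl
      rw [one_mul]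
      exact h.pow_mul_pow_mem_of_lt hn (by omega)

end IsShiftedGridDatum

end Lattice

/-! ### Valuations of shifted radicals -/

section RadicalValuation

open Finset

variable {S L E Γ : Type*} [CommRing S] [Field E] [Algebra S E]
  [LinearOrderedCommGroupWithZero Γ] {v : Valuation E Γ} {p : ℕ}
  {h a : S} {X : E}

theorem map_algebraMap_natCast_pos [CharZero E] (hp : p ≠ 0) :
    0 < v (algebraMap S E p) := by
  rw [map_natCast, Valuation.pos_iff]
  exact Nat.cast_ne_zero.mpr hp

namespace IsShiftedRadical

variable [Nontrivial S]

theorem map_le_one (hX : IsShiftedRadical p h a X) (hp : 0 < p) (hv : IsCenteredOn (p : S) v) :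
    v X ≤ 1 :=
  hv.map_le_one_of_isIntegral (hX.isIntegral hp)

variable [CharZero E]

theorem exists_pow_eq_smul_add_sq_mul (hX : IsShiftedRadical p h a X) (hp : p.Prime)
    (hv : IsCenteredOn (p : S) v) : ∃ q, v q ≤ 1 ∧
      X ^ p = (p : S) • (algebraMap S E a - algebraMap S E (h ^ (p - 1)) * X + X ^ 2 * q) := by
  obtain ⟨m, hm1, hm⟩ := hX.exists_pow_eq_smul_add_sum hp
  refine ⟨∑ k ∈ Ioo 1 p, m k • X ^ (k - 2), v.map_sum_le fun k _ => ?_, ?_⟩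
  · rw [Algebra.smul_def, map_mul, map_pow]
    exact mul_le_one' (hv.map_le_one _) (pow_le_one' (hX.map_le_one hp.pos hv) _)
  · have hIoo : Ioo 0 p = insert 1 (Ioo 1 p) := by
      ext k
      have := hp.two_le
      simp only [mem_Ioo, mem_insert]
      omega
    have htail : ∑ k ∈ Ioo 1 p, m k • X ^ k = X ^ 2 * ∑ k ∈ Ioo 1 p, m k • X ^ (k - 2) := by
      rw [mul_sum]
      refine sum_congr rfl fun k hk => ?_
      rw [mul_smul_comm, ← pow_add, Nat.add_sub_cancel' (mem_Ioo.mp hk).1]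
    rw [hm, hIoo, sum_insert (by simp), hm1, htail, pow_one, neg_smul, Algebra.smul_def (h ^ _),
      ← add_assoc, ← sub_eq_add_neg]

theorem map_pow_le (hX : IsShiftedRadical p h a X) (hp : p.Prime) (hv : IsCenteredOn (p : S) v) :
    v X ^ p ≤ v (algebraMap S E p) := by
  obtain ⟨q, hq, hXq⟩ := hX.exists_pow_eq_smul_add_sq_mul hp hv
  have hX1 := hX.map_le_one hp.pos hv
  rw [← map_pow, hXq, Algebra.smul_def, map_mul]
  refine mul_le_of_le_one_right' (v.map_add_le (v.map_sub_le (hv.map_le_one a) ?_) ?_)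
  · rw [map_mul]
    exact mul_le_one' (hv.map_le_one _) hX1
  · rw [map_mul, map_pow]
    exact mul_le_one' (pow_le_one' hX1 2) hq

theorem map_lt_one (hX : IsShiftedRadical p h a X) (hp : p.Prime) (hv : IsCenteredOn (p : S) v) :
    v X < 1 :=
  (pow_lt_one_iff hp.ne_zero).mp ((hX.map_pow_le hp hv).trans_lt hv.map_lt_one)

theorem map_add_algebraMap_eq_one (hX : IsShiftedRadical p h a X) (hp : p.Prime)
    (hv : IsCenteredOn (p : S) v) (hh : ¬(p : S) ∣ h) : v (X + algebraMap S E h) = 1 := by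
  rw [add_comm]
  exact hv.map_add_eq_one hh (hX.map_lt_one hp hv)

theorem exists_pow_eq_smul_add (hX : IsShiftedRadical p h a X) (hp : p.Prime)
    (hv : IsCenteredOn (p : S) v) :
    ∃ ε, v ε < 1 ∧ X ^ p = (p : S) • (algebraMap S E a + ε) := by
  obtain ⟨q, hq, hXq⟩ := hX.exists_pow_eq_smul_add_sq_mul hp hv
  have hX1 := hX.map_lt_one hp hv
  refine ⟨X ^ 2 * q - algebraMap S E (h ^ (p - 1)) * X, v.map_sub_lt ?_ ?_, ?_⟩
  · rw [map_mul, map_pow]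
    exact mul_lt_one_of_lt_of_le (pow_lt_one' hX1 two_ne_zero) hq
  · rw [map_mul]
    exact mul_comm (v X) _ ▸ mul_lt_one_of_lt_of_le hX1 (hv.map_le_one _)
  · rw [hXq]
    congr 1
    ring

theorem map_pow_eq (hX : IsShiftedRadical p h a X) (hp : p.Prime) (hv : IsCenteredOn (p : S) v)
    (ha : ¬(p : S) ∣ a) : v X ^ p = v (algebraMap S E p) := by
  obtain ⟨ε, hε, hXε⟩ := hX.exists_pow_eq_smul_add hp hv
  rw [← map_pow, hXε, Algebra.smul_def, map_mul, hv.map_add_eq_one ha hε, mul_one]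

end IsShiftedRadical

end RadicalValuation

section OrthogonalMonomials

variable {S L E Γ ι : Type*} [CommRing S] [Field L] [Algebra S L] [Field E] [Algebra S E]
  [Algebra L E] [IsScalarTower S L E] [LinearOrderedCommGroupWithZero Γ] {π : S}
  {v : Valuation E Γ} {n : ℕ}

namespace IsCenteredOn

theorem isValuationOrthogonal_slice (hv : IsCenteredOn π v) [NeZero n] {b : S} {t Y ε : E}
    (ht : IsValuationOrthogonal L v fun i : Fin n => t ^ (i : ℕ)) (ht1 : v t = 1) (hb : ¬π ∣ b)
    (hε : v ε < 1) (hY : Y ^ n = π • (algebraMap S E b + ε)) (s : Fin n) :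
    IsValuationOrthogonal L v fun j : Fin n => (t * Y) ^ (j : ℕ) * Y ^ ((s - j : Fin n) : ℕ) := by
  let δ (j : Fin n) : ℕ := if j ≤ s then 0 else 1
  have hexp (j : Fin n) : (j : ℕ) + (s - j : Fin n) = s + n * δ j := by
    unfold δ
    split_ifs with h
    · have := Fin.coe_sub_iff_le.mpr h
      omega
    · have := Fin.coe_sub_iff_lt.mpr (not_le.mp h)
      omega
  have hb1 := hv.map_eq_one hb
  have horth := ((ht.smul_mul (fun j => algebraMap S L (b ^ δ j)) 1).congr_of_map_sub_lt
    (e' := fun j => (algebraMap S E b + ε) ^ δ j * t ^ (j : ℕ)) fun j => ?_).smul_mul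
    (fun j => algebraMap S L (π ^ δ j)) (Y ^ (s : ℕ))
  · convert horth using 2 with j
    rw [mul_pow, mul_assoc, ← pow_add, hexp, pow_add, pow_mul, hY, smul_pow, algebraMap_smul]
    simp only [Algebra.smul_def]
    ring
  · have ht' : v (algebraMap S L (b ^ δ j) • (1 * t ^ (j : ℕ))) = 1 := by
      rw [algebraMap_smul, Algebra.smul_def, one_mul, map_mul, map_pow, map_pow, map_pow, hb1, ht1,
        one_pow, one_pow, mul_one]
    rw [ht', algebraMap_smul, one_mul, Algebra.smul_def, map_pow, ← sub_mul, map_mul, map_pow, ht1,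
      one_pow, mul_one]
    unfold δ
    split_ifs <;> simp [hε]

theorem map_add_div_add_sub_lt_one (hv : IsCenteredOn π v) {a b : S} {ε ε' : E} (hε : v ε < 1)
    (hε' : v ε' < 1) (hb : ¬π ∣ b) : v ((algebraMap S E a + ε) / (algebraMap S E b + ε') -
      algebraMap L E (algebraMap S L a / algebraMap S L b)) < 1 := by
  have hvb := hv.map_add_eq_one hb hε'
  have hb0 : algebraMap S E b ≠ 0 := v.ne_zero_iff.mp (by simp [hv.map_eq_one hb])
  have hbε0 : algebraMap S E b + ε' ≠ 0 := v.ne_zero_iff.mp (by simp [hvb])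
  have hkey : (algebraMap S E a + ε) / (algebraMap S E b + ε') -
      algebraMap L E (algebraMap S L a / algebraMap S L b) =
      (ε - algebraMap L E (algebraMap S L a / algebraMap S L b) * ε') /
        (algebraMap S E b + ε') := by
    rw [map_div₀, ← IsScalarTower.algebraMap_apply, ← IsScalarTower.algebraMap_apply]
    field_simp
    ring
  rw [hkey, map_div₀, hvb, div_one]
  refine v.map_sub_lt hε ?_
  rw [map_mul, map_div₀, map_div₀, ← IsScalarTower.algebraMap_apply,
    ← IsScalarTower.algebraMap_apply, hv.map_eq_one hb, div_one, mul_comm]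
  exact mul_lt_one_of_lt_of_le hε' (hv.map_le_one a)

variable [IsDomain S] [WfDvdMonoid S] [IsFractionRing S L]

theorem isValuationOrthogonal_of_map_eq_pow [Fintype ι] (hv : IsCenteredOn π v) (hπ : Prime π)
    {θ : Γ} {N : ℕ} (hθ : v (algebraMap S E π) = θ ^ N) {e : ι → E} {d : ι → ℕ}
    (he : ∀ i, v (e i) = θ ^ d i) (hd : ∀ i j, d i ≡ d j [MOD N] → i = j) :
    IsValuationOrthogonal L v e := by
  intro c
  refine map_le_map_sum_of_forall_ne fun i j hij h => by_contra fun h0 => hij (hd i j ?_)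
  have hci : c i ≠ 0 := by
    rintro hc
    simp [hc] at h0
  have hcj : c j ≠ 0 := by
    rintro hc
    simp [h, hc] at h0
  simp only [Algebra.smul_def, map_mul, he] at h
  exact hv.modEq_of_map_mul_pow_eq hπ hθ hci hcj h

theorem exists_dvd_pow_mul_sub_of_map_pow_sub_lt_one (hv : IsCenteredOn π v) (hπ : Prime π)
    (hn : n ≠ 0) {a b : S} (hb : ¬π ∣ b) {u : L}
    (h : v (algebraMap L E (u ^ n - algebraMap S L a / algebraMap S L b)) < 1) :
    ∃ c d, ¬π ∣ d ∧ π ∣ d ^ n * a - c ^ n * b := by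
  have hbL : algebraMap S L b ≠ 0 := by
    rw [Ne, FaithfulSMul.algebraMap_eq_zero_iff]
    rintro rfl
    exact hb (dvd_zero π)
  have hab : v (algebraMap L E (algebraMap S L a / algebraMap S L b)) ≤ 1 := by
    rw [map_div₀, map_div₀, ← IsScalarTower.algebraMap_apply, ← IsScalarTower.algebraMap_apply,
      hv.map_eq_one hb, div_one]
    exact hv.map_le_one a
  have hu : v (algebraMap L E u) ≤ 1 := by
    rw [← pow_le_one_iff hn, ← map_pow, ← map_pow]
    simpa using v.map_add_le h.le hab
  obtain ⟨c, d, hd, hcd⟩ := hv.exists_algebraMap_mul_eq_pow_mul hπ (n := 0)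
    (by simpa [mul_comm] using mul_lt_one_of_lt_of_le hv.map_lt_one hu)
  refine ⟨c, d, hd, (hv.map_lt_one_iff _).mp ?_⟩
  have hkey : algebraMap S L (d ^ n * a - c ^ n * b) = -(algebraMap S L (d ^ n * b) *
      (u ^ n - algebraMap S L a / algebraMap S L b)) := by
    rw [pow_zero, one_mul] at hcd
    simp only [map_sub, map_mul, map_pow, ← hcd]
    field_simp
    ring
  rw [IsScalarTower.algebraMap_apply S L E, hkey, map_neg, Valuation.map_neg, map_mul, map_mul,
    mul_comm, ← IsScalarTower.algebraMap_apply]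
  exact mul_lt_one_of_lt_of_le h (hv.map_le_one _)

theorem isValuationOrthogonal_of_slices (hv : IsCenteredOn π v) (hπ : Prime π) [NeZero n] {X Y : E}
    (hX : v X ^ n = v (algebraMap S E π)) (hY : v Y ^ n = v (algebraMap S E π))
    (h : ∀ s : Fin n, IsValuationOrthogonal L v
      fun j : Fin n => X ^ (j : ℕ) * Y ^ ((s - j : Fin n) : ℕ)) :
    IsValuationOrthogonal L v fun i : Fin n × Fin n => X ^ (i.1 : ℕ) * Y ^ (i.2 : ℕ) := by
  have hXY : v X = v Y := (pow_left_inj₀ zero_le zero_le (NeZero.ne n)).mp (hX.trans hY.symm)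
  have horth : IsValuationOrthogonal L v
      fun i : Fin n × Fin n => X ^ (i.2 : ℕ) * Y ^ ((i.1 - i.2 : Fin n) : ℕ) := by
    refine .of_slices h fun c c' i j hij heq => by_contra fun h0 => hij ?_
    have hc : c ≠ 0 := by
      rintro rfl
      simp at h0
    have hc' : c' ≠ 0 := by
      rintro rfl
      simp [heq] at h0
    simp only [Algebra.smul_def, map_mul, map_pow, hXY, ← pow_add] at heq
    have hmod := hv.modEq_of_map_mul_pow_eq hπ hY.symm hc hc' heq
    simpa [Nat.ModEq, ← Fin.val_add, Fin.val_inj] using hmod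
  let σ : Fin n × Fin n ≃ Fin n × Fin n :=
    ⟨fun i => (i.1 + i.2, i.1), fun i => (i.2, i.1 - i.2), fun i => by simp, fun i => by simp⟩
  convert horth.comp_equiv σ using 2 with i
  simp [σ]

theorem isValuationOrthogonal_pow_mul_pow (hv : IsCenteredOn π v) (hπ : Prime π) (hn : n.Prime)
    {a b : S} {X Y ε ε' : E} (hε : v ε < 1) (hX : X ^ n = π • (algebraMap S E a + ε))
    (hε' : v ε' < 1) (hY : Y ^ n = π • (algebraMap S E b + ε')) (hb : ¬π ∣ b)
    (hno : ∀ c d, ¬π ∣ d → ¬π ∣ d ^ n * a - c ^ n * b) :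
    IsValuationOrthogonal L v fun i : Fin n × Fin n => X ^ (i.1 : ℕ) * Y ^ (i.2 : ℕ) := by
  have : NeZero n := ⟨hn.ne_zero⟩
  have ha : ¬π ∣ a := by
    simpa [zero_pow hn.ne_zero] using hno 0 1 fun h => hπ.not_isUnit (isUnit_of_dvd_one h)
  have hva := hv.map_add_eq_one ha hε
  have hvb := hv.map_add_eq_one hb hε'
  have hvX : v X ^ n = v (algebraMap S E π) := by
    rw [← map_pow, hX, Algebra.smul_def, map_mul, hva, mul_one]
  have hvY : v Y ^ n = v (algebraMap S E π) := by
    rw [← map_pow, hY, Algebra.smul_def, map_mul, hvb, mul_one]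
  have hπ0 : algebraMap S E π ≠ 0 := by
    rw [IsScalarTower.algebraMap_apply S L E]
    simpa using hπ.ne_zero
  have hY0 : Y ≠ 0 := by
    rintro rfl
    rw [map_zero, zero_pow hn.ne_zero] at hvY
    exact hπ0 ((Valuation.zero_iff v).mp hvY.symm)
  have ht1 : v (X / Y) = 1 := by
    have hXY : v X = v Y := (pow_left_inj₀ zero_le zero_le hn.ne_zero).mp (hvX.trans hvY.symm)
    rw [map_div₀, hXY, div_self (v.ne_zero_iff.mpr hY0)]
  have htn : (X / Y) ^ n = (algebraMap S E a + ε) / (algebraMap S E b + ε') := by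
    rw [div_pow, hX, hY, Algebra.smul_def, Algebra.smul_def, mul_div_mul_left _ _ hπ0]
  have hα : v ((X / Y) ^ n - algebraMap L E (algebraMap S L a / algebraMap S L b)) < 1 := by
    rw [htn]
    exact hv.map_add_div_add_sub_lt_one hε hε' hb
  refine hv.isValuationOrthogonal_of_slices hπ hvX hvY fun s => ?_
  convert hv.isValuationOrthogonal_slice (isValuationOrthogonal_pow hn ht1.le hα fun u hu => ?_)
    ht1 hb hε' hY s using 4
  · rw [div_mul_cancel₀ X hY0]
  · obtain ⟨c, d, hd, hcd⟩ := hv.exists_dvd_pow_mul_sub_of_map_pow_sub_lt_one hπ hn.ne_zero hb hu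
    exact hno c d hd hcd

end IsCenteredOn

end OrthogonalMonomials

/-! ### Biradical extensions -/

section BiradicalExtension

open Finset Module Polynomial

variable {S L K E Γ : Type*} [CommRing S] [Field L] [Field K] [Algebra S K] [Algebra L K]
  {p : ℕ} {h₁ h₂ a b u w : S} {x y l : K}

theorem adjoin_pair_add_algebraMap_le {R A : Type*} [CommRing R] [CommRing A] [Algebra R A]
    (x y : A) (s t : R) :
    Algebra.adjoin R {x + algebraMap R A s, y + algebraMap R A t} ≤ Algebra.adjoin R {x, y} := by
  refine Algebra.adjoin_le ?_
  rintro z (rfl | rfl)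
  · exact add_mem (Algebra.subset_adjoin (by simp)) (Subalgebra.algebraMap_mem _ s)
  · exact add_mem (Algebra.subset_adjoin (by simp)) (Subalgebra.algebraMap_mem _ t)

theorem adjoin_pair_add_algebraMap {R A : Type*} [CommRing R] [CommRing A] [Algebra R A]
    (x y : A) (s t : R) :
    Algebra.adjoin R {x + algebraMap R A s, y + algebraMap R A t} = Algebra.adjoin R {x, y} := by
  refine (adjoin_pair_add_algebraMap_le x y s t).antisymm ?_
  simpa using adjoin_pair_add_algebraMap_le (x + algebraMap R A s) (y + algebraMap R A t) (-s) (-t)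

theorem gridSpan_pow_mul_pow_le_adjoin (R : Type*) {A : Type*} [CommRing R] [CommRing A]
    [Algebra R A] (n : ℕ) (x y : A) :
    gridSpan R n (fun j k => x ^ j * y ^ k) ≤ Subalgebra.toSubmodule (Algebra.adjoin R {x, y}) := by
  have hx : x ∈ Algebra.adjoin R {x, y} := Algebra.subset_adjoin (by simp)
  have hy : y ∈ Algebra.adjoin R {x, y} := Algebra.subset_adjoin (by simp)
  have hmul (j k : ℕ) : x ^ j * y ^ k ∈ Algebra.adjoin R {x, y} :=
    mul_mem (pow_mem hx j) (pow_mem hy k)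
  exact gridSpan_le.mpr fun j _ k _ => hmul j k

/-- `K` is generated over the fraction field `L` of `S` by two `p`-th roots, recorded through their
shifts `x` and `y`, and `p ^ 2` multiplies the integral closure of `S` in `K` into `S[x, y]`. -/
structure IsBiradical (L : Type*) [Field L] [Algebra L K] (p : ℕ) (h₁ h₂ a b : S) (x y : K) :
    Prop where
  prime : p.Prime
  prime_natCast : Prime (p : S)
  left : IsShiftedRadical p h₁ a x
  right : IsShiftedRadical p h₂ b y
  adjoin_eq_top : Algebra.adjoin L {x, y} = ⊤
  finrank_eq : finrank L K = p ^ 2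
  sq_smul_mem : ∀ z, IsIntegral S z → (p : S) ^ 2 • z ∈ Algebra.adjoin S {x, y}

section

variable [Algebra S L] [IsScalarTower S L K] {f g : S} {ω μ : K}

theorem natDegree_minpoly_le_of_monic {P : S[X]} (hP : P.Monic) (hx : aeval x P = 0) :
    (minpoly L x).natDegree ≤ P.natDegree := by
  rw [← hP.natDegree_map (algebraMap S L)]
  exact natDegree_le_of_dvd (minpoly.dvd L x (by rwa [aeval_map_algebraMap])) (hP.map _).ne_zero

theorem natDegree_minpoly_le_of_pow_eq_algebraMap [Nontrivial S] (hp : p ≠ 0)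
    (hω : ω ^ p = algebraMap S K f) : (minpoly L ω).natDegree ≤ p := by
  simpa only [natDegree_X_pow_sub_C] using
    natDegree_minpoly_le_of_monic (L := L) (monic_X_pow_sub_C f hp) (x := ω) (by simp [hω])

theorem isBiradical_sub_algebraMap [IsDomain S] [IsFractionRing S L] [CharZero L]
    [IsIntegrallyClosed S] (hp : p.Prime) (hpS : Prime (p : S))
    (hf : f = h₁ ^ p + a * p) (hg : g = h₂ ^ p + b * p)
    (hden : ∀ j < p, ∀ k < p, ∀ t : L,
      t ^ p * algebraMap S L (f ^ j * g ^ k) ∈ (algebraMap S L).range → t ∈ (algebraMap S L).range)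
    (hω : ω ^ p = algebraMap S K f) (hμ : μ ^ p = algebraMap S K g)
    (hgen : Algebra.adjoin L {ω, μ} = ⊤) (hdeg : Module.finrank L K = p ^ 2) :
    IsBiradical L p h₁ h₂ a b (ω - algebraMap S K h₁) (μ - algebraMap S K h₂) where
  prime := hp
  prime_natCast := hpS
  left := by rw [IsShiftedRadical, sub_add_cancel, hω, hf]
  right := by rw [IsShiftedRadical, sub_add_cancel, hμ, hg]
  adjoin_eq_top := by
    rw [← hgen, ← adjoin_pair_add_algebraMap (ω - _) (μ - _) (algebraMap S L h₁)
      (algebraMap S L h₂)]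
    simp only [← IsScalarTower.algebraMap_apply, sub_add_cancel]
  finrank_eq := hdeg
  sq_smul_mem z hz := by
    have : FiniteDimensional L K := .of_finrank_pos (hdeg ▸ pow_pos hp.pos 2)
    have hω' : (minpoly L ω).natDegree ≤ p :=
      natDegree_minpoly_le_of_pow_eq_algebraMap hp.ne_zero hω
    have hμ' : (minpoly L μ).natDegree ≤ p :=
      natDegree_minpoly_le_of_pow_eq_algebraMap hp.ne_zero hμ
    have hbasis := gridSpan_pow_mul_pow_eq_top hp.pos hdeg hω' hμ' hgen hgen
    have hmem := sq_mul_mem_gridSpan_of_isIntegral hp.pos hω hμ hgen hdeg hbasis hden hz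
    rw [← adjoin_pair_add_algebraMap _ _ h₁ h₂, sub_add_cancel, sub_add_cancel,
      Algebra.smul_def, map_pow, map_natCast]
    exact gridSpan_pow_mul_pow_le_adjoin S p ω μ hmem

end

namespace IsBiradical

theorem symm (h : IsBiradical L p h₁ h₂ a b x y) : IsBiradical L p h₂ h₁ b a y x where
  prime := h.prime
  prime_natCast := h.prime_natCast
  left := h.right
  right := h.left
  adjoin_eq_top := Set.pair_comm x y ▸ h.adjoin_eq_top
  finrank_eq := h.finrank_eq
  sq_smul_mem := Set.pair_comm x y ▸ h.sq_smul_mem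

theorem finiteDimensional (h : IsBiradical L p h₁ h₂ a b x y) : FiniteDimensional L K :=
  .of_finrank_pos (h.finrank_eq ▸ pow_pos h.prime.pos 2)

theorem isIntegral_of_mem_adjoin [Nontrivial S] (h : IsBiradical L p h₁ h₂ a b x y) {z : K}
    (hz : z ∈ Algebra.adjoin S {x, y}) : IsIntegral S z := by
  have hle : Algebra.adjoin S {x, y} ≤ integralClosure S K := by
    refine Algebra.adjoin_le ?_
    rintro z (rfl | rfl)
    exacts [h.left.isIntegral h.prime.pos, h.right.isIntegral h.prime.pos]
  exact hle hz

theorem adjoin_eq_gridSpan [Nontrivial S] (h : IsBiradical L p h₁ h₂ a b x y) :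
    Subalgebra.toSubmodule (Algebra.adjoin S {x, y}) = gridSpan S p fun j k => x ^ j * y ^ k := by
  obtain ⟨P, hP, hPp, hPx⟩ := h.left.exists_monic_natDegree_eq h.prime.pos
  obtain ⟨Q, hQ, hQp, hQy⟩ := h.right.exists_monic_natDegree_eq h.prime.pos
  exact adjoin_pair_eq_gridSpan hP hQ hPp hQp hPx hQy

variable [Algebra S L] [IsScalarTower S L K]

theorem natDegree_minpoly_left_le [Nontrivial S] (h : IsBiradical L p h₁ h₂ a b x y) :
    (minpoly L x).natDegree ≤ p := by
  obtain ⟨P, hP, hPp, hPx⟩ := h.left.exists_monic_natDegree_eq h.prime.pos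
  exact hPp ▸ natDegree_minpoly_le_of_monic hP hPx

theorem adjoin_linear_eq_top [IsDomain S] [IsFractionRing S L] (h : IsBiradical L p h₁ h₂ a b x y)
    (hu : u ≠ 0) (hl : l = u • x + w • y) : Algebra.adjoin L {l, y} = ⊤ := by
  rw [eq_top_iff, ← h.adjoin_eq_top]
  refine Algebra.adjoin_le ?_
  have hlmem : l ∈ Algebra.adjoin L {l, y} := Algebra.subset_adjoin (by simp)
  have hymem : y ∈ Algebra.adjoin L {l, y} := Algebra.subset_adjoin (by simp)
  rintro z (rfl | rfl)
  · have huL : algebraMap S L u ≠ 0 := by simpa using hu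
    have hz : z = (algebraMap S L u)⁻¹ • (l - algebraMap S L w • y) := by
      rw [hl, algebraMap_smul, add_sub_cancel_right, ← algebraMap_smul L u z, inv_smul_smul₀ huL]
    rw [hz]
    exact Subalgebra.smul_mem _ (sub_mem hlmem (Subalgebra.smul_mem _ hymem _)) _
  · exact hymem

theorem gridSpan_linear_eq_top [IsDomain S] [IsFractionRing S L]
    (h : IsBiradical L p h₁ h₂ a b x y) (hu : u ≠ 0) (hl : l = u • x + w • y) :
    gridSpan L p (fun j k => l ^ j * y ^ k) = ⊤ :=
  have := h.finiteDimensional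
  gridSpan_pow_mul_pow_eq_top h.prime.pos h.finrank_eq h.natDegree_minpoly_left_le
    h.symm.natDegree_minpoly_left_le h.adjoin_eq_top (h.adjoin_linear_eq_top hu hl)

variable [Field E] [Algebra S E] [Algebra L E] [IsScalarTower S L E]

theorem exists_algHom [CharZero L] [IsAlgClosed E] (h : IsBiradical L p h₁ h₂ a b x y) {X Y : E}
    (hX : IsShiftedRadical p h₁ a X) (hY : IsShiftedRadical p h₂ b Y) :
    ∃ φ : K →ₐ[L] E, φ x = X ∧ φ y = Y := by
  have := h.finiteDimensional
  have hgen : Algebra.adjoin L {x + algebraMap S K h₁, y + algebraMap S K h₂} = ⊤ := by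
    rw [← h.adjoin_eq_top, IsScalarTower.algebraMap_apply S L K,
      IsScalarTower.algebraMap_apply S L K, adjoin_pair_add_algebraMap]
  obtain ⟨φ, hφx, hφy⟩ := exists_algHom_of_pow_eq h.prime.pos
    (h.left.trans (IsScalarTower.algebraMap_apply S L K _))
    (h.right.trans (IsScalarTower.algebraMap_apply S L K _)) hgen h.finrank_eq
    (hX.trans (IsScalarTower.algebraMap_apply S L E _))
    (hY.trans (IsScalarTower.algebraMap_apply S L E _))
  have hφ (s : S) : φ (algebraMap S K s) = algebraMap S E s := (φ.restrictScalars S).commutes s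
  rw [map_add, hφ] at hφx hφy
  exact ⟨φ, add_right_cancel hφx, add_right_cancel hφy⟩

variable [LinearOrderedCommGroupWithZero Γ] {v : Valuation E Γ}

theorem hasBirationalMCM_of_gridSpan [IsDomain S] [IsRegularLocalRing S] [IsFractionRing S L]
    (h : IsBiradical L p h₁ h₂ a b x y) (hv : IsCenteredOn (p : S) v) (hu : u ≠ 0)
    (hl : l = u • x + w • y) {F : ℕ → ℕ → K}
    (hF : ∀ j < p, ∀ k < p, F j k ∈ Algebra.adjoin S {x, y})
    (hsat : ∀ z ∈ Algebra.adjoin S {x, y}, ∃ n : ℕ, (p : S) ^ n • z ∈ gridSpan S p F)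
    {Φ : Set (K →ₐ[L] E)} {β : Γ} (hle : ∀ φ ∈ Φ, ∀ j < p, ∀ k < p, v (φ (F j k)) ≤ β)
    {G : ℕ → ℕ → Γ} {n : ℕ → ℕ → ℕ}
    (horth : ∀ c : Fin p × Fin p → L,
      (∀ φ ∈ Φ, v (∑ i, c i • (φ l ^ (i.1 : ℕ) * φ y ^ (i.2 : ℕ))) ≤ β) →
        ∀ i, v (algebraMap L E (c i)) * G i.1 i.2 ≤ β)
    (hG : ∀ j < p, ∀ k < p, β * v (algebraMap S E p) < v (algebraMap S E p) ^ n j k * G j k)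
    (hmem : ∀ j < p, ∀ k < p, (p : S) ^ n j k • (l ^ j * y ^ k) ∈ gridSpan S p F) :
    HasBirationalMCM S K := by
  have := h.finiteDimensional
  refine hasBirationalMCM_of_isLocalBall (L := L) hv h.prime_natCast
    (F := fun i : Fin p × Fin p => F i.1 i.2) (by simp [h.finrank_eq, sq])
    (fun i => h.isIntegral_of_mem_adjoin (hF i.1 i.1.2 i.2 i.2.2)) (fun z hz => ?_)
    (isLocalBall_of_forall_map_mul_le (Φ := Φ) hv h.prime_natCast (fun φ hφ m hm => ?_)
      (h.gridSpan_linear_eq_top hu hl)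
      (G := fun i : Fin p × Fin p => G i.1 i.2) (n := fun i => n i.1 i.2)
      (by simpa only [map_mul, map_pow] using horth) (fun i => hG i.1 i.1.2 i.2 i.2.2)
      (fun i => hmem i.1 i.1.2 i.2 i.2.2))
  · obtain ⟨n, hn⟩ := hsat _ (h.sq_smul_mem z hz)
    exact ⟨n + 2, by rwa [pow_add, mul_smul]⟩
  · induction hm using Submodule.span_induction with
    | mem m hm =>
      obtain ⟨i, rfl⟩ := hm
      exact hle φ hφ i.1 i.1.2 i.2 i.2.2
    | zero => simp
    | add m m' _ _ hm hm' => simpa using v.map_add_le hm hm'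
    | smul s m _ hm => exact (map_algHom_smul_le hv φ s m).trans hm

end IsBiradical

end BiradicalExtension

section TotallyRamified

open Finset Module

theorem pow_mul_pow_lt_of_pow_succ_le_pow {Γ : Type*} [LinearOrderedCommGroupWithZero Γ] {γ δ : Γ}
    {p j k : ℕ} (hγ0 : 0 < γ) (hγ1 : γ < 1) (h : γ ^ (p + 1) ≤ δ ^ p) (hj : j < p) (hk : k < p) :
    γ ^ (p - 1) * γ ^ p < (γ ^ p) ^ (if j + k < p - 1 then 1 else 0) * (δ ^ j * γ ^ k) := by
  obtain ⟨q, rfl⟩ : ∃ q, p = q + 1 := ⟨p - 1, by omega⟩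
  rw [Nat.add_sub_cancel]
  refine lt_of_pow_lt_pow_left₀ (q + 1) zero_le ?_
  generalize hn : (if j + k < q then 1 else 0) = n
  have hexp : (q + 1) * ((q + 1) * n) + ((q + 2) * j + (q + 1) * k) < (q + 1) * (2 * q + 1) := by
    subst hn
    split_ifs <;> nlinarith
  calc (γ ^ q * γ ^ (q + 1)) ^ (q + 1)
      = γ ^ ((q + 1) * (2 * q + 1)) := by
        rw [← pow_add, ← pow_mul]
        ring_nf
    _ < γ ^ ((q + 1) * ((q + 1) * n) + ((q + 2) * j + (q + 1) * k)) :=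
        (pow_lt_pow_iff_right_of_lt_one₀ hγ0 hγ1).mpr hexp
    _ = γ ^ ((q + 1) * ((q + 1) * n)) * ((γ ^ (q + 1 + 1)) ^ j * γ ^ ((q + 1) * k)) := by
        rw [pow_add, pow_add, pow_mul _ (q + 2)]
    _ ≤ γ ^ ((q + 1) * ((q + 1) * n)) * ((δ ^ (q + 1)) ^ j * γ ^ ((q + 1) * k)) := by gcongr
    _ = ((γ ^ (q + 1)) ^ n * (δ ^ j * γ ^ k)) ^ (q + 1) := by
        simp only [mul_pow, ← pow_mul, mul_comm (q + 1), mul_assoc, mul_left_comm]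

variable {S L K E Γ : Type*} [CommRing S] [Field L] [Field K] [Algebra S K] [Algebra L K]
  {p : ℕ} {h₁ h₂ a b u w : S} {x y l : K}

namespace IsBiradical

theorem exists_left_pow_eq_smul [CharZero K] (h : IsBiradical L p h₁ h₂ a b x y) :
    ∃ x' ∈ Algebra.adjoin S {x, y}, x ^ p = (p : S) • x' :=
  let ⟨m, _, hm⟩ := h.left.exists_pow_eq_smul_add_sum h.prime
  ⟨_, algebraMap_add_sum_smul_pow_mem_adjoin (Algebra.subset_adjoin (by simp)) a m _, hm⟩

theorem linear_mem_adjoin (hl : l = u • x + w • y) : l ∈ Algebra.adjoin S {x, y} :=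
  hl ▸ add_mem (Subalgebra.smul_mem _ (Algebra.subset_adjoin (by simp)) u)
    (Subalgebra.smul_mem _ (Algebra.subset_adjoin (by simp)) w)

theorem smul_linear_pow_mul_pow_mem_gridSpan_idealPowGrid [Nontrivial S] [CharZero K]
    (h : IsBiradical L p h₁ h₂ a b x y) (hl : l = u • x + w • y) (j k : ℕ) :
    (p : S) ^ (if j + k < p - 1 then 1 else 0) • (l ^ j * y ^ k) ∈
      gridSpan S p (idealPowGrid (p : S) p x y) := by
  split_ifs with hjk
  · have hyA : y ∈ Algebra.adjoin S {x, y} := Algebra.subset_adjoin (by simp)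
    simpa using smul_mem_gridSpan_idealPowGrid h.adjoin_eq_gridSpan
      (mul_mem (pow_mem (linear_mem_adjoin hl) j) (pow_mem hyA k))
  · obtain ⟨x', hx', hxp⟩ := h.exists_left_pow_eq_smul
    obtain ⟨y', hy', hyp⟩ := h.symm.exists_left_pow_eq_smul
    rw [Set.pair_comm] at hy'
    rw [pow_zero, one_smul, ← one_mul (l ^ j * y ^ k)]
    refine mul_pow_mul_pow_mem_of_forall_mul_mem hl (fun i i' hi => ?_) (N := j + k) rfl
    rw [one_mul]
    exact pow_mul_pow_mem_gridSpan_idealPowGrid h.adjoin_eq_gridSpan hx' hy' hxp hyp (by omega)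

variable [IsDomain S] [IsRegularLocalRing S] [CharZero L] [Algebra S L] [IsFractionRing S L]
  [IsScalarTower S L K] [Field E] [Algebra S E] [Algebra L E] [IsScalarTower S L E]
  [LinearOrderedCommGroupWithZero Γ] {v : Valuation E Γ}

theorem hasBirationalMCM_of_isValuationOrthogonal (h : IsBiradical L p h₁ h₂ a b x y)
    (hv : IsCenteredOn (p : S) v) (φ : K →ₐ[L] E) (hu : u ≠ 0) (hl : l = u • x + w • y)
    (hxy : v (φ x) = v (φ y)) (hy : v (φ y) ^ p = v (algebraMap S E p))
    (hvl : v (φ y) ^ (p + 1) ≤ v (φ l) ^ p)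
    (horth : IsValuationOrthogonal L v
      fun i : Fin p × Fin p => φ l ^ (i.1 : ℕ) * φ y ^ (i.2 : ℕ)) :
    HasBirationalMCM S K := by
  have : CharZero K := charZero_of_injective_algebraMap (algebraMap L K).injective
  have : CharZero E := charZero_of_injective_algebraMap (algebraMap L E).injective
  have hxA : x ∈ Algebra.adjoin S {x, y} := Algebra.subset_adjoin (by simp)
  have hyA : y ∈ Algebra.adjoin S {x, y} := Algebra.subset_adjoin (by simp)
  have hy1 : v (φ y) < 1 := (pow_lt_one_iff h.prime.ne_zero).mp (hy ▸ hv.map_lt_one)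
  have hy0 : 0 < v (φ y) := (pow_pos_iff h.prime.ne_zero).mp
    (hy ▸ map_algebraMap_natCast_pos h.prime.ne_zero)
  refine h.hasBirationalMCM_of_gridSpan hv hu hl (F := idealPowGrid (p : S) p x y) (Φ := {φ})
    (β := v (φ y) ^ (p - 1)) (G := fun j k => v (φ l) ^ j * v (φ y) ^ k)
    (n := fun j k => if j + k < p - 1 then 1 else 0)
    (fun j _ k _ => Subalgebra.smul_mem _ (mul_mem (pow_mem hxA j) (pow_mem hyA k)) _)
    (fun z hz => ⟨1, by simpa using smul_mem_gridSpan_idealPowGrid h.adjoin_eq_gridSpan hz⟩)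
    ?_ (fun c hc i => ?_) (fun j hj k hk => ?_)
    (fun j _ k _ => h.smul_linear_pow_mul_pow_mem_gridSpan_idealPowGrid hl j k)
  · simp only [Set.mem_singleton_iff, forall_eq]
    rintro j - k -
    have hφ : φ (algebraMap S K p) = algebraMap S E p := (φ.restrictScalars S).commutes _
    simp only [idealPowGrid, Algebra.smul_def, map_mul, map_pow, hφ, hxy]
    rw [← hy, ← pow_add, ← pow_mul, ← pow_add]
    refine pow_le_pow_right_of_le_one' hy1.le ?_
    split_ifs <;> omega
  · simpa [Algebra.smul_def] using (horth c i).trans (hc φ rfl)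
  · rw [← hy]
    exact pow_mul_pow_lt_of_pow_succ_le_pow hy0 hy1 hvl hj hk

theorem hasBirationalMCM_of_forall_not_dvd (h : IsBiradical L p h₁ h₂ a b x y)
    (hv : IsCenteredOn (p : S) v) (φ : K →ₐ[L] E) (hb : ¬(p : S) ∣ b)
    (hno : ∀ c d, ¬(p : S) ∣ d → ¬(p : S) ∣ d ^ p * a - c ^ p * b) : HasBirationalMCM S K := by
  have : CharZero E := charZero_of_injective_algebraMap (algebraMap L E).injective
  have ha : ¬(p : S) ∣ a := by
    simpa [zero_pow h.prime.ne_zero] using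
      hno 0 1 fun h1 => h.prime_natCast.not_isUnit (isUnit_of_dvd_one h1)
  have hX := h.left.map (φ.restrictScalars S)
  have hY := h.right.map (φ.restrictScalars S)
  obtain ⟨ε, hε, hXε⟩ := hX.exists_pow_eq_smul_add h.prime hv
  obtain ⟨ε', hε', hYε'⟩ := hY.exists_pow_eq_smul_add h.prime hv
  have hvY : v (φ y) ^ p = v (algebraMap S E p) := hY.map_pow_eq h.prime hv hb
  have hxy : v (φ x) = v (φ y) := (pow_left_inj₀ zero_le zero_le h.prime.ne_zero).mp
    ((hX.map_pow_eq h.prime hv ha).trans hvY.symm)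
  refine h.hasBirationalMCM_of_isValuationOrthogonal hv φ one_ne_zero (w := 0) (l := x) (by simp)
    hxy hvY ?_ (hv.isValuationOrthogonal_pow_mul_pow h.prime_natCast h.prime hε hXε hε' hYε' hb hno)
  rw [hxy]
  exact pow_le_pow_right_of_le_one' (hY.map_lt_one h.prime hv).le (Nat.le_succ p)

end IsBiradical

end TotallyRamified

section LinearCombination

variable {S E Γ : Type*} [CommRing S] [Field E] [Algebra S E]
  [LinearOrderedCommGroupWithZero Γ] {v : Valuation E Γ} {p : ℕ} {h₁ h₂ a b c d : S} {X Y : E}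

theorem exists_sub_pow_prime_eq (hp : p.Prime) (hp2 : p ≠ 2) (hX : v X ≤ 1) (hY : v Y ≤ 1) :
    ∃ q, v q ≤ 1 ∧ (X - Y) ^ p = X ^ p - Y ^ p - p * (X * Y * q) := by
  obtain ⟨q, hq⟩ := exists_add_pow_prime_eq hp (⟨X, hX⟩ : v.integer) (-⟨Y, hY⟩)
  refine ⟨q, q.2, ?_⟩
  have hqE := congrArg (fun t : v.integer => (t : E)) hq
  rw [(hp.odd_of_ne_two hp2).neg_pow] at hqE
  push_cast at hqE
  linear_combination hqE

theorem IsCenteredOn.map_smul_sub_smul_eq (hv : IsCenteredOn (p : S) v) (hp : p ≠ 0)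
    (hpS : Prime (p : S)) (hc : ¬(p : S) ∣ c) (hd : ¬(p : S) ∣ d)
    (hne : ¬(p : S) ∣ (d * h₁) ^ (p - 1) - (c * h₂) ^ (p - 1)) (hlt : v (d • X - c • Y) < v Y) :
    v ((c ^ p * h₂ ^ (p - 1)) • Y - (d ^ p * h₁ ^ (p - 1)) • X) = v Y := by
  set s := d * c * ((d * h₁) ^ (p - 1) - (c * h₂) ^ (p - 1))
  have hs : v (s • Y) = v Y := by
    rw [Algebra.smul_def, map_mul, hv.map_eq_one (hpS.not_dvd_mul (hpS.not_dvd_mul hd hc) hne),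
      one_mul]
  have hcomb : d • ((c ^ p * h₂ ^ (p - 1)) • Y - (d ^ p * h₁ ^ (p - 1)) • X) =
      -((d ^ p * h₁ ^ (p - 1)) • (d • X - c • Y)) - s • Y := by
    obtain ⟨n, rfl⟩ : ∃ n, p = n + 1 := ⟨p - 1, by omega⟩
    simp only [s, Nat.add_sub_cancel, Algebra.smul_def, map_sub, map_mul, map_pow]
    ring
  calc v ((c ^ p * h₂ ^ (p - 1)) • Y - (d ^ p * h₁ ^ (p - 1)) • X)
      = v (d • ((c ^ p * h₂ ^ (p - 1)) • Y - (d ^ p * h₁ ^ (p - 1)) • X)) := by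
        rw [Algebra.smul_def d, map_mul, hv.map_eq_one hd, one_mul]
    _ = v Y := by
        rw [hcomb, v.map_sub_eq_of_lt_right, hs]
        rw [Valuation.map_neg, hs]
        exact (hv.map_smul_le _ _).trans_lt hlt

namespace IsShiftedRadical

variable [Nontrivial S] [CharZero E]

theorem exists_smul_sub_smul_pow_eq (hX : IsShiftedRadical p h₁ a X)
    (hY : IsShiftedRadical p h₂ b Y) (hp : p.Prime) (hp2 : p ≠ 2) (hv : IsCenteredOn (p : S) v)
    (hXY : v X = v Y) (hpY : v (algebraMap S E p) ≤ v Y ^ 2)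
    (hcd : (p : S) ∣ d ^ p * a - c ^ p * b) :
    ∃ r, v r ≤ v Y ^ 2 ∧ (d • X - c • Y) ^ p =
      (p : S) • ((c ^ p * h₂ ^ (p - 1)) • Y - (d ^ p * h₁ ^ (p - 1)) • X + r) := by
  obtain ⟨q, hq, hXq⟩ := hX.exists_pow_eq_smul_add_sq_mul hp hv
  obtain ⟨q', hq', hYq'⟩ := hY.exists_pow_eq_smul_add_sq_mul hp hv
  obtain ⟨r, hr, hr'⟩ := exists_sub_pow_prime_eq hp hp2
    ((hv.map_smul_le d X).trans (hX.map_le_one hp.pos hv))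
    ((hv.map_smul_le c Y).trans (hY.map_le_one hp.pos hv))
  refine ⟨algebraMap S E (d ^ p * a - c ^ p * b) + d ^ p • (X ^ 2 * q) - c ^ p • (Y ^ 2 * q') -
    d • X * c • Y * r, v.map_sub_le (v.map_sub_le (v.map_add_le ?_ ?_) ?_) ?_, ?_⟩
  · refine le_trans ?_ hpY
    exact pow_one (v (algebraMap S E p)) ▸ hv.map_le_map_pow_of_dvd ((pow_one (p : S)).symm ▸ hcd)
  · refine (hv.map_smul_le _ _).trans ?_
    rw [map_mul, map_pow, hXY]
    exact mul_le_of_le_one_right' hq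
  · refine (hv.map_smul_le _ _).trans ?_
    rw [map_mul, map_pow]
    exact mul_le_of_le_one_right' hq'
  · rw [map_mul, map_mul, pow_two]
    exact (mul_le_of_le_one_right' hr).trans
      (mul_le_mul' ((hv.map_smul_le d X).trans hXY.le) (hv.map_smul_le c Y))
  · rw [hr', smul_pow, smul_pow, hXq, hYq']
    simp only [Algebra.smul_def, map_natCast, map_sub, map_mul, map_pow]
    ring

-- `d • X - c • Y` has larger valuation than `X` and `Y`, and its valuation is read off the linear
-- terms of `X ^ p` and `Y ^ p`.
theorem map_smul_sub_smul_pow_eq (hX : IsShiftedRadical p h₁ a X) (hY : IsShiftedRadical p h₂ b Y)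
    (hp : p.Prime) (hp2 : p ≠ 2) (hpS : Prime (p : S)) (hv : IsCenteredOn (p : S) v)
    (hXY : v X = v Y) (hYp : v Y ^ p = v (algebraMap S E p)) (hc : ¬(p : S) ∣ c) (hd : ¬(p : S) ∣ d)
    (hcd : (p : S) ∣ d ^ p * a - c ^ p * b)
    (hne : ¬(p : S) ∣ (d * h₁) ^ (p - 1) - (c * h₂) ^ (p - 1)) :
    v (d • X - c • Y) ^ p = v Y ^ (p + 1) := by
  have hY1 := hY.map_lt_one hp hv
  have hY0 : 0 < v Y := (pow_pos_iff hp.ne_zero).mp (hYp ▸ map_algebraMap_natCast_pos hp.ne_zero)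
  obtain ⟨r, hr, hpow⟩ := hX.exists_smul_sub_smul_pow_eq hY hp hp2 hv hXY
    (hYp ▸ pow_le_pow_right_of_le_one' hY1.le hp.two_le) hcd
  have hr_lt : v r < v Y := hr.trans_lt <| by
    simpa using (pow_lt_pow_iff_right_of_lt_one₀ hY0 hY1).mpr one_lt_two
  replace hpow := congrArg v hpow
  rw [map_pow, Algebra.smul_def (p : S), map_mul, ← hYp] at hpow
  have hlt : v (d • X - c • Y) < v Y := by
    refine lt_of_pow_lt_pow_left₀ p zero_le ?_
    rw [hpow]
    refine mul_lt_of_lt_one_right (pow_pos hY0 p) (lt_of_le_of_lt ?_ hY1)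
    exact v.map_add_le (v.map_sub_le (hv.map_smul_le _ _) ((hv.map_smul_le _ _).trans hXY.le))
      hr_lt.le
  have hlinear := hv.map_smul_sub_smul_eq hp.ne_zero hpS hc hd hne hlt
  rw [hpow, v.map_add_eq_of_lt_left (hlinear ▸ hr_lt), hlinear, pow_succ]

end IsShiftedRadical

end LinearCombination

theorem eq_of_modEq_sq {p : ℕ} (i i' : Fin p × Fin p)
    (h : (p + 1) * (i.1 : ℕ) + p * i.2 ≡ (p + 1) * i'.1 + p * i'.2 [MOD p ^ 2]) : i = i' := by
  have hp : p ≠ 0 := by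
    rintro rfl
    exact i.1.elim0
  have h₁ : i.1 = i'.1 := by
    have hmod := (h.of_dvd (dvd_pow_self p two_ne_zero))
    refine Fin.ext (Nat.ModEq.eq_of_lt_of_lt (m := p) ?_ i.1.2 i'.1.2)
    simpa [Nat.ModEq, Nat.add_mod, add_mul] using hmod
  have h₂ : i.2 = i'.2 := by
    rw [h₁, pow_two] at h
    exact Fin.ext (Nat.ModEq.eq_of_lt_of_lt
      ((Nat.ModEq.add_left_cancel' _ h).mul_left_cancel' hp) i.2.2 i'.2.2)
  exact Prod.ext h₁ h₂

namespace IsBiradical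

variable {S L K E Γ : Type*} [CommRing S] [Field L] [Field K] [Algebra S K] [Algebra L K]
  {p : ℕ} {h₁ h₂ a b c d : S} {x y : K} [IsDomain S] [IsRegularLocalRing S] [CharZero L]
  [Algebra S L] [IsFractionRing S L] [IsScalarTower S L K] [Field E] [IsAlgClosed E] [Algebra S E]
  [Algebra L E] [IsScalarTower S L E] [LinearOrderedCommGroupWithZero Γ] {v : Valuation E Γ}

theorem hasBirationalMCM_of_dvd_pow_mul_sub (h : IsBiradical L p h₁ h₂ a b x y) (hp2 : p ≠ 2)
    (hv : IsCenteredOn (p : S) v) (φ : K →ₐ[L] E) (ha : ¬(p : S) ∣ a) (hb : ¬(p : S) ∣ b)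
    (hc : ¬(p : S) ∣ c) (hd : ¬(p : S) ∣ d) (hcd : (p : S) ∣ d ^ p * a - c ^ p * b)
    (hne : ¬(p : S) ∣ (d * h₁) ^ (p - 1) - (c * h₂) ^ (p - 1)) : HasBirationalMCM S K := by
  have : CharZero E := charZero_of_injective_algebraMap (algebraMap L E).injective
  have hp0 := h.prime.ne_zero
  have hX := h.left.map (φ.restrictScalars S)
  have hY := h.right.map (φ.restrictScalars S)
  have hvY : v (φ y) ^ p = v (algebraMap S E p) := hY.map_pow_eq h.prime hv hb
  have hxy : v (φ x) = v (φ y) := (pow_left_inj₀ zero_le zero_le hp0).mp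
    ((hX.map_pow_eq h.prime hv ha).trans hvY.symm)
  have hφl : φ (d • x + -c • y) = d • φ x - c • φ y := by
    rw [neg_smul, ← sub_eq_add_neg, map_sub]
    exact congrArg₂ _ (map_smul (φ.restrictScalars S) d x) (map_smul (φ.restrictScalars S) c y)
  have hvl : v (φ (d • x + -c • y)) ^ p = v (φ y) ^ (p + 1) := hφl ▸
    hX.map_smul_sub_smul_pow_eq hY h.prime hp2 h.prime_natCast hv hxy hvY hc hd hcd hne
  obtain ⟨ρ, hρ⟩ := IsAlgClosed.exists_pow_nat_eq (algebraMap S E p) (pow_pos h.prime.pos 2)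
  have hθ : v (algebraMap S E p) = v ρ ^ p ^ 2 := by rw [← hρ, map_pow]
  have hθy : v (φ y) = v ρ ^ p := by
    refine (pow_left_inj₀ zero_le zero_le hp0).mp ?_
    rw [hvY, hθ, ← pow_mul, pow_two]
  have hθl : v (φ (d • x + -c • y)) = v ρ ^ (p + 1) := by
    refine (pow_left_inj₀ zero_le zero_le hp0).mp ?_
    rw [hvl, hθy, ← pow_mul, ← pow_mul, mul_comm]
  refine h.hasBirationalMCM_of_isValuationOrthogonal hv φ (by rintro rfl; simp at hd) rfl
    hxy hvY hvl.ge (hv.isValuationOrthogonal_of_map_eq_pow h.prime_natCast hθ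
      (d := fun i => (p + 1) * i.1 + p * i.2) (fun i => ?_) eq_of_modEq_sq)
  rw [map_mul, map_pow, map_pow, hθl, hθy, ← pow_mul, ← pow_mul, ← pow_add]

end IsBiradical

/-! ### Roots of unity -/

section RootsOfUnity

open Finset Polynomial

variable {E Γ : Type*} [Field E] [LinearOrderedCommGroupWithZero Γ] {v : Valuation E Γ} {p : ℕ}
  {ζ η η' : E}

theorem map_eq_one_of_pow_eq_one (hp : p ≠ 0) (hη : η ^ p = 1) : v η = 1 :=
  (pow_eq_one_iff_of_nonneg zero_le hp).mp (by rw [← map_pow, hη, map_one])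

theorem map_rootOfUnity_sub_eq (hp : p.Prime) (hζ : IsPrimitiveRoot ζ p) (hη : η ^ p = 1)
    (hη' : η' ^ p = 1) (hne : η ≠ η') : v (η - η') = v (ζ - 1) := by
  have lift {ε : E} (hε : ε ^ p = 1) : ∃ ε' : v.integer, (ε' : E) = ε ∧ ε' ^ p = 1 :=
    ⟨⟨ε, (map_eq_one_of_pow_eq_one hp.ne_zero hε).le⟩, rfl, Subtype.ext hε⟩
  obtain ⟨ζ, rfl, -⟩ := lift hζ.pow_eq_one
  obtain ⟨η, rfl, hηp⟩ := lift hη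
  obtain ⟨η', rfl, hη'p⟩ := lift hη'
  have hζ' : IsPrimitiveRoot ζ p := hζ.of_map_of_injective (f := v.integer.subtype)
    Subtype.coe_injective
  obtain ⟨u, hu⟩ := hζ'.nthRootsFinset_pairwise_associated_sub_one_sub_of_prime hp
    ((mem_nthRootsFinset hp.pos _).mpr hηp) ((mem_nthRootsFinset hp.pos _).mpr hη'p)
    (fun h => hne (congrArg _ h))
  have hvu : v (u : v.integer) = 1 := (Valuation.integer.integers v).one_of_isUnit u.isUnit
  have huE : (ζ - 1 : E) * (u : v.integer) = η - η' := congrArg Subtype.val hu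
  rw [← huE, map_mul, hvu, mul_one]

theorem map_primitiveRoot_sub_one_pow (hp : p.Prime) (hζ : IsPrimitiveRoot ζ p) :
    v (ζ - 1) ^ (p - 1) = v (p : E) := by
  obtain ⟨n, rfl⟩ : ∃ n, p = n + 1 := ⟨p - 1, by have := hp.pos; omega⟩
  have hprod : ((n + 1 : ℕ) : E) = ∏ k ∈ range n, (1 - ζ ^ (k + 1)) := by
    rw [hζ.prod_one_sub_pow_eq_order, Nat.cast_add_one]
  rw [hprod, map_prod, Nat.add_sub_cancel, ← card_range n, ← prod_const, card_range]
  refine prod_congr rfl fun k hk => (map_rootOfUnity_sub_eq hp hζ (one_pow _) ?_ ?_).symm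
  · rw [← pow_mul, mul_comm, pow_mul, hζ.pow_eq_one, one_pow]
  · exact (hζ.pow_ne_one_of_pos_of_lt k.succ_ne_zero
      (Nat.succ_lt_succ (mem_range.mp hk))).symm

theorem exists_map_mul_sub_lt (hp : 0 < p) (hζ : IsPrimitiveRoot ζ p) {w h : E} {δ : Γ}
    (hlt : v (w ^ p - h ^ p) < δ ^ p) : ∃ ε, ε ^ p = 1 ∧ v (ε * w - h) < δ := by
  by_contra! hcon
  have hδ : δ ^ p = ∏ _ε ∈ nthRootsFinset p (1 : E), δ := by
    rw [prod_const, hζ.card_nthRootsFinset]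
  rw [Valuation.map_sub_swap, hζ.pow_sub_pow_eq_prod_sub_mul _ _ hp, map_prod, hδ] at hlt
  refine hlt.not_ge (prod_le_prod' fun ε hε => ?_)
  rw [Valuation.map_sub_swap]
  exact hcon ε ((mem_nthRootsFinset hp _).mp hε)

end RootsOfUnity

section Conjugates

variable {S E Γ : Type*} [CommRing S] [Field E] [Algebra S E] [LinearOrderedCommGroupWithZero Γ]
  {v : Valuation E Γ} {p : ℕ} {h a : S} {X ζ η η' : E}

namespace IsShiftedRadical

theorem mul_sub (hX : IsShiftedRadical p h a X) (hη : η ^ p = 1) :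
    IsShiftedRadical p h a (η * (X + algebraMap S E h) - algebraMap S E h) := by
  rw [IsShiftedRadical, sub_add_cancel, mul_pow, hη, one_mul, hX]

theorem exists_map_lt (hX : IsShiftedRadical p h a X) (hp : p.Prime)
    (hζ : IsPrimitiveRoot ζ p) {δ : Γ} (hlt : v (algebraMap S E (a * p)) < δ ^ p) :
    ∃ X', IsShiftedRadical p h a X' ∧ v X' < δ := by
  obtain ⟨ε, hε, hlt⟩ := exists_map_mul_sub_lt (v := v) (w := X + algebraMap S E h)
    (h := algebraMap S E h) (δ := δ) hp.pos hζ (by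
      rwa [hX, map_add, map_pow, add_sub_cancel_left])
  exact ⟨_, hX.mul_sub hε, hlt⟩

end IsShiftedRadical

theorem map_conjugate_le (hp : p.Prime) (hζ : IsPrimitiveRoot ζ p) (hh : v (algebraMap S E h) ≤ 1)
    (hX : v X ≤ v (ζ - 1)) (hη : η ^ p = 1) :
    v (η * (X + algebraMap S E h) - algebraMap S E h) ≤ v (ζ - 1) := by
  have hsplit : η * (X + algebraMap S E h) - algebraMap S E h =
      η * X + (η - 1) * algebraMap S E h := by ring
  have hη1 : v (η - 1) ≤ v (ζ - 1) := by
    rcases eq_or_ne η 1 with rfl | hne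
    · simp
    · exact (map_rootOfUnity_sub_eq hp hζ hη (one_pow p) hne).le
  rw [hsplit]
  refine v.map_add_le ?_ ?_
  · rwa [map_mul, map_eq_one_of_pow_eq_one hp.ne_zero hη, one_mul]
  · rw [map_mul]
    exact (mul_le_of_le_one_right' hh).trans hη1

theorem map_conjugate_sub_conjugate (hp : p.Prime) (hζ : IsPrimitiveRoot ζ p)
    (hX : v (X + algebraMap S E h) = 1) (hη : η ^ p = 1) (hη' : η' ^ p = 1) (hne : η ≠ η') :
    v (η * (X + algebraMap S E h) - algebraMap S E h -
      (η' * (X + algebraMap S E h) - algebraMap S E h)) = v (ζ - 1) := by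
  rw [sub_sub_sub_cancel_right, ← sub_mul, map_mul, hX, mul_one,
    map_rootOfUnity_sub_eq hp hζ hη hη' hne]

end Conjugates

section Vandermonde

variable {E Γ : Type*} [Field E] [LinearOrderedCommGroupWithZero Γ] {v : Valuation E Γ} {n : ℕ}
  {π : E} {X Y : Fin n → E} {β : Γ}

theorem map_coeff_mul_pow_le_of_forall_map_sum_pow_le (hπ : π ≠ 0) (hX : ∀ s, v (X s) ≤ v π)
    (hXX : ∀ s s', s ≠ s' → v (X s - X s') = v π) {c : Fin n → E}
    (h : ∀ s, v (∑ j : Fin n, c j * X s ^ (j : ℕ)) ≤ β) (j : Fin n) :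
    v (c j) * v π ^ (j : ℕ) ≤ β := by
  have hvπ : 0 < v π := v.pos_iff.mpr hπ
  rw [← map_pow, ← map_mul]
  refine map_coeff_le_of_forall_map_sum_pow_le (z := fun s => X s / π)
    (c := fun j => c j * π ^ (j : ℕ)) (fun s => ?_) (fun s s' hs => ?_) (fun s => ?_) j
  · rw [map_div₀]
    exact div_le_one_of_le₀ (hX s) zero_le
  · rw [← sub_div, map_div₀, hXX s s' hs, div_self hvπ.ne']
  · refine (congrArg v (Finset.sum_congr rfl fun j _ => ?_)).trans_le (h s)
    rw [mul_assoc, ← mul_pow, mul_div_cancel₀ _ hπ]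

theorem map_coeff_mul_pow_le_of_forall_map_sum_pow_mul_pow_le (hπ : π ≠ 0)
    (hX : ∀ s, v (X s) ≤ v π) (hXX : ∀ s s', s ≠ s' → v (X s - X s') = v π)
    (hY : ∀ s, v (Y s) ≤ v π) (hYY : ∀ s s', s ≠ s' → v (Y s - Y s') = v π)
    {c : Fin n × Fin n → E}
    (h : ∀ s t, v (∑ i, c i * (X s ^ (i.1 : ℕ) * Y t ^ (i.2 : ℕ))) ≤ β) (i : Fin n × Fin n) :
    v (c i) * v π ^ ((i.1 : ℕ) + i.2) ≤ β := by
  have hslice (t : Fin n) :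
      v (∑ k, c (i.1, k) * π ^ (i.1 : ℕ) * Y t ^ (k : ℕ)) ≤ β := by
    have hj := map_coeff_mul_pow_le_of_forall_map_sum_pow_le (β := β) hπ hX hXX
      (c := fun j => ∑ k, c (j, k) * Y t ^ (k : ℕ)) (fun s => ?_) i.1
    · rw [← map_pow, ← map_mul, Finset.sum_mul] at hj
      simpa only [mul_right_comm] using hj
    · refine (congrArg v ?_).trans_le (h s t)
      rw [Fintype.sum_prod_type]
      refine Finset.sum_congr rfl fun j _ => ?_
      rw [Finset.sum_mul]
      exact Finset.sum_congr rfl fun k _ => by ring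
  have hi := map_coeff_mul_pow_le_of_forall_map_sum_pow_le hπ hY hYY hslice i.2
  rwa [map_mul, map_pow, mul_assoc, ← pow_add] at hi

end Vandermonde

/-! ### The doubly inseparable case -/

section RootFamily

variable {S E Γ : Type*} [CommRing S] [Field E] [Algebra S E]
  [LinearOrderedCommGroupWithZero Γ] {v : Valuation E Γ} {p : ℕ} {h a : S} {X ζ : E}

theorem map_primitiveRoot_sub_one_pow_eq (hp : p.Prime) (hζ : IsPrimitiveRoot ζ p) :
    v (algebraMap S E p) = v (ζ - 1) ^ (p - 1) := by
  rw [map_primitiveRoot_sub_one_pow hp hζ, _root_.map_natCast (algebraMap S E)]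

theorem map_primitiveRoot_sub_one_pos (hp : p.Prime) (hζ : IsPrimitiveRoot ζ p) : 0 < v (ζ - 1) :=
  v.pos_iff.mpr (hζ.sub_one_ne_zero hp.one_lt)

theorem IsCenteredOn.map_primitiveRoot_sub_one_lt_one (hv : IsCenteredOn (p : S) v) (hp : p.Prime)
    (hζ : IsPrimitiveRoot ζ p) : v (ζ - 1) < 1 :=
  (pow_lt_one_iff (Nat.sub_ne_zero_of_lt hp.one_lt)).mp
    (map_primitiveRoot_sub_one_pow_eq (S := S) (v := v) hp hζ ▸ hv.map_lt_one)

theorem IsShiftedRadical.exists_map_lt_of_dvd (hX : IsShiftedRadical p h a X) (hp : p.Prime)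
    (hp3 : 3 ≤ p) (hv : IsCenteredOn (p : S) v) (hζ : IsPrimitiveRoot ζ p) (ha : (p : S) ∣ a) :
    ∃ X', IsShiftedRadical p h a X' ∧ v X' < v (ζ - 1) := by
  refine hX.exists_map_lt hp hζ (lt_of_le_of_lt (hv.map_le_map_pow_of_dvd (n := 2) ?_) ?_)
  · rw [sq]
    exact mul_dvd_mul_right ha _
  · rw [map_primitiveRoot_sub_one_pow_eq hp hζ, ← pow_mul]
    exact (pow_lt_pow_iff_right_of_lt_one₀ (map_primitiveRoot_sub_one_pos hp hζ)
      (hv.map_primitiveRoot_sub_one_lt_one hp hζ)).mpr (by omega)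

variable [Nontrivial S] [CharZero E]

theorem IsShiftedRadical.exists_fin_family (hX : IsShiftedRadical p h a X) (hp : p.Prime)
    (hp3 : 3 ≤ p) (hv : IsCenteredOn (p : S) v) (hζ : IsPrimitiveRoot ζ p) (hh : ¬(p : S) ∣ h)
    (ha : (p : S) ∣ a) : ∃ X' : Fin p → E, (∀ s, IsShiftedRadical p h a (X' s)) ∧
      (∀ s, v (X' s) ≤ v (ζ - 1)) ∧ ∀ s s', s ≠ s' → v (X' s - X' s') = v (ζ - 1) := by
  obtain ⟨X, hX, hlt⟩ := hX.exists_map_lt_of_dvd hp hp3 hv hζ ha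
  have hζs (s : Fin p) : (ζ ^ (s : ℕ)) ^ p = 1 := by
    rw [← pow_mul, mul_comm, pow_mul, hζ.pow_eq_one, one_pow]
  refine ⟨_, fun s => hX.mul_sub (hζs s),
    fun s => map_conjugate_le hp hζ (hv.map_le_one h) hlt.le (hζs s), fun s s' hs => ?_⟩
  exact map_conjugate_sub_conjugate hp hζ (hX.map_add_algebraMap_eq_one hp hv hh) (hζs s)
    (hζs s') fun he => hs (Fin.ext (hζ.pow_inj s.2 s'.2 he))

end RootFamily

section Shifted

variable {S L K E Γ : Type*} [CommRing S] [Field L] [Field K] [Algebra S K] [Algebra L K]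
  {p : ℕ} {c : ℕ → S} {h₁ h₂ a b u w : S} {x y l : K}

theorem shiftedGrid_mem_adjoin {π : S} {n : ℕ} (j k : ℕ) :
    shiftedGrid π n c x y j k ∈ Algebra.adjoin S {x, y} := by
  have hmem : x ^ j * y ^ k ∈ Algebra.adjoin S {x, y} :=
    mul_mem (pow_mem (Algebra.subset_adjoin (by simp)) j)
      (pow_mem (Algebra.subset_adjoin (by simp)) k)
  unfold shiftedGrid
  split_ifs
  exacts [sub_mem hmem (Subalgebra.algebraMap_mem _ _), Subalgebra.smul_mem _ hmem _,
    Subalgebra.smul_mem _ hmem _, Subalgebra.smul_mem _ hmem _]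

theorem map_shiftedGrid_le_of_ne {B : Type*} [CommRing B] [Algebra S B] [Field E] [Algebra S E]
    [LinearOrderedCommGroupWithZero Γ] {v : Valuation E Γ} {π : S} {n N M : ℕ} {φ : B →ₐ[S] E}
    {x y : B} {δ : Γ} (hδ1 : δ ≤ 1) (hδ : v (algebraMap S E π) = δ ^ N) (hx : v (φ x) ≤ δ)
    (hy : v (φ y) ≤ δ) (hM2 : M ≤ 2 * N) (hM1 : M ≤ N + 1) (hM0 : M ≤ n + 1) {j k : ℕ}
    (hjk : j + k ≠ n) : v (φ (shiftedGrid π n c x y j k)) ≤ δ ^ M := by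
  have hxy : v (φ (x ^ j * y ^ k)) ≤ δ ^ (j + k) := by
    simp only [map_mul, map_pow, pow_add]
    gcongr
  rw [shiftedGrid, if_neg hjk, map_smul, Algebra.smul_def, map_mul, map_pow, map_pow, hδ]
  refine (mul_le_mul_right hxy _).trans ?_
  rw [← pow_mul, ← pow_add]
  refine pow_le_pow_right_of_le_one' hδ1 ?_
  split_ifs <;> omega

namespace IsBiradical

theorem exists_isShiftedGridDatum [Nontrivial S] [CharZero K] (h : IsBiradical L p h₁ h₂ a b x y)
    (hca : (p : S) ∣ a - c p) (hcb : (p : S) ∣ b - c 0) :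
    ∃ m m', IsShiftedGridDatum (p : S) p c x y a b m m' :=
  let ⟨m, _, hm⟩ := h.left.exists_pow_eq_smul_add_sum h.prime
  let ⟨m', _, hm'⟩ := h.right.exists_pow_eq_smul_add_sum h.prime
  ⟨m, m', h.adjoin_eq_gridSpan, hm, hm', hca, hcb⟩

variable [IsDomain S] [IsRegularLocalRing S] [CharZero L] [Algebra S L] [IsFractionRing S L]
  [IsScalarTower S L K] [Field E] [Algebra S E] [Algebra L E] [IsScalarTower S L E]
  [LinearOrderedCommGroupWithZero Γ] {v : Valuation E Γ}

theorem hasBirationalMCM_of_shiftedGrid (h : IsBiradical L p h₁ h₂ a b x y)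
    (hv : IsCenteredOn (p : S) v) (hu : u ≠ 0) (hl : l = u • x + w • y)
    (hca : (p : S) ∣ a - c p) (hcb : (p : S) ∣ b - c 0)
    (hc : ∀ i < p, (p : S) ∣ u * c (i + 1) + w * c i) {Φ : Set (K →ₐ[L] E)} {β : Γ}
    (hle : ∀ φ ∈ Φ, ∀ j < p, ∀ k < p, v (φ (shiftedGrid (p : S) p c x y j k)) ≤ β)
    {G : ℕ → ℕ → Γ}
    (horth : ∀ c : Fin p × Fin p → L,
      (∀ φ ∈ Φ, v (∑ i, c i • (φ l ^ (i.1 : ℕ) * φ y ^ (i.2 : ℕ))) ≤ β) →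
        ∀ i, v (algebraMap L E (c i)) * G i.1 i.2 ≤ β)
    (hG : ∀ j < p, ∀ k < p, β * v (algebraMap S E p) <
      v (algebraMap S E p) ^ (if j + k = 0 then 2 else if j + k < p then 1 else 0) * G j k) :
    HasBirationalMCM S K := by
  have : CharZero K := charZero_of_injective_algebraMap (algebraMap L K).injective
  obtain ⟨m, m', hgrid⟩ := h.exists_isShiftedGridDatum hca hcb
  refine h.hasBirationalMCM_of_gridSpan hv hu hl (F := shiftedGrid (p : S) p c x y)
    (fun j _ k _ => shiftedGrid_mem_adjoin j k)
    (fun z hz => ⟨2, sq_smul_mem_gridSpan_shiftedGrid h.prime.pos h.adjoin_eq_gridSpan hz⟩)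
    hle horth hG (fun j _ k hk => hgrid.smul_linear_pow_mul_pow_mem h.prime.pos hl hc hk)

theorem hasBirationalMCM_of_dvd_of_dvd [IsAlgClosed E] (h : IsBiradical L p h₁ h₂ a b x y)
    (hp3 : 3 ≤ p) (hv : IsCenteredOn (p : S) v) (φ : K →ₐ[L] E) (hh₁ : ¬(p : S) ∣ h₁)
    (hh₂ : ¬(p : S) ∣ h₂) (ha : (p : S) ∣ a) (hb : (p : S) ∣ b) : HasBirationalMCM S K := by
  have : CharZero E := charZero_of_injective_algebraMap (algebraMap L E).injective
  have : NeZero (p : E) := ⟨Nat.cast_ne_zero.mpr h.prime.ne_zero⟩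
  obtain ⟨ζ, hζ⟩ := HasEnoughRootsOfUnity.exists_primitiveRoot E p
  set δ := v (ζ - 1)
  have hδ : v (algebraMap S E p) = δ ^ (p - 1) := map_primitiveRoot_sub_one_pow_eq h.prime hζ
  have hδ1 : δ < 1 := hv.map_primitiveRoot_sub_one_lt_one h.prime hζ
  obtain ⟨X, hX, hXle, hXX⟩ := (h.left.map (φ.restrictScalars S)).exists_fin_family
    h.prime hp3 hv hζ hh₁ ha
  obtain ⟨Y, hY, hYle, hYY⟩ := (h.right.map (φ.restrictScalars S)).exists_fin_family
    h.prime hp3 hv hζ hh₂ hb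
  refine h.hasBirationalMCM_of_shiftedGrid hv (u := 1) (w := 0) (l := x) one_ne_zero (by simp)
    (c := 0) (by simpa using ha) (by simpa using hb) (by simp)
    (Φ := {φ | v (φ x) ≤ δ ∧ v (φ y) ≤ δ}) (β := δ ^ p) ?_ (G := fun j k => δ ^ (j + k))
    (fun c hc i => ?_) ?_
  · rintro φ ⟨hx, hy⟩ j - k -
    rcases eq_or_ne (j + k) p with hjk | hjk
    · rw [shiftedGrid, if_pos hjk, Pi.zero_apply, mul_zero, map_zero, sub_zero, map_mul, map_pow,
        map_pow, map_mul, map_pow, map_pow, ← hjk, pow_add]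
      gcongr
    · exact map_shiftedGrid_le_of_ne (φ := φ.restrictScalars S) hδ1.le hδ hx hy (by omega)
        (by omega) (by omega) hjk
  · refine map_coeff_mul_pow_le_of_forall_map_sum_pow_mul_pow_le (hζ.sub_one_ne_zero h.prime.one_lt)
      hXle hXX hYle hYY (c := fun i => algebraMap L E (c i)) (fun s t => ?_) i
    obtain ⟨φ, hx, hy⟩ : ∃ φ : K →ₐ[L] E, φ x = X s ∧ φ y = Y t := h.exists_algHom (hX s) (hY t)
    simpa only [Algebra.smul_def, hx, hy] using hc φ ⟨hx ▸ hXle s, hy ▸ hYle t⟩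
  · intro j hj k hk
    rw [hδ, ← pow_mul, ← pow_add, ← pow_add]
    refine (pow_lt_pow_iff_right_of_lt_one₀ (map_primitiveRoot_sub_one_pos h.prime hζ) hδ1).mpr ?_
    split_ifs <;> omega

end IsBiradical

end Shifted

/-! ### The mixed case -/

section TwoEmbeddings

theorem eq_of_modEq_mul_pred {n : ℕ} (i i' : Fin n × Fin n)
    (h0 : (i.1 : ℕ) = 0 ↔ (i'.1 : ℕ) = 0)
    (h : n * (i.1 : ℕ) + (n - 1) * i.2 ≡ n * i'.1 + (n - 1) * i'.2 [MOD n * (n - 1)]) : i = i' := by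
  obtain ⟨q, rfl⟩ : ∃ q, n = q + 1 := ⟨n - 1, by have := i.1.2; omega⟩
  rw [Nat.add_sub_cancel] at h
  have h₂ : i.2 = i'.2 := by
    have hmod : q * (i.2 : ℕ) ≡ q * i'.2 [MOD q + 1] := by
      simpa [Nat.ModEq, Nat.add_mod] using h.of_mul_right q
    exact Fin.ext ((Nat.ModEq.cancel_left_of_coprime (by simp) hmod).eq_of_lt_of_lt i.2.2 i'.2.2)
  rw [h₂] at h
  have h₁ : (i.1 : ℕ) ≡ i'.1 [MOD q] :=
    (Nat.ModEq.add_right_cancel' _ h).mul_left_cancel' q.succ_ne_zero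
  refine Prod.ext (Fin.ext ?_) h₂
  by_cases hi : (i.1 : ℕ) = 0
  · rw [hi, h0.mp hi]
  · have hi' : (i'.1 : ℕ) ≠ 0 := fun h => hi (h0.mpr h)
    have hpred : (i.1 : ℕ) - 1 ≡ i'.1 - 1 [MOD q] := by
      refine Nat.ModEq.add_right_cancel' 1 ?_
      rwa [Nat.sub_add_cancel (by omega), Nat.sub_add_cancel (by omega)]
    have := hpred.eq_of_lt_of_lt (by omega) (by omega)
    omega

-- If the largest value is attained at some `i` with `P i`, that term dominates the sum of the `T₀`;
-- otherwise it is attained once, and that term dominates the sum of the `T₁`.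
theorem map_le_of_map_sum_le_of_map_sum_le {E Γ ι : Type*} [Field E]
    [LinearOrderedCommGroupWithZero Γ] {v : Valuation E Γ} [Fintype ι] {P : ι → Prop}
    {T₀ T₁ : ι → E} {β : Γ} (hP : ∀ i, P i → T₀ i = T₁ i)
    (hlt : ∀ i, ¬P i → T₁ i ≠ 0 → v (T₀ i) < v (T₁ i)) (hT₀ : ∀ i, T₁ i = 0 → T₀ i = 0)
    (hinj : ∀ i i', T₁ i ≠ 0 → v (T₁ i) = v (T₁ i') → (P i ↔ P i') → i = i')
    (h₀ : v (∑ i, T₀ i) ≤ β) (h₁ : v (∑ i, T₁ i) ≤ β) (i : ι) : v (T₁ i) ≤ β := by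
  classical
  have : Nonempty ι := ⟨i⟩
  obtain ⟨m, hmax⟩ := Finite.exists_max fun i => v (T₁ i)
  refine (hmax i).trans ?_
  by_cases hm : T₁ m = 0
  · simp [hm]
  have hm' : 0 < v (T₁ m) := v.pos_iff.mpr hm
  by_cases hex : ∃ k, P k ∧ v (T₁ k) = v (T₁ m)
  · obtain ⟨k, hk, hkm⟩ := hex
    have hk0 : T₁ k ≠ 0 := v.pos_iff.mp (hkm ▸ hm')
    rw [← hkm, ← hP k hk]
    refine (v.map_sum_eq_of_lt (Finset.mem_univ k) fun j hj => ?_).ge.trans h₀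
    have hjk : j ≠ k := by simpa using hj
    rw [hP k hk, hkm]
    by_cases hPj : P j
    · rw [hP j hPj]
      exact (hmax j).lt_of_ne fun he =>
        hjk (hinj k j hk0 (hkm.trans he.symm) (iff_of_true hk hPj)).symm
    · by_cases hj0 : T₁ j = 0
      · rwa [hT₀ j hj0, map_zero]
      · exact (hlt j hPj hj0).trans_le (hmax j)
  · refine (v.map_sum_eq_of_lt (Finset.mem_univ m) fun j hj => ?_).ge.trans h₁
    have hjm : j ≠ m := by simpa using hj
    exact (hmax j).lt_of_ne fun he => hjm (hinj m j hm he.symm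
      (iff_of_false (fun h => hex ⟨m, h, rfl⟩) fun h => hex ⟨j, h, he⟩)).symm

variable {S L E Γ : Type*} [CommRing S] [IsDomain S] [WfDvdMonoid S] [Field L] [Algebra S L]
  [IsFractionRing S L] [Field E] [Algebra S E] [Algebra L E] [IsScalarTower S L E]
  [LinearOrderedCommGroupWithZero Γ] {v : Valuation E Γ} {π : S} {n : ℕ} {θ : Γ} {l₀ l₁ Y : E}

-- The monomials in `l₁` and `Y` have distinct values modulo the value group of `L`, except that
-- `Y ^ k` competes with `l₁ ^ (n - 1) * Y ^ k`; the conjugate `l₀`, of smaller value, separates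
-- the two.
theorem IsCenteredOn.map_mul_pow_le_of_map_sum_le (hv : IsCenteredOn π v) (hπ : Prime π)
    (hn : 2 ≤ n) (hθ : v (algebraMap S E π) = θ ^ (n * (n - 1))) (hl₀ : v l₀ < θ ^ n)
    (hl₁ : v l₁ = θ ^ n) (hY : v Y = θ ^ (n - 1)) {c : Fin n × Fin n → L} {β : Γ}
    (h₀ : v (∑ i, c i • (l₀ ^ (i.1 : ℕ) * Y ^ (i.2 : ℕ))) ≤ β)
    (h₁ : v (∑ i, c i • (l₁ ^ (i.1 : ℕ) * Y ^ (i.2 : ℕ))) ≤ β) (i : Fin n × Fin n) :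
    v (algebraMap L E (c i)) * θ ^ (n * (i.1 : ℕ) + (n - 1) * i.2) ≤ β := by
  have hval (i : Fin n × Fin n) : v (c i • (l₁ ^ (i.1 : ℕ) * Y ^ (i.2 : ℕ))) =
      v (algebraMap L E (c i)) * θ ^ (n * (i.1 : ℕ) + (n - 1) * i.2) := by
    rw [Algebra.smul_def, map_mul, map_mul, map_pow, map_pow, hl₁, hY, ← pow_mul, ← pow_mul,
      ← pow_add]
  have hθ0 : 0 < θ := (pow_pos_iff (by omega)).mp (zero_le.trans_lt hl₀)
  have hlY0 (i : Fin n × Fin n) : l₁ ^ (i.1 : ℕ) * Y ^ (i.2 : ℕ) ≠ 0 :=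
    mul_ne_zero (pow_ne_zero _ (v.pos_iff.mp (hl₁ ▸ pow_pos hθ0 _)))
      (pow_ne_zero _ (v.pos_iff.mp (hY ▸ pow_pos hθ0 _)))
  rw [← hval]
  refine map_le_of_map_sum_le_of_map_sum_le (P := fun i => (i.1 : ℕ) = 0) (fun i hi => ?_)
    (fun i hi hi0 => ?_) (fun i hi => ?_) (fun i i' hi he h0 => ?_) h₀ h₁ i
  · rw [hi, pow_zero, pow_zero]
  · refine map_smul_lt_map_smul_of_map_lt (left_ne_zero_of_smul hi0) ?_
    rw [map_mul, map_mul, map_pow, map_pow, map_pow, hl₁, hY]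
    exact mul_lt_mul_of_pos_right (pow_lt_pow_left₀ hl₀ zero_le hi)
      (pow_pos (pow_pos hθ0 _) _)
  · rw [(smul_eq_zero.mp hi).resolve_right (hlY0 i), zero_smul]
  · have hi0' : c i' • (l₁ ^ (i'.1 : ℕ) * Y ^ (i'.2 : ℕ)) ≠ 0 :=
      v.pos_iff.mp (he ▸ v.pos_iff.mpr hi)
    rw [hval, hval] at he
    exact eq_of_modEq_mul_pred i i' h0 (hv.modEq_of_map_mul_pow_eq hπ hθ
      (left_ne_zero_of_smul hi) (left_ne_zero_of_smul hi0') he)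

end TwoEmbeddings

section MixedRoots

theorem exists_mul_add_pow_eq {R : Type*} [CommRing R] (A B : R) (n : ℕ) :
    ∃ k, A * (A + B) ^ n = A ^ (n + 1) + n * A ^ n * B + k * B ^ 2 := by
  obtain ⟨k, hk⟩ := Polynomial.powAddExpansion A B n
  refine ⟨A * k, ?_⟩
  rw [hk]
  rcases n with - | n
  · simp
    ring
  · simp only [Nat.add_sub_cancel]
    ring

theorem sq_dvd_add_mul_mul_pow_sub {S : Type*} [CommRing S] [IsDomain S] {π A C a b : S} {n : ℕ}
    (hπ : Prime π) (hA : ¬π ∣ A) (h : π ∣ A * a - n * C * b) :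
    π ^ 2 ∣ (C + a * π) * A ^ n - C * (A + b * π) ^ n := by
  obtain ⟨k, hk⟩ := exists_mul_add_pow_eq A (b * π) n
  obtain ⟨r, hr⟩ := h
  refine hπ.pow_dvd_of_dvd_mul_left 2 hA ⟨A ^ n * r - C * k * b ^ 2, ?_⟩
  linear_combination (-C) * hk + A ^ n * π * hr

variable {S E Γ : Type*} [CommRing S] [Field E] [Algebra S E]
  [LinearOrderedCommGroupWithZero Γ] {v : Valuation E Γ} {p i : ℕ} {h₁ h₂ a b c : S} {X Y ζ : E}

theorem map_mul_add_pow_sub_le {A B : E} (hA : v A ≤ 1) (hB : v B ≤ 1) (n : ℕ) :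
    v (A * (A + B) ^ n - A ^ (n + 1) - n * A ^ n * B) ≤ v B ^ 2 := by
  obtain ⟨k, hk⟩ := exists_mul_add_pow_eq (⟨A, hA⟩ : v.integer) ⟨B, hB⟩ n
  have hkE : A * (A + B) ^ n = A ^ (n + 1) + n * A ^ n * B + k * B ^ 2 := by
    simpa using congrArg (fun t : v.integer => (t : E)) hk
  rw [hkE, show A ^ (n + 1) + n * A ^ n * B + k * B ^ 2 - A ^ (n + 1) - n * A ^ n * B = k * B ^ 2 by
    ring, map_mul, map_pow]
  exact mul_le_of_le_one_left' k.2

namespace IsShiftedRadical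

section

variable [Nontrivial S] [CharZero E]

theorem map_pow_sub_le (hY : IsShiftedRadical p h₂ b Y) (hp : p.Prime)
    (hv : IsCenteredOn (p : S) v) (hc : (p : S) ∣ b - c) (hpY : v (algebraMap S E p) ≤ v Y) :
    v (Y ^ p - algebraMap S E (p * c)) ≤ v (algebraMap S E p) * v Y := by
  obtain ⟨q, hq, hYq⟩ := hY.exists_pow_eq_smul_add_sq_mul hp hv
  have hsplit : Y ^ p - algebraMap S E (p * c) = algebraMap S E p *
      (algebraMap S E (b - c) + Y * (Y * q - algebraMap S E (h₂ ^ (p - 1)))) := by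
    rw [hYq]
    simp only [Algebra.smul_def, map_sub, map_mul]
    ring
  rw [hsplit, map_mul]
  refine mul_le_mul_right (v.map_add_le ?_ ?_) _
  · refine le_trans ?_ hpY
    exact (hv.map_le_map_pow_of_dvd (n := 1) (by rwa [pow_one])).trans_eq (pow_one _)
  · rw [map_mul]
    refine mul_le_of_le_one_right' (v.map_sub_le ?_ (hv.map_le_one _))
    rw [map_mul]
    exact mul_le_one' (hY.map_le_one hp.pos hv) hq

theorem map_sq_lt_map_sub_one (hY : IsShiftedRadical p h₂ b Y) (hp : p.Prime) (hp3 : 3 ≤ p)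
    (hv : IsCenteredOn (p : S) v) (hζ : IsPrimitiveRoot ζ p) : v Y ^ 2 < v (ζ - 1) := by
  refine lt_of_pow_lt_pow_left₀ p zero_le ?_
  calc (v Y ^ 2) ^ p = (v Y ^ p) ^ 2 := pow_right_comm _ _ _
    _ ≤ v (algebraMap S E p) ^ 2 := pow_le_pow_left' (hY.map_pow_le hp hv) 2
    _ = v (ζ - 1) ^ ((p - 1) * 2) := by
      rw [map_primitiveRoot_sub_one_pow_eq hp hζ, ← pow_mul]
    _ < v (ζ - 1) ^ p :=
      (pow_lt_pow_iff_right_of_lt_one₀ (map_primitiveRoot_sub_one_pos hp hζ)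
        (hv.map_primitiveRoot_sub_one_lt_one hp hζ)).mpr (by omega)

end

variable [IsDomain S]

theorem exists_map_mul_pow_sub_lt (hX : IsShiftedRadical p h₁ a X) (hY : IsShiftedRadical p h₂ b Y)
    (hp : p.Prime) (hp3 : 3 ≤ p) (hpS : Prime (p : S)) (hv : IsCenteredOn (p : S) v)
    (hζ : IsPrimitiveRoot ζ p) (hh₂ : ¬(p : S) ∣ h₂)
    (hcong : (p : S) ∣ h₂ ^ p * a - i * h₁ ^ p * b) :
    ∃ X', IsShiftedRadical p h₁ a X' ∧ v ((X' + algebraMap S E h₁) * algebraMap S E h₂ ^ i -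
      algebraMap S E h₁ * (Y + algebraMap S E h₂) ^ i) < v (ζ - 1) := by
  have hsplit : ((X + algebraMap S E h₁) * algebraMap S E h₂ ^ i) ^ p -
      (algebraMap S E h₁ * (Y + algebraMap S E h₂) ^ i) ^ p =
      algebraMap S E ((h₁ ^ p + a * p) * (h₂ ^ p) ^ i - h₁ ^ p * (h₂ ^ p + b * p) ^ i) := by
    rw [mul_pow, mul_pow, hX, pow_right_comm, pow_right_comm _ i, hY]
    simp only [map_sub, map_mul, map_pow]
  obtain ⟨ε, hε, hlt⟩ := exists_map_mul_sub_lt (v := v) hp.pos hζ (δ := v (ζ - 1))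
    (w := (X + algebraMap S E h₁) * algebraMap S E h₂ ^ i)
    (h := algebraMap S E h₁ * (Y + algebraMap S E h₂) ^ i) <| by
      rw [hsplit]
      refine (hv.map_le_map_pow_of_dvd (sq_dvd_add_mul_mul_pow_sub hpS
        (fun h => hh₂ (hpS.dvd_of_dvd_pow h)) hcong)).trans_lt ?_
      rw [map_primitiveRoot_sub_one_pow_eq hp hζ, ← pow_mul]
      exact (pow_lt_pow_iff_right_of_lt_one₀ (map_primitiveRoot_sub_one_pos hp hζ)
        (hv.map_primitiveRoot_sub_one_lt_one hp hζ)).mpr (by omega)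
  refine ⟨_, hX.mul_sub hε, ?_⟩
  rwa [sub_add_cancel, mul_assoc]

variable [CharZero E]

theorem exists_map_smul_sub_smul_lt (hX : IsShiftedRadical p h₁ a X)
    (hY : IsShiftedRadical p h₂ b Y) (hp : p.Prime) (hp3 : 3 ≤ p) (hpS : Prime (p : S))
    (hv : IsCenteredOn (p : S) v) (hζ : IsPrimitiveRoot ζ p) (hh₂ : ¬(p : S) ∣ h₂)
    (hcong : (p : S) ∣ h₂ ^ p * a - i * h₁ ^ p * b) :
    ∃ X', IsShiftedRadical p h₁ a X' ∧ v (h₂ • X' - (i * h₁) • Y) < v (ζ - 1) := by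
  obtain ⟨X', hX', hlt⟩ := hX.exists_map_mul_pow_sub_lt hY hp hp3 hpS hv hζ hh₂ hcong
  refine ⟨X', hX', ?_⟩
  set H₁ := algebraMap S E h₁
  set H₂ := algebraMap S E h₂
  have hH₂ : v H₂ = 1 := hv.map_eq_one hh₂
  have hsplit : H₂ ^ i * (h₂ • X' - (i * h₁) • Y) =
      H₂ * ((X' + H₁) * H₂ ^ i - H₁ * (Y + H₂) ^ i) +
        H₁ * (H₂ * (H₂ + Y) ^ i - H₂ ^ (i + 1) - i * H₂ ^ i * Y) := by
    simp only [Algebra.smul_def, map_mul, map_natCast]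
    ring
  calc v (h₂ • X' - (i * h₁) • Y) = v (H₂ ^ i * (h₂ • X' - (i * h₁) • Y)) := by
        rw [map_mul, map_pow, hH₂, one_pow, one_mul]
    _ < v (ζ - 1) := by
        rw [hsplit]
        refine v.map_add_lt (by rwa [map_mul, hH₂, one_mul]) ?_
        rw [map_mul]
        exact (mul_le_of_le_one_left' (hv.map_le_one h₁)).trans_lt
          ((map_mul_add_pow_sub_le hH₂.le (hY.map_le_one hp.pos hv) i).trans_lt
            (hY.map_sq_lt_map_sub_one hp hp3 hv hζ))

-- Rotating `X'` by `ζ` moves it by exactly `v (ζ - 1)`.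
theorem exists_map_smul_sub_smul_lt_and_eq (hX : IsShiftedRadical p h₁ a X)
    (hY : IsShiftedRadical p h₂ b Y) (hp : p.Prime) (hp3 : 3 ≤ p) (hpS : Prime (p : S))
    (hv : IsCenteredOn (p : S) v) (hζ : IsPrimitiveRoot ζ p) (hh₁ : ¬(p : S) ∣ h₁)
    (hh₂ : ¬(p : S) ∣ h₂) (hcong : (p : S) ∣ h₂ ^ p * a - i * h₁ ^ p * b) :
    ∃ X₀ X₁, IsShiftedRadical p h₁ a X₀ ∧ IsShiftedRadical p h₁ a X₁ ∧
      v (h₂ • X₀ - (i * h₁) • Y) < v (ζ - 1) ∧ v (h₂ • X₁ - (i * h₁) • Y) = v (ζ - 1) := by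
  obtain ⟨X₀, hX₀, hlt⟩ := hX.exists_map_smul_sub_smul_lt hY hp hp3 hpS hv hζ hh₂ hcong
  refine ⟨X₀, _, hX₀, hX₀.mul_sub hζ.pow_eq_one, hlt, ?_⟩
  have hrot := map_conjugate_sub_conjugate hp hζ (hX₀.map_add_algebraMap_eq_one hp hv hh₁)
    hζ.pow_eq_one (one_pow p) (hζ.ne_one hp.one_lt)
  rw [one_mul, add_sub_cancel_right] at hrot
  have hstep : v (h₂ • (ζ * (X₀ + algebraMap S E h₁) - algebraMap S E h₁ - X₀)) = v (ζ - 1) := by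
    rw [Algebra.smul_def, map_mul, hv.map_eq_one hh₂, one_mul, hrot]
  rw [← hstep, ← v.map_add_eq_of_lt_left (hlt.trans_eq hstep.symm)]
  congr 1
  module

end IsShiftedRadical

end MixedRoots

section MixedCase

variable {S L K E Γ : Type*} [CommRing S] [Field L] [Field K] [Algebra S K] [Algebra L K]
  [Field E] [Algebra S E] [LinearOrderedCommGroupWithZero Γ] {v : Valuation E Γ} {p : ℕ}
  {c : ℕ → S} {h₁ h₂ a b u w : S}

theorem IsCenteredOn.map_antidiagonal_sub_le {π : S} {n : ℕ} {X Y : E} {β : Γ}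
    (hv : IsCenteredOn π v) (hu : ¬π ∣ u)
    (hc : ∀ i < n, π ∣ u * c (i + 1) + w * c i) (hπβ : v (algebraMap S E π) ^ 2 ≤ β)
    (h0 : v (Y ^ n - algebraMap S E (π * c 0)) ≤ β)
    (hl : ∀ j k, j + k + 1 = n → v ((u • X + w • Y) * (X ^ j * Y ^ k)) ≤ β) :
    ∀ j k, j + k = n → v (X ^ j * Y ^ k - algebraMap S E (π * c j)) ≤ β := by
  intro j
  induction j with
  | zero =>
    rintro k rfl
    simpa using h0
  | succ j ih =>
    intro k hjk
    have hstep : algebraMap S E u * (X ^ (j + 1) * Y ^ k - algebraMap S E (π * c (j + 1))) =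
        (u • X + w • Y) * (X ^ j * Y ^ k) -
          w • (X ^ j * Y ^ (k + 1) - algebraMap S E (π * c j)) -
            algebraMap S E (π * (u * c (j + 1) + w * c j)) := by
      simp only [Algebra.smul_def, map_add, map_mul]
      ring
    rw [← one_mul (v _), ← hv.map_eq_one hu, ← map_mul, hstep]
    refine v.map_sub_le (v.map_sub_le (hl j k (by omega))
      ((hv.map_smul_le _ _).trans (ih (k + 1) (by omega)))) ?_
    refine (hv.map_le_map_pow_of_dvd (n := 2) ?_).trans hπβ
    rw [sq]
    exact mul_dvd_mul_left _ (hc j (by omega))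

theorem natCast_dvd_natCast_pow_sub (hp : p.Prime) (i : ℕ) : (p : S) ∣ (i : S) ^ p - i := by
  simpa using map_dvd (Int.castRingHom S) (Int.prime_dvd_pow_self_sub hp i)

namespace IsBiradical

variable [Algebra S L] [IsScalarTower S L K] [Algebra L E] [IsScalarTower S L E] {x y : K} {θ : Γ}

section

variable [Nontrivial S] [CharZero E]

theorem map_shiftedGrid_le_of_add_eq (h : IsBiradical L p h₁ h₂ a b x y)
    (hv : IsCenteredOn (p : S) v) (hu : ¬(p : S) ∣ u) (hcb : (p : S) ∣ b - c 0)
    (hc : ∀ i < p, (p : S) ∣ u * c (i + 1) + w * c i) (hθ1 : θ ≤ 1)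
    (hθ : v (algebraMap S E p) = θ ^ (p * (p - 1))) {φ : K →ₐ[L] E}
    (hx : v (φ x) ≤ θ ^ (p - 1)) (hy : v (φ y) = θ ^ (p - 1))
    (hl : v (φ (u • x + w • y)) ≤ θ ^ p) {j k : ℕ} (hjk : j + k = p) :
    v (φ (shiftedGrid (p : S) p c x y j k)) ≤ θ ^ (p * (p - 1) + 1) := by
  obtain ⟨q, hq⟩ : ∃ q, p = q + 2 := ⟨p - 2, by have := h.prime.two_le; omega⟩
  have hq1 : p - 1 = q + 1 := by omega
  have hφ : φ (shiftedGrid (p : S) p c x y j k) =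
      φ x ^ j * φ y ^ k - algebraMap S E (p * c j) := by
    rw [shiftedGrid, if_pos hjk, map_sub, map_mul, map_pow, map_pow]
    exact congrArg _ ((φ.restrictScalars S).commutes _)
  have hφl : φ (u • x + w • y) = u • φ x + w • φ y := by
    rw [map_add]
    exact congrArg₂ _ (map_smul (φ.restrictScalars S) u x) (map_smul (φ.restrictScalars S) w y)
  have hpY : v (algebraMap S E p) ≤ v (φ y) := by
    rw [hθ, hy]
    exact pow_le_pow_right_of_le_one' hθ1 (Nat.le_mul_of_pos_left _ h.prime.pos)
  rw [hφ]
  refine hv.map_antidiagonal_sub_le hu hc ?_ ?_ (fun j k hjk => ?_) j k hjk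
  · rw [hθ, ← pow_mul]
    refine pow_le_pow_right_of_le_one' hθ1 ?_
    rw [hq1, hq]
    ring_nf
    omega
  · refine ((h.right.map (φ.restrictScalars S)).map_pow_sub_le h.prime hv hcb hpY).trans ?_
    rw [AlgHom.restrictScalars_apply, hθ, hy, ← pow_add]
    exact pow_le_pow_right_of_le_one' hθ1 (by omega)
  · rw [← hφl, map_mul, map_mul, map_pow, map_pow]
    calc v (φ (u • x + w • y)) * (v (φ x) ^ j * v (φ y) ^ k)
        ≤ θ ^ p * ((θ ^ (p - 1)) ^ j * (θ ^ (p - 1)) ^ k) := by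
          rw [hy]
          gcongr
      _ = θ ^ (p * (p - 1) + 1) := by
          rw [← pow_add, ← pow_mul, ← pow_add, show j + k = q + 1 by omega, hq1, hq]
          ring_nf

theorem map_shiftedGrid_le (h : IsBiradical L p h₁ h₂ a b x y)
    (hv : IsCenteredOn (p : S) v) (hu : ¬(p : S) ∣ u) (hcb : (p : S) ∣ b - c 0)
    (hc : ∀ i < p, (p : S) ∣ u * c (i + 1) + w * c i) (hθ1 : θ ≤ 1)
    (hθ : v (algebraMap S E p) = θ ^ (p * (p - 1))) {φ : K →ₐ[L] E}
    (hx : v (φ x) ≤ θ ^ (p - 1)) (hy : v (φ y) = θ ^ (p - 1))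
    (hl : v (φ (u • x + w • y)) ≤ θ ^ p) (j k : ℕ) :
    v (φ (shiftedGrid (p : S) p c x y j k)) ≤ θ ^ (p * (p - 1) + 1) := by
  rcases eq_or_ne (j + k) p with hjk | hjk
  · exact h.map_shiftedGrid_le_of_add_eq hv hu hcb hc hθ1 hθ hx hy hl hjk
  refine (map_shiftedGrid_le_of_ne (φ := φ.restrictScalars S) (N := p) (M := p + 1)
    (pow_le_one' hθ1 (p - 1)) ?_ hx hy.le (by have := h.prime.two_le; omega) le_rfl le_rfl
    hjk).trans ?_
  · rw [hθ, ← pow_mul, mul_comm]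
  · rw [← pow_mul]
    refine pow_le_pow_right_of_le_one' hθ1 ?_
    obtain ⟨q, rfl⟩ : ∃ q, p = q + 2 := ⟨p - 2, by have := h.prime.two_le; omega⟩
    rw [show q + 2 - 1 = q + 1 from rfl]
    ring_nf
    omega

end

variable [IsDomain S] [IsRegularLocalRing S] [CharZero L] [IsFractionRing S L]

theorem hasBirationalMCM_of_map_linear_lt_of_map_linear_eq (h : IsBiradical L p h₁ h₂ a b x y)
    (hv : IsCenteredOn (p : S) v) (hu : ¬(p : S) ∣ u)
    (hca : (p : S) ∣ a - c p) (hcb : (p : S) ∣ b - c 0)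
    (hc : ∀ i < p, (p : S) ∣ u * c (i + 1) + w * c i)
    (hθ : v (algebraMap S E p) = θ ^ (p * (p - 1)))
    (hx : ∀ φ : K →ₐ[L] E, v (φ x) ≤ θ ^ (p - 1)) (hy : ∀ φ : K →ₐ[L] E, v (φ y) = θ ^ (p - 1))
    {φ₀ φ₁ : K →ₐ[L] E} (hφy : φ₀ y = φ₁ y) (hl₀ : v (φ₀ (u • x + w • y)) < θ ^ p)
    (hl₁ : v (φ₁ (u • x + w • y)) = θ ^ p) : HasBirationalMCM S K := by
  have : CharZero E := charZero_of_injective_algebraMap (algebraMap L E).injective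
  have hp2 := h.prime.two_le
  obtain ⟨q, hq⟩ : ∃ q, p = q + 2 := ⟨p - 2, by omega⟩
  have hpp0 : p * (p - 1) ≠ 0 := Nat.mul_ne_zero (by omega) (by omega)
  have hθ1 : θ < 1 := (pow_lt_one_iff hpp0).mp (hθ ▸ hv.map_lt_one)
  have hθ0 : 0 < θ := (pow_pos_iff h.prime.ne_zero).mp (zero_le.trans_lt hl₀)
  refine h.hasBirationalMCM_of_shiftedGrid hv (by rintro rfl; simp at hu) rfl hca hcb hc
    (Φ := {φ₀, φ₁}) (β := θ ^ (p * (p - 1) + 1)) ?_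
    (G := fun j k => θ ^ (p * j + (p - 1) * k)) (fun c hΦ => ?_) (fun j hj k hk => ?_)
  · rintro φ (rfl | rfl) j - k -
    exacts [h.map_shiftedGrid_le hv hu hcb hc hθ1.le hθ (hx _) (hy _) hl₀.le j k,
      h.map_shiftedGrid_le hv hu hcb hc hθ1.le hθ (hx _) (hy _) hl₁.le j k]
  · exact hv.map_mul_pow_le_of_map_sum_le h.prime_natCast hp2 hθ hl₀ hl₁ (hy φ₁)
      (hφy ▸ hΦ φ₀ (by simp)) (hΦ φ₁ (by simp))
  · rw [hθ, ← pow_mul, ← pow_add, ← pow_add]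
    refine (pow_lt_pow_iff_right_of_lt_one₀ hθ0 hθ1).mpr ?_
    rw [hq] at hj hk
    rw [hq, show q + 2 - 1 = q + 1 from rfl]
    split_ifs
    · obtain ⟨rfl, rfl⟩ : j = 0 ∧ k = 0 := by omega
      linarith
    · nlinarith
    · nlinarith

variable [IsAlgClosed E]

theorem hasBirationalMCM_of_dvd_pow_mul_sub_natCast_mul (h : IsBiradical L p h₁ h₂ a b x y)
    (hp3 : 3 ≤ p) (hv : IsCenteredOn (p : S) v) (φ : K →ₐ[L] E) (hh₁ : ¬(p : S) ∣ h₁)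
    (hh₂ : ¬(p : S) ∣ h₂) (hb : ¬(p : S) ∣ b) {i : ℕ}
    (hcong : (p : S) ∣ h₂ ^ p * a - i * h₁ ^ p * b) (hca : (p : S) ∣ a - c p)
    (hcb : (p : S) ∣ b - c 0) (hc : ∀ k < p, (p : S) ∣ h₂ * c (k + 1) - i * h₁ * c k) :
    HasBirationalMCM S K := by
  have : CharZero E := charZero_of_injective_algebraMap (algebraMap L E).injective
  have : NeZero (p : E) := ⟨Nat.cast_ne_zero.mpr h.prime.ne_zero⟩
  obtain ⟨ζ, hζ⟩ := HasEnoughRootsOfUnity.exists_primitiveRoot E p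
  obtain ⟨ρ, hρ⟩ := IsAlgClosed.exists_pow_nat_eq (algebraMap S E p)
    (Nat.mul_pos h.prime.pos (show 0 < p - 1 by omega))
  have hθ : v (algebraMap S E p) = v ρ ^ (p * (p - 1)) := by rw [← hρ, map_pow]
  have hζρ : v (ζ - 1) = v ρ ^ p := by
    refine (pow_left_inj₀ zero_le zero_le (show p - 1 ≠ 0 by omega)).mp ?_
    rw [← map_primitiveRoot_sub_one_pow_eq (S := S) h.prime hζ, hθ, pow_mul]
  have hθ' : v (algebraMap S E p) = (v ρ ^ (p - 1)) ^ p := by rw [hθ, mul_comm, pow_mul]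
  have hx (φ : K →ₐ[L] E) : v (φ x) ≤ v ρ ^ (p - 1) :=
    (pow_le_pow_iff_left₀ zero_le zero_le h.prime.ne_zero).mp
      (hθ' ▸ (h.left.map (φ.restrictScalars S)).map_pow_le h.prime hv)
  have hy (φ : K →ₐ[L] E) : v (φ y) = v ρ ^ (p - 1) :=
    (pow_left_inj₀ zero_le zero_le h.prime.ne_zero).mp
      (hθ' ▸ (h.right.map (φ.restrictScalars S)).map_pow_eq h.prime hv hb)
  have hY := h.right.map (φ.restrictScalars S)
  obtain ⟨X₀, X₁, hX₀, hX₁, hlt, heq⟩ :=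
    (h.left.map (φ.restrictScalars S)).exists_map_smul_sub_smul_lt_and_eq hY h.prime hp3
      h.prime_natCast hv hζ hh₁ hh₂ hcong
  obtain ⟨φ₀, hφ₀x, hφ₀y⟩ := h.exists_algHom hX₀ hY
  obtain ⟨φ₁, hφ₁x, hφ₁y⟩ := h.exists_algHom hX₁ hY
  have hl (ψ : K →ₐ[L] E) : ψ (h₂ • x + (-(i * h₁)) • y) = h₂ • ψ x - (i * h₁) • ψ y := by
    rw [neg_smul, ← sub_eq_add_neg]
    exact (map_sub ψ _ _).trans (congrArg₂ _ (map_smul (ψ.restrictScalars S) _ _)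
      (map_smul (ψ.restrictScalars S) _ _))
  refine h.hasBirationalMCM_of_map_linear_lt_of_map_linear_eq hv hh₂ (w := -(i * h₁)) hca hcb
    (fun k hk => by rw [neg_mul, ← sub_eq_add_neg]; exact hc k hk) hθ hx hy
    (hφ₀y.trans hφ₁y.symm) ?_ ?_
  · rwa [hl, hφ₀x, hφ₀y, ← hζρ]
  · rwa [hl, hφ₁x, hφ₁y, ← hζρ]

theorem hasBirationalMCM_of_dvd_left (h : IsBiradical L p h₁ h₂ a b x y) (hp3 : 3 ≤ p)
    (hv : IsCenteredOn (p : S) v) (φ : K →ₐ[L] E) (hh₁ : ¬(p : S) ∣ h₁) (hh₂ : ¬(p : S) ∣ h₂)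
    (ha : (p : S) ∣ a) (hb : ¬(p : S) ∣ b) : HasBirationalMCM S K :=
  h.hasBirationalMCM_of_dvd_pow_mul_sub_natCast_mul hp3 hv φ hh₁ hh₂ hb (i := 0)
    (c := fun k => if k = 0 then b else 0) (by simpa using ha.mul_left _)
    (by simpa [h.prime.ne_zero] using ha) (by simp) (by simp)

theorem hasBirationalMCM_of_dvd_sub_pow_mul (h : IsBiradical L p h₁ h₂ a b x y) (hp3 : 3 ≤ p)
    (hv : IsCenteredOn (p : S) v) (φ : K →ₐ[L] E) (hh₁ : ¬(p : S) ∣ h₁) (hh₂ : ¬(p : S) ∣ h₂)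
    (hb : ¬(p : S) ∣ b) {e : S} {i : ℕ} (heb : (p : S) ∣ b - h₂ ^ p * e)
    (hea : (p : S) ∣ a - i * h₁ ^ p * e) : HasBirationalMCM S K := by
  refine h.hasBirationalMCM_of_dvd_pow_mul_sub_natCast_mul hp3 hv φ hh₁ hh₂ hb (i := i)
    (c := fun k => e * (i * h₁) ^ k * h₂ ^ (p - k)) ?_ ?_ ?_ fun k hk => ?_
  · convert dvd_sub (hea.mul_left (h₂ ^ p)) (heb.mul_left (i * h₁ ^ p)) using 1
    ring
  · convert dvd_sub hea ((natCast_dvd_natCast_pow_sub h.prime i).mul_left (h₁ ^ p * e)) using 1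
    simp only [Nat.sub_self, pow_zero, mul_pow]
    ring
  · simpa [mul_comm] using heb
  · have hcancel : h₂ * (e * (i * h₁) ^ (k + 1) * h₂ ^ (p - (k + 1))) -
        i * h₁ * (e * (i * h₁) ^ k * h₂ ^ (p - k)) = 0 := by
      rw [show p - k = p - (k + 1) + 1 by omega]
      ring
    exact hcancel ▸ dvd_zero _

end IsBiradical

end MixedCase

/-! ### Choice of the case -/

section Dispatch

variable {S L K E Γ : Type*} [CommRing S] {p : ℕ} {h₁ h₂ a b : S}

theorem exists_lt_dvd_sub_natCast_mul_of_dvd_pow_sub_pow (hp : p.Prime) (hpS : Prime (p : S))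
    {c d : S} (hd : ¬(p : S) ∣ d) (h : (p : S) ∣ d ^ (p - 1) - c ^ (p - 1)) :
    ∃ i < p, (p : S) ∣ c - i * d := by
  have := Fact.mk hp
  have : (Ideal.span {(p : S)}).IsPrime := (Ideal.span_singleton_prime hpS.ne_zero).mpr hpS
  let F := FractionRing (S ⧸ Ideal.span {(p : S)})
  have hF (s : S) : algebraMap S F s = 0 ↔ (p : S) ∣ s := by
    rw [IsScalarTower.algebraMap_apply S (S ⧸ Ideal.span {(p : S)}) F,
      map_eq_zero_iff _ (IsFractionRing.injective _ _), Ideal.Quotient.algebraMap_eq,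
      Ideal.Quotient.eq_zero_iff_mem, Ideal.mem_span_singleton]
  have : CharP F p := (CharP.charP_iff_prime_eq_zero hp).mpr (by simpa using (hF p).mpr dvd_rfl)
  have hd0 : algebraMap S F d ≠ 0 := mt (hF d).mp hd
  have hcd : algebraMap S F d ^ (p - 1) = algebraMap S F c ^ (p - 1) := by
    simpa only [map_sub, map_pow, sub_eq_zero] using (hF _).mpr h
  have hfrob : (algebraMap S F c / algebraMap S F d) ^ p = algebraMap S F c / algebraMap S F d := by
    rw [← pow_sub_one_mul hp.ne_zero, div_pow, ← hcd, div_self (pow_ne_zero _ hd0), one_mul]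
  have hmem := (Subfield.mem_bot_iff_pow_eq_self F p).mpr hfrob
  rw [← ZMod.fieldRange_castHom_eq_bot p] at hmem
  obtain ⟨z, hz⟩ := hmem
  have hzc : (z.val : F) = algebraMap S F c / algebraMap S F d := by
    rw [← hz, ZMod.natCast_val, ZMod.castHom_apply]
  exact ⟨z.val, z.val_lt, (hF _).mp (by
    rw [map_sub, map_mul, map_natCast, hzc, div_mul_cancel₀ _ hd0, sub_self])⟩

theorem exists_lt_dvd_of_dvd_pow_sub_pow (hp : p.Prime) (hpS : Prime (p : S)) {c d : S}
    (hd : ¬(p : S) ∣ d) (hh₁ : ¬(p : S) ∣ h₁) (hcd : (p : S) ∣ d ^ p * a - c ^ p * b)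
    (h : (p : S) ∣ (d * h₁) ^ (p - 1) - (c * h₂) ^ (p - 1)) :
    ∃ i < p, (p : S) ∣ h₂ ^ p * a - i * h₁ ^ p * b := by
  obtain ⟨i, hip, hi⟩ := exists_lt_dvd_sub_natCast_mul_of_dvd_pow_sub_pow hp hpS
    (hpS.not_dvd_mul hd hh₁) h
  have hpow : (p : S) ∣ (c * h₂) ^ p - (i * (d * h₁)) ^ p := hi.trans (sub_dvd_pow_sub_pow _ _ _)
  have hfermat := natCast_dvd_natCast_pow_sub (S := S) hp i
  have hmul : (p : S) ∣ d ^ p * (h₂ ^ p * a - i * h₁ ^ p * b) := by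
    convert dvd_add (dvd_add (hcd.mul_left (h₂ ^ p)) (hpow.mul_left b))
      (hfermat.mul_left (d ^ p * h₁ ^ p * b)) using 1
    simp only [mul_pow]
    ring
  exact ⟨i, hip, (hpS.dvd_or_dvd hmul).resolve_left (mt hpS.dvd_of_dvd_pow hd)⟩

variable [IsDomain S] [IsRegularLocalRing S] [Field L] [CharZero L] [Algebra S L]
  [IsFractionRing S L] [Field K] [Algebra S K] [Algebra L K] [IsScalarTower S L K]

section Valuation

variable [Field E] [IsAlgClosed E] [Algebra S E] [Algebra L E] [IsScalarTower S L E]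
  [LinearOrderedCommGroupWithZero Γ] {v : Valuation E Γ} {x y : K}

namespace IsBiradical

theorem hasBirationalMCM_of_dvd_pow_mul_sub_natCast
    [IsIntegrallyClosed (S ⧸ Ideal.span {(p : S)})] (h : IsBiradical L p h₁ h₂ a b x y)
    (hp3 : 3 ≤ p) (hv : IsCenteredOn (p : S) v) (φ : K →ₐ[L] E) (hh₁ : ¬(p : S) ∣ h₁)
    (hh₂ : ¬(p : S) ∣ h₂) (hb : ¬(p : S) ∣ b)
    (hgrade : ContainsRegSeq3 S (Ideal.span {(p : S), h₁ ^ p + a * p, h₂ ^ p + b * p}))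
    {i : ℕ} (hip : i < p) (hi : (p : S) ∣ h₂ ^ p * a - i * h₁ ^ p * b) :
    HasBirationalMCM S K := by
  rcases i.eq_zero_or_pos with rfl | hi0
  · have ha : (p : S) ∣ h₂ ^ p * a := by simpa using hi
    exact h.hasBirationalMCM_of_dvd_left hp3 hv φ hh₁ hh₂
      ((h.prime_natCast.dvd_or_dvd ha).resolve_left (mt h.prime_natCast.dvd_of_dvd_pow hh₂)) hb
  · have hu : IsUnit (i : S) := isUnit_natCast_of_coprime h.prime_natCast.not_isUnit
      (Nat.coprime_of_lt_prime hi0.ne' hip h.prime).symm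
    obtain ⟨e, heb, hea⟩ := exists_dvd_sub_pow_mul h.prime_natCast rfl rfl hgrade hh₂ hu hi
    exact h.hasBirationalMCM_of_dvd_sub_pow_mul hp3 hv φ hh₁ hh₂ hb heb hea

theorem hasBirationalMCM [IsIntegrallyClosed (S ⧸ Ideal.span {(p : S)})]
    (h : IsBiradical L p h₁ h₂ a b x y) (hp3 : 3 ≤ p) (hv : IsCenteredOn (p : S) v)
    (φ : K →ₐ[L] E) (hh₁ : ¬(p : S) ∣ h₁) (hh₂ : ¬(p : S) ∣ h₂)
    (hgrade : ContainsRegSeq3 S (Ideal.span {(p : S), h₁ ^ p + a * p, h₂ ^ p + b * p})) :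
    HasBirationalMCM S K := by
  by_cases hb : (p : S) ∣ b
  · by_cases ha : (p : S) ∣ a
    · exact h.hasBirationalMCM_of_dvd_of_dvd hp3 hv φ hh₁ hh₂ ha hb
    · exact h.symm.hasBirationalMCM_of_dvd_left hp3 hv φ hh₂ hh₁ hb ha
  by_cases hi : ∃ i < p, (p : S) ∣ h₂ ^ p * a - i * h₁ ^ p * b
  · obtain ⟨i, hip, hi⟩ := hi
    exact h.hasBirationalMCM_of_dvd_pow_mul_sub_natCast hp3 hv φ hh₁ hh₂ hb hgrade hip hi
  have ha : ¬(p : S) ∣ a := fun ha => hi ⟨0, h.prime.pos, by simpa using ha.mul_left _⟩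
  by_cases hno : ∀ c d : S, ¬(p : S) ∣ d → ¬(p : S) ∣ d ^ p * a - c ^ p * b
  · exact h.hasBirationalMCM_of_forall_not_dvd hv φ hb hno
  push Not at hno
  obtain ⟨c, d, hd, hcd⟩ := hno
  have hc : ¬(p : S) ∣ c := fun hc =>
    have hda : (p : S) ∣ d ^ p * a :=
      (dvd_sub_left ((dvd_pow hc h.prime.ne_zero).mul_right b)).mp hcd
    h.prime_natCast.not_dvd_mul (mt h.prime_natCast.dvd_of_dvd_pow hd) ha hda
  exact h.hasBirationalMCM_of_dvd_pow_mul_sub (by lia) hv φ ha hb hc hd hcd fun hne =>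
    hi (exists_lt_dvd_of_dvd_pow_sub_pow h.prime h.prime_natCast hd hh₁ hcd hne)

end IsBiradical

end Valuation

end Dispatch

theorem stmt16_general {S : Type*} [CommRing S] [IsDomain S] [IsRegularLocalRing S]
    [IsIntegrallyClosed S] {L : Type*} [Field L] [CharZero L] [Algebra S L] [IsFractionRing S L]
    {K : Type*} [Field K] [Algebra L K] [Algebra S K] [IsScalarTower S L K]
    {p : ℕ} (hp : p.Prime) (hp3 : 3 ≤ p) (hpS : Prime (p : S))
    (hSmodp : IsIntegrallyClosed (S ⧸ Ideal.span {(p : S)}))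
    {f g h₁ h₂ a b : S} (hf : f = h₁ ^ p + a * p) (hg : g = h₂ ^ p + b * p)
    (hfg : (¬IsUnit f ∧ ¬IsUnit g ∧ PaperSquarefree f ∧ PaperSquarefree g ∧ SatisfiesA1 f g) ∨
      (IsUnit f ∧ IsUnit g))
    {ω μ : K} (hω : ω ^ p = algebraMap S K f) (hμ : μ ^ p = algebraMap S K g)
    (hgen : Algebra.adjoin L {ω, μ} = ⊤) (hdeg : Module.finrank L K = p ^ 2)
    (hgrade : ContainsRegSeq3 S (Ideal.span {(p : S), f, g})) : HasBirationalMCM S K := by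
  have hunit : IsUnit f ↔ IsUnit g := by tauto
  have hh₁ : ¬(p : S) ∣ h₁ :=
    not_dvd_of_containsRegSeq3 hp.ne_zero hpS.not_isUnit hf hunit.mpr hgrade
  have hh₂ : ¬(p : S) ∣ h₂ := not_dvd_of_containsRegSeq3 hp.ne_zero hpS.not_isUnit hg hunit.mp
    (Set.pair_comm f g ▸ hgrade)
  have hden : ∀ j < p, ∀ k < p, ∀ t : L, t ^ p * algebraMap S L (f ^ j * g ^ k) ∈
      (algebraMap S L).range → t ∈ (algebraMap S L).range := fun j hj k hk t ht => by
    rcases hfg with ⟨-, -, hf, hg, hfg⟩ | ⟨hf, hg⟩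
    · exact mem_range_of_pow_mul_mem_range hf hg hfg hj hk ht
    · exact mem_range_of_pow_mul_mem_range_of_isUnit ((hf.pow j).mul (hg.pow k)) hp.pos ht
  have hinj : Function.Injective (algebraMap S (AlgebraicClosure K)) := by
    rw [IsScalarTower.algebraMap_eq S L]
    exact (algebraMap L _).injective.comp (IsFractionRing.injective S L)
  obtain ⟨V, hV⟩ := exists_valuationSubring_isCenteredOn hinj hpS
  exact (isBiradical_sub_algebraMap hp hpS hf hg hden hω hμ hgen hdeg).hasBirationalMCM hp3 hV
    (IsScalarTower.toAlgHom L K (AlgebraicClosure K)) hh₁ hh₂ (hf ▸ hg ▸ hgrade)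

theorem stmt16
    {S : Type*} [CommRing S] [IsDomain S] [IsNoetherianRing S] [IsLocalRing S]
    [IsIntegrallyClosed S]
    {L : Type*} [Field L] [CharZero L] [Algebra S L] [IsFractionRing S L]
    {K : Type*} [Field K] [Algebra L K] [Algebra S K] [IsScalarTower S L K]
    {p : ℕ} (hp : p.Prime) (hp3 : 3 ≤ p) (hpS : Prime ((p : ℕ) : S))
    (hSmodp : IsIntegrallyClosed (S ⧸ Ideal.span {((p : ℕ) : S)}))
    (hreg : ∃ s : Finset S, Ideal.span (s : Set S) = IsLocalRing.maximalIdeal S ∧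
      (s.card : WithBot ℕ∞) = ringKrullDim S)
    (hmix : ((p : ℕ) : S) ∈ IsLocalRing.maximalIdeal S ∧
      ((p : ℕ) : S) ∉ IsLocalRing.maximalIdeal S ^ 2)
    {f g h₁ h₂ a b : S} (hf : f = h₁ ^ p + a * (p : S)) (hg : g = h₂ ^ p + b * (p : S))
    (hfg : (¬IsUnit f ∧ ¬IsUnit g ∧ PaperSquarefree f ∧ PaperSquarefree g ∧ SatisfiesA1 f g) ∨
      (IsUnit f ∧ IsUnit g ∧ (∀ x : S, x ^ p ≠ f) ∧ (∀ x : S, x ^ p ≠ g)))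
    {ω μ : K} (hω : ω ^ p = algebraMap S K f) (hμ : μ ^ p = algebraMap S K g)
    (hKgen : Algebra.adjoin L ({ω, μ} : Set K) = ⊤)
    (hdeg : Module.finrank L K = p ^ 2)
    (hgrade : ContainsRegSeq3 S (Ideal.span {((p : ℕ) : S), f, g})) :
    ∃ M : Submodule S K, M ≠ ⊥ ∧ M.FG ∧
      (∀ r ∈ integralClosure S K, ∀ m ∈ M, r * m ∈ M) ∧
      (modDepth S M : WithBot ℕ∞) = ringKrullDim S := by
  obtain ⟨s, hs, hcard⟩ := hreg
  have := isRegularLocalRing_of_card_eq_ringKrullDim hs hcard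
  exact stmt16_general hp hp3 hpS hSmodp hf hg (hfg.imp_right fun h => ⟨h.1, h.2.1⟩) hω hμ hKgen
    hdeg hgrade
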